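/- arXiv:1503.05872 — 2 statements merged into one kernel-verified Lean document; each statement's English description precedes it below -/
import Mathlib

section
/- State-space collapse under MaxWeight (Proposition 4.2, fixed-ε version). Fix n ≥ 1 and ν ∈ F with ν_min := min_{ij} ν_{ij} > 0, and suppose the arrival means are λ_{ij} = (1−ε)ν_{ij} with variances σ_{ij}², where 0 < ε ≤ ν_min/(2‖ν‖). Let the schedule be chosen by the MaxWeight policy, and let π be an invariant distribution of the resulting Markov chain. Then for every integer r ≥ 1, E_π[‖q̄_⊥‖^r] ≤ (M_r)^r, where M_r = 2^{1/r} · max( 8(‖λ‖² + ‖σ‖² + n)/ν_min , (√r · e)^{1/r} · 16 · (r/e) · (n·a_max/ν_min) · (n·a_max + 1) ), ‖λ‖² = ∑_{ij} λ_{ij}², and ‖σ‖² = ∑_{ij} σ_{ij}². -/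
open scoped BigOperators ENNReal

namespace SwitchModel

/-- Next queue state: `q⁺_{ij} = max(q_{ij} + a_{ij} − s_{ij}, 0)` (truncated `ℕ` subtraction). -/
def nextQ (n : ℕ) (q a s : Fin n → Fin n → ℕ) : Fin n → Fin n → ℕ :=
  fun i j => q i j + a i j - s i j

/-- A 0–1 matrix with at most one 1 per row and per column. -/
def IsSchedule (n : ℕ) (s : Fin n → Fin n → ℕ) : Prop :=
  (∀ i j, s i j ≤ 1) ∧ (∀ i, (∑ j, s i j) ≤ 1) ∧ (∀ j, (∑ i, s i j) ≤ 1)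

/-- A permutation matrix: exactly one 1 per row and per column. -/
def IsPerm (n : ℕ) (s : Fin n → Fin n → ℕ) : Prop :=
  (∀ i j, s i j ≤ 1) ∧ (∀ i, (∑ j, s i j) = 1) ∧ (∀ j, (∑ i, s i j) = 1)

/-- MaxWeight selection: `sched q` is a permutation matrix maximizing `∑ q_{ij} s_{ij}`. -/
def IsMaxWeight (n : ℕ) (sched : (Fin n → Fin n → ℕ) → (Fin n → Fin n → ℕ)) : Prop :=
  ∀ q, IsPerm n (sched q) ∧
    ∀ s, IsPerm n s → (∑ i, ∑ j, q i j * s i j) ≤ (∑ i, ∑ j, q i j * sched q i j)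

/-- Joint arrival probability: the entries are mutually independent with marginals `A i j`. -/
noncomputable def jointA (n : ℕ) (A : Fin n → Fin n → ℕ → ℝ≥0∞) (a : Fin n → Fin n → ℕ) : ℝ≥0∞ :=
  ∏ i, ∏ j, A i j (a i j)

/-- `A i j` is a probability distribution on `ℕ` supported on `[0, amax]`,
with mean `lam i j` and variance `(sig i j)^2`. -/
def ArrivalDist (n : ℕ) (A : Fin n → Fin n → ℕ → ℝ≥0∞)
    (lam sig : Fin n → Fin n → ℝ) (amax : ℕ) : Prop :=
  (∀ i j, (∑' k : ℕ, A i j k) = 1) ∧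
  (∀ i j k, A i j k ≠ 0 → k ≤ amax) ∧
  (∀ i j, (∑' k : ℕ, (A i j k).toReal * (k : ℝ)) = lam i j) ∧
  (∀ i j, (∑' k : ℕ, (A i j k).toReal * ((k : ℝ) - lam i j) ^ 2) = (sig i j) ^ 2)

/-- Transition kernel of the switch under a deterministic scheduling map `sched`. -/
noncomputable def kernelMW (n : ℕ) (A : Fin n → Fin n → ℕ → ℝ≥0∞)
    (sched : (Fin n → Fin n → ℕ) → (Fin n → Fin n → ℕ))
    (q q' : Fin n → Fin n → ℕ) : ℝ≥0∞ :=
  ∑' a : Fin n → Fin n → ℕ, jointA n A a * (if nextQ n q a (sched q) = q' then 1 else 0)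

/-- Transition kernel of the switch under a randomized scheduling policy `pol`
(the schedule is chosen independently of the current arrivals). -/
noncomputable def kernelPol (n : ℕ) (A : Fin n → Fin n → ℕ → ℝ≥0∞)
    (pol : (Fin n → Fin n → ℕ) → (Fin n → Fin n → ℕ) → ℝ≥0∞)
    (q q' : Fin n → Fin n → ℕ) : ℝ≥0∞ :=
  ∑' a : Fin n → Fin n → ℕ, ∑' s : Fin n → Fin n → ℕ,
    jointA n A a * pol q s * (if nextQ n q a s = q' then 1 else 0)

/-- `pd` is an invariant (stationary) probability distribution of the kernel `P`. -/
def IsInvariant (n : ℕ)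
    (P : (Fin n → Fin n → ℕ) → (Fin n → Fin n → ℕ) → ℝ≥0∞)
    (pd : (Fin n → Fin n → ℕ) → ℝ≥0∞) : Prop :=
  (∑' q : Fin n → Fin n → ℕ, pd q) = 1 ∧
  ∀ q', (∑' q : Fin n → Fin n → ℕ, pd q * P q q') = pd q'

/-- The face `F`: nonnegative matrices with all row and column sums equal to 1. -/
def memF (n : ℕ) (ν : Fin n → Fin n → ℝ) : Prop :=
  (∀ i j, 0 ≤ ν i j) ∧ (∀ i, (∑ j, ν i j) = 1) ∧ (∀ j, (∑ i, ν i j) = 1)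

/-- Steady-state expectation of the total queue length `∑_{ij} q_{ij}`. -/
noncomputable def Etot (n : ℕ) (pd : (Fin n → Fin n → ℕ) → ℝ≥0∞) : ℝ≥0∞ :=
  ∑' q : Fin n → Fin n → ℕ, pd q * (∑ i, ∑ j, (q i j : ℝ≥0∞))

/-- Steady-state expectation of `(∑_{ij} q_{ij})²`. -/
noncomputable def Etot2 (n : ℕ) (pd : (Fin n → Fin n → ℕ) → ℝ≥0∞) : ℝ≥0∞ :=
  ∑' q : Fin n → Fin n → ℕ, pd q * (∑ i, ∑ j, (q i j : ℝ≥0∞)) ^ 2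

/-- Euclidean norm on `ℝ^{n×n}`. -/
noncomputable def normE (n : ℕ) (x : Fin n → Fin n → ℝ) : ℝ :=
  Real.sqrt (∑ i, ∑ j, x i j ^ 2)

/-- The cone `K = {x : x_{ij} = w_i + w̃_j, w, w̃ ≥ 0}`. -/
def coneK (n : ℕ) : Set (Fin n → Fin n → ℝ) :=
  {x | ∃ w wt : Fin n → ℝ, (∀ i, 0 ≤ w i) ∧ (∀ j, 0 ≤ wt j) ∧ ∀ i j, x i j = w i + wt j}

/-- Embedding of queue states into `ℝ^{n×n}`. -/
def toR (n : ℕ) (q : Fin n → Fin n → ℕ) : Fin n → Fin n → ℝ :=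
  fun i j => (q i j : ℝ)

/-- `proj` is the nearest-point projection onto the cone `K`. -/
def IsConeProj (n : ℕ) (proj : (Fin n → Fin n → ℝ) → (Fin n → Fin n → ℝ)) : Prop :=
  ∀ x, proj x ∈ coneK n ∧ ∀ y ∈ coneK n, normE n (x - proj x) ≤ normE n (x - y)

/-- Bernoulli distribution on `ℕ` with success probability `p`. -/
noncomputable def bern (p : ℝ) : ℕ → ℝ≥0∞ :=
  fun k => if k = 0 then ENNReal.ofReal (1 - p) else if k = 1 then ENNReal.ofReal p else 0

end SwitchModel

open SwitchModel


namespace SSC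

/-- Tail recursion for a stationary chain with bounded jumps and negative drift. -/
theorem tail_step {Q α : Type*} (S : Finset α) (w : α → ℝ) (hw : ∀ a ∈ S, 0 ≤ w a)
    (hw1 : ∑ a ∈ S, w a = 1) (next : Q → α → Q) (pd : Q → ℝ≥0∞)
    (hpd1 : ∑' q, pd q = 1)
    (hstat : ∀ f : Q → ℝ≥0∞,
      ∑' q, pd q * ∑ a ∈ S, ENNReal.ofReal (w a) * f (next q a) = ∑' q, pd q * f q)
    (V : Q → ℝ) (hV : ∀ q, 0 ≤ V q) (D η κ : ℝ) (hD : 0 < D) (hη : 0 < η)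
    (hjump : ∀ q, ∀ a ∈ S, |V (next q a) - V q| ≤ D)
    (hdrift : ∀ q, κ < V q → ∑ a ∈ S, w a * V (next q a) ≤ V q - η)
    (c : ℝ) (hc : κ ≤ c + D) :
    ENNReal.ofReal (η + D) * (∑' q, pd q * (if c + D < V q then 1 else 0)) ≤
      ENNReal.ofReal D * (∑' q, pd q * (if c - D < V q then 1 else 0)) := by
  classical
  -- bounded version
  have key : ∀ N : ℕ, c + D ≤ N →
      ENNReal.ofReal η * (∑' q, pd q * (if c + D < V q ∧ V q ≤ N then 1 else 0)) ≤
      ENNReal.ofReal D * (∑' q, pd q * (if c - D < V q ∧ V q ≤ c + D then 1 else 0)) := by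
    intro N hN
    set Φ : Q → ℝ := fun q => min (max (V q) c) N with hΦ
    have hΦ0 : ∀ q, 0 ≤ Φ q := fun q => le_min (le_max_of_le_left (hV q)) (Nat.cast_nonneg _)
    have hreal : ∀ q, ∑ a ∈ S, w a * Φ (next q a) + η * (if c + D < V q ∧ V q ≤ N then 1 else 0)
        ≤ Φ q + D * (if c - D < V q ∧ V q ≤ c + D then 1 else 0) := by
      intro q
      have avg : ∀ (g : α → ℝ) (b : ℝ), (∀ a ∈ S, g a ≤ b) → ∑ a ∈ S, w a * g a ≤ b := by
        intro g b hg
        calc ∑ a ∈ S, w a * g a ≤ ∑ a ∈ S, w a * b :=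
              Finset.sum_le_sum fun a ha => mul_le_mul_of_nonneg_left (hg a ha) (hw a ha)
          _ = b := by rw [← Finset.sum_mul, hw1, one_mul]
      by_cases h1 : c + D < V q
      · have h2 : ¬ (c - D < V q ∧ V q ≤ c + D) := fun h => absurd h.2 (not_le.2 h1)
        rw [if_neg h2]
        by_cases h3 : V q ≤ N
        · rw [if_pos ⟨h1, h3⟩]
          have e : Φ q = V q := by
            simp only [hΦ]
            rw [max_eq_left (by linarith), min_eq_left h3]
          have : ∑ a ∈ S, w a * Φ (next q a) ≤ ∑ a ∈ S, w a * V (next q a) := by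
            refine Finset.sum_le_sum fun a ha => mul_le_mul_of_nonneg_left ?_ (hw a ha)
            have := (abs_le.1 (hjump q a ha)).1
            simp only [hΦ]
            rw [max_eq_left (by linarith)]
            exact min_le_left _ _
          have := hdrift q (by linarith)
          rw [e]; linarith
        · rw [if_neg (fun h => h3 h.2)]
          have e : Φ q = N := by
            simp only [hΦ]
            rw [min_eq_right]
            exact le_max_of_le_left (not_le.1 h3).le
          rw [e]
          have := avg (fun a => Φ (next q a)) N (fun a _ => min_le_right _ _)
          simpa using this
      · rw [if_neg (fun h => h1 h.1)]
        by_cases h2 : c - D < V q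
        · rw [if_pos ⟨h2, not_lt.1 h1⟩]
          have := avg (fun a => Φ (next q a)) (Φ q + D) (fun a ha => by
            have := (abs_le.1 (hjump q a ha)).2
            have h3 : max (V (next q a)) c ≤ max (V q) c + D := by
              refine max_le ?_ ?_
              · have := le_max_left (V q) c; linarith
              · have := le_max_right (V q) c; linarith
            simp only [hΦ]
            rw [← min_add_add_right]
            exact min_le_min h3 (by linarith))
          simpa using this
        · rw [if_neg (fun h => h2 h.1)]
          have := avg (fun a => Φ (next q a)) (Φ q) (fun a ha => by
            have := (abs_le.1 (hjump q a ha)).2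
            have h3 : max (V (next q a)) c ≤ max (V q) c := by
              refine max_le ?_ (le_max_right _ _)
              have := le_max_right (V q) c; linarith
            simp only [hΦ]
            exact min_le_min h3 le_rfl)
          simpa using this
    have henn : ∀ q, pd q * ∑ a ∈ S, ENNReal.ofReal (w a) * ENNReal.ofReal (Φ (next q a))
        + ENNReal.ofReal η * (pd q * (if c + D < V q ∧ V q ≤ N then 1 else 0))
        ≤ pd q * ENNReal.ofReal (Φ q)
        + ENNReal.ofReal D * (pd q * (if c - D < V q ∧ V q ≤ c + D then 1 else 0)) := by
      intro q
      have h := ENNReal.ofReal_le_ofReal (hreal q)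
      rw [ENNReal.ofReal_add (Finset.sum_nonneg fun a ha => mul_nonneg (hw a ha) (hΦ0 _))
        (by split_ifs <;> linarith), ENNReal.ofReal_add (hΦ0 q) (by split_ifs <;> linarith),
        ENNReal.ofReal_sum_of_nonneg (fun a ha => mul_nonneg (hw a ha) (hΦ0 _)),
        ENNReal.ofReal_mul hη.le, ENNReal.ofReal_mul hD.le] at h
      rw [Finset.sum_congr rfl (fun a ha => ENNReal.ofReal_mul (hw a ha))] at h
      have h' := mul_le_mul_right h (pd q)
      rw [mul_add, mul_add, mul_left_comm (pd q) (ENNReal.ofReal η),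
        mul_left_comm (pd q) (ENNReal.ofReal D)] at h'
      have e : ∀ p : Prop, [Decidable p] → ENNReal.ofReal (if p then (1:ℝ) else 0)
        = if p then (1 : ℝ≥0∞) else 0 := by
        intro p _; split_ifs <;> simp
      rw [e, e] at h'
      exact h'
    have hsum := ENNReal.tsum_le_tsum henn
    rw [ENNReal.tsum_add, ENNReal.tsum_add, hstat (fun q => ENNReal.ofReal (Φ q)),
      ENNReal.tsum_mul_left, ENNReal.tsum_mul_left] at hsum
    have hfin : ∑' q, pd q * ENNReal.ofReal (Φ q) ≠ ∞ := by
      refine ne_top_of_le_ne_top (b := ENNReal.ofReal N) ENNReal.ofReal_ne_top ?_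
      calc ∑' q, pd q * ENNReal.ofReal (Φ q) ≤ ∑' q, pd q * ENNReal.ofReal N :=
            ENNReal.tsum_le_tsum fun q =>
              mul_le_mul_right (ENNReal.ofReal_le_ofReal (min_le_right _ _)) _
        _ = _ := by rw [ENNReal.tsum_mul_right, hpd1, one_mul]
    exact (ENNReal.add_le_add_iff_left hfin).1 hsum
  -- limit
  have lim : ENNReal.ofReal η * (∑' q, pd q * (if c + D < V q then 1 else 0)) ≤
      ENNReal.ofReal D * (∑' q, pd q * (if c - D < V q ∧ V q ≤ c + D then 1 else 0)) := by
    rw [← ENNReal.tsum_mul_left, ENNReal.tsum_eq_iSup_sum]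
    refine iSup_le fun T => ?_
    obtain ⟨N, hN⟩ := exists_nat_ge (max (c + D) (∑ q ∈ T, V q))
    refine le_trans ?_ (key N ((le_max_left _ _).trans hN))
    rw [← ENNReal.tsum_mul_left]
    refine le_trans (Finset.sum_le_sum fun q hq => ?_) (ENNReal.sum_le_tsum T)
    by_cases h1 : c + D < V q
    · have h2 : V q ≤ N :=
        (Finset.single_le_sum (f := V) (fun q _ => hV q) hq).trans ((le_max_right _ _).trans hN)
      rw [if_pos h1, if_pos ⟨h1, h2⟩]
    · rw [if_neg h1]; simp
  have split : ∑' q, pd q * (if c - D < V q then 1 else 0) =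
      ∑' q, pd q * (if c - D < V q ∧ V q ≤ c + D then 1 else 0)
      + ∑' q, pd q * (if c + D < V q then 1 else 0) := by
    rw [← ENNReal.tsum_add]
    refine tsum_congr fun q => ?_
    rw [← mul_add]
    congr 1
    by_cases h1 : c + D < V q
    · rw [if_pos h1, if_pos (by linarith), if_neg (fun h => absurd h.2 (not_le.2 h1)), zero_add]
    · rw [if_neg h1, add_zero]
      simp [not_lt.1 h1]
  rw [split, mul_add, ENNReal.ofReal_add hη.le hD.le, add_mul, add_comm]
  rw [add_comm]
  gcongr

end SSC

namespace SSC

theorem pow_le_sum_choose (M k : ℕ) :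
    M ^ (k + 1) ≤ (k + 1).factorial * ∑ i ∈ Finset.range M, (i + k).choose k := by
  cases M with
  | zero => simp
  | succ m =>
    rw [Nat.sum_range_add_choose]
    have h := Nat.pow_succ_le_ascFactorial (m + 1) (k + 1)
    rw [Nat.ascFactorial_eq_factorial_mul_choose] at h
    exact h

/-- Moment bound from geometric tails. -/
theorem moment_of_tail {Q : Type*} (pd : Q → ℝ≥0∞) (hpd1 : ∑' q, pd q = 1)
    (V : Q → ℝ) (hV : ∀ q, 0 ≤ V q) (B κ ρ : ℝ) (hB : 0 < B) (hκ : 0 ≤ κ)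
    (hρ0 : 0 ≤ ρ) (hρ1 : ρ < 1)
    (htail : ∀ m : ℕ, ∑' q, pd q * (if κ + m * B < V q then 1 else 0) ≤ ENNReal.ofReal (ρ ^ (m + 1)))
    (k : ℕ) :
    ∑' q, pd q * ENNReal.ofReal (V q ^ (k + 1)) ≤
      ENNReal.ofReal (2 ^ k * (κ ^ (k + 1) + B ^ (k + 1) * ((k + 1).factorial / (1 - ρ) ^ (k + 1)))) := by
  classical
  set M : Q → ℕ := fun q => ⌈(V q - κ) / B⌉₊ with hM
  have hVM : ∀ q, V q ≤ κ + B * M q := by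
    intro q
    have := Nat.le_ceil ((V q - κ) / B)
    rw [div_le_iff₀ hB] at this
    simp only [hM]; linarith
  have hiM : ∀ q (i : ℕ), i < M q ↔ κ + i * B < V q := by
    intro q i
    simp only [hM]
    rw [Nat.lt_ceil, lt_div_iff₀ hB]
    constructor <;> intro h <;> linarith
  have h1 : ∀ q, ENNReal.ofReal (V q ^ (k + 1)) ≤
      ENNReal.ofReal (2 ^ k * κ ^ (k + 1)) + ENNReal.ofReal (2 ^ k * B ^ (k + 1)) *
        ((M q : ℝ≥0∞) ^ (k + 1)) := by
    intro q
    have : V q ^ (k + 1) ≤ 2 ^ k * κ ^ (k + 1) + 2 ^ k * B ^ (k + 1) * (M q : ℝ) ^ (k + 1) := by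
      calc V q ^ (k + 1) ≤ (κ + B * M q) ^ (k + 1) := pow_le_pow_left₀ (hV q) (hVM q) _
        _ ≤ 2 ^ (k + 1 - 1) * (κ ^ (k + 1) + (B * M q) ^ (k + 1)) :=
          add_pow_le hκ (by positivity) _
        _ = _ := by rw [Nat.add_sub_cancel, mul_pow]; ring
    refine (ENNReal.ofReal_le_ofReal this).trans ?_
    rw [ENNReal.ofReal_add (by positivity) (by positivity), ENNReal.ofReal_mul (p := 2 ^ k * B ^ (k+1)) (by positivity),
      ENNReal.ofReal_pow (by positivity) (k + 1), ENNReal.ofReal_natCast]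
  have h2 : ∑' q, pd q * ((M q : ℝ≥0∞) ^ (k + 1)) ≤
      ENNReal.ofReal ((k + 1).factorial / (1 - ρ) ^ (k + 1)) := by
    have hs : ∀ q, ((M q : ℝ≥0∞) ^ (k + 1)) ≤ ((k + 1).factorial : ℝ≥0∞) *
        ∑' i : ℕ, ((i + k).choose k : ℝ≥0∞) * (if κ + i * B < V q then 1 else 0) := by
      intro q
      have := pow_le_sum_choose (M q) k
      have h' : ((M q ^ (k+1) : ℕ) : ℝ≥0∞) ≤ ((k + 1).factorial * ∑ i ∈ Finset.range (M q), (i + k).choose k : ℕ) := by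
        exact_mod_cast this
      push_cast at h'
      refine h'.trans (mul_le_mul_right ?_ _)
      refine le_trans (Finset.sum_le_sum fun i hi => ?_) (ENNReal.sum_le_tsum (Finset.range (M q)))
      rw [if_pos ((hiM q i).1 (Finset.mem_range.1 hi)), mul_one]
    have hsum := hasSum_choose_mul_geometric_of_norm_lt_one k (r := ρ)
      (by rw [Real.norm_eq_abs, abs_of_nonneg hρ0]; exact hρ1)
    calc ∑' q, pd q * ((M q : ℝ≥0∞) ^ (k + 1))
        ≤ ∑' q, pd q * (((k + 1).factorial : ℝ≥0∞) *
        ∑' i : ℕ, ((i + k).choose k : ℝ≥0∞) * (if κ + i * B < V q then 1 else 0)) :=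
          ENNReal.tsum_le_tsum fun q => mul_le_mul_right (hs q) _
      _ = ((k + 1).factorial : ℝ≥0∞) * ∑' q, ∑' i : ℕ, ((i + k).choose k : ℝ≥0∞) *
            (pd q * (if κ + i * B < V q then 1 else 0)) := by
          rw [← ENNReal.tsum_mul_left]
          refine tsum_congr fun q => ?_
          rw [mul_left_comm, ← ENNReal.tsum_mul_left]
          congr 1
          exact tsum_congr fun i => mul_left_comm _ _ _
      _ = ((k + 1).factorial : ℝ≥0∞) * ∑' i : ℕ, ((i + k).choose k : ℝ≥0∞) *
            ∑' q, (pd q * (if κ + i * B < V q then 1 else 0)) := by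
          rw [ENNReal.tsum_comm]
          congr 1
          exact tsum_congr fun i => ENNReal.tsum_mul_left
      _ ≤ ((k + 1).factorial : ℝ≥0∞) * ∑' i : ℕ, ENNReal.ofReal (((i + k).choose k : ℝ) * ρ ^ i) := by
          refine mul_le_mul_right (ENNReal.tsum_le_tsum fun i => ?_) _
          rw [ENNReal.ofReal_mul (by positivity), ENNReal.ofReal_natCast]
          refine mul_le_mul_right ((htail i).trans (ENNReal.ofReal_le_ofReal ?_)) _
          exact pow_le_pow_of_le_one hρ0 hρ1.le (Nat.le_succ i)
      _ = _ := by
          rw [← ENNReal.ofReal_tsum_of_nonneg (fun i => by positivity) hsum.summable, hsum.tsum_eq,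
            ← ENNReal.ofReal_natCast, ← ENNReal.ofReal_mul (by positivity), mul_one_div]
  calc ∑' q, pd q * ENNReal.ofReal (V q ^ (k + 1))
      ≤ ∑' q, (pd q * ENNReal.ofReal (2 ^ k * κ ^ (k + 1)) + ENNReal.ofReal (2 ^ k * B ^ (k + 1)) *
        (pd q * (M q : ℝ≥0∞) ^ (k + 1))) := by
        refine ENNReal.tsum_le_tsum fun q => ?_
        rw [mul_left_comm, ← mul_add]
        exact mul_le_mul_right (h1 q) _
    _ = ENNReal.ofReal (2 ^ k * κ ^ (k + 1)) + ENNReal.ofReal (2 ^ k * B ^ (k + 1)) *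
        ∑' q, (pd q * (M q : ℝ≥0∞) ^ (k + 1)) := by
        rw [ENNReal.tsum_add, ENNReal.tsum_mul_right, hpd1, one_mul, ENNReal.tsum_mul_left]
    _ ≤ ENNReal.ofReal (2 ^ k * κ ^ (k + 1)) + ENNReal.ofReal (2 ^ k * B ^ (k + 1)) *
        ENNReal.ofReal ((k + 1).factorial / (1 - ρ) ^ (k + 1)) := by gcongr
    _ = _ := by
        have : 0 < 1 - ρ := by linarith
        rw [← ENNReal.ofReal_mul (by positivity), ← ENNReal.ofReal_add (by positivity) (by positivity)]
        congr 1; ring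

theorem factorial_le (r : ℕ) (hr : 1 ≤ r) :
    (r.factorial : ℝ) ≤ Real.sqrt r * Real.exp 1 * (r / Real.exp 1) ^ r := by
  obtain ⟨k, rfl⟩ : ∃ k, r = k + 1 := ⟨r - 1, by omega⟩
  have h := Stirling.stirlingSeq'_antitone (Nat.zero_le k)
  simp only [Function.comp, Nat.succ_eq_add_one, zero_add, Stirling.stirlingSeq_one] at h
  rw [Stirling.stirlingSeq, div_le_iff₀ (by positivity)] at h
  refine h.trans (le_of_eq ?_)
  rw [Real.sqrt_mul (by norm_num)]
  have : Real.sqrt 2 ≠ 0 := by positivity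
  field_simp

/-- Final moment bound for a stationary chain with bounded jumps and negative drift. -/
theorem moment_bound {Q α : Type*} (S : Finset α) (w : α → ℝ) (hw : ∀ a ∈ S, 0 ≤ w a)
    (hw1 : ∑ a ∈ S, w a = 1) (next : Q → α → Q) (pd : Q → ℝ≥0∞)
    (hpd1 : ∑' q, pd q = 1)
    (hstat : ∀ f : Q → ℝ≥0∞,
      ∑' q, pd q * ∑ a ∈ S, ENNReal.ofReal (w a) * f (next q a) = ∑' q, pd q * f q)
    (V : Q → ℝ) (hV : ∀ q, 0 ≤ V q) (D η κ : ℝ) (hD : 0 < D) (hη : 0 < η) (hκ : 0 ≤ κ)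
    (hjump : ∀ q, ∀ a ∈ S, |V (next q a) - V q| ≤ D)
    (hdrift : ∀ q, κ < V q → ∑ a ∈ S, w a * V (next q a) ≤ V q - η) (k : ℕ) :
    ∑' q, pd q * ENNReal.ofReal (V q ^ (k + 1)) ≤
      ENNReal.ofReal (2 ^ k * (κ ^ (k + 1) + (2 * D) ^ (k + 1) *
        ((k + 1).factorial * ((D + η) / η) ^ (k + 1)))) := by
  classical
  have hstep := tail_step S w hw hw1 next pd hpd1 hstat V hV D η κ hD hη hjump hdrift
  have hstep' : ∀ c, κ ≤ c + D → (∑' q, pd q * (if c + D < V q then 1 else 0)) ≤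
      ENNReal.ofReal (D / (D + η)) * (∑' q, pd q * (if c - D < V q then 1 else 0)) := by
    intro c hc
    have h := mul_le_mul_right (hstep c hc) (ENNReal.ofReal ((η + D)⁻¹))
    rw [← mul_assoc, ← mul_assoc, ← ENNReal.ofReal_mul (by positivity),
      ← ENNReal.ofReal_mul (by positivity), inv_mul_cancel₀ (by positivity), ENNReal.ofReal_one,
      one_mul] at h
    convert h using 3
    rw [add_comm, div_eq_inv_mul]
  have hle1 : ∀ x : ℝ, ∑' q, pd q * (if x < V q then (1 : ℝ≥0∞) else 0) ≤ 1 := by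
    intro x
    refine (ENNReal.tsum_le_tsum fun q => ?_).trans_eq hpd1
    split_ifs <;> simp
  have htail : ∀ m : ℕ, ∑' q, pd q * (if κ + m * (2 * D) < V q then 1 else 0) ≤
      ENNReal.ofReal ((D / (D + η)) ^ (m + 1)) := by
    intro m
    induction m with
    | zero =>
      have h := hstep' (κ - D) (by linarith)
      simp only [Nat.cast_zero, zero_mul, add_zero, zero_add, pow_one]
      rw [sub_add_cancel] at h
      exact h.trans (mul_le_of_le_one_right zero_le (hle1 _))
    | succ m ih =>
      have h := hstep' (κ + m * (2 * D) + D) (by have : 0 ≤ m * (2 * D) := by positivity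
                                                 linarith)
      have e1 : κ + m * (2 * D) + D + D = κ + ((m + 1 : ℕ) : ℝ) * (2 * D) := by push_cast; ring
      have e2 : κ + m * (2 * D) + D - D = κ + m * (2 * D) := by ring
      rw [e1, e2] at h
      refine h.trans ?_
      rw [pow_succ', ENNReal.ofReal_mul (by positivity)]
      gcongr
  have hm := moment_of_tail pd hpd1 V hV (2 * D) κ (D / (D + η)) (by positivity) hκ (by positivity)
    (by rw [div_lt_one (by positivity)]; linarith) htail k
  refine hm.trans (le_of_eq ?_)
  have : 1 - D / (D + η) = η / (D + η) := by field_simp; ring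
  rw [this, div_pow, div_pow, div_div_eq_mul_div, mul_div_assoc]

/-- Arithmetic comparison with the constant of the theorem. -/
theorem final_const (r : ℕ) (hr : 1 ≤ r) (L v D : ℝ) (hL : 0 ≤ L) (hv : 0 < v) (hv1 : v ≤ 1)
    (hD : 0 < D) :
    2 ^ (r - 1) * ((2 * L / v) ^ r + (2 * D) ^ r * (r.factorial * ((D + v / 4) / (v / 4)) ^ r)) ≤
    ((2 : ℝ) ^ ((1 : ℝ) / r) * max (8 * L / v)
      ((Real.sqrt r * Real.exp 1) ^ ((1 : ℝ) / r) * 16 * (r / Real.exp 1) * (D / v) * (D + 1))) ^ r := by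
  have hr0 : (r : ℝ) ≠ 0 := by positivity
  have hroot : ∀ x : ℝ, 0 ≤ x → (x ^ ((1 : ℝ) / r)) ^ r = x := by
    intro x hx
    rw [← Real.rpow_natCast, ← Real.rpow_mul hx, one_div, inv_mul_cancel₀ hr0, Real.rpow_one]
  rw [mul_pow ((2 : ℝ) ^ ((1 : ℝ) / r)), hroot 2 (by norm_num)]
  set X := 8 * L / v with hX
  set Y := (Real.sqrt r * Real.exp 1) ^ ((1 : ℝ) / r) * 16 * (r / Real.exp 1) * (D / v) * (D + 1) with hY
  have hX0 : 0 ≤ X := by positivity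
  have hY0 : 0 ≤ Y := by positivity
  have h1 : X ^ r ≤ max X Y ^ r := pow_le_pow_left₀ hX0 (le_max_left _ _) _
  have h2 : Y ^ r ≤ max X Y ^ r := pow_le_pow_left₀ hY0 (le_max_right _ _) _
  have h2r : (2 : ℝ) ^ (r - 1) ≤ 2 ^ r := pow_le_pow_right₀ (by norm_num) (Nat.sub_le _ _)
  have hA : 2 ^ (r - 1) * (2 * L / v) ^ r ≤ X ^ r := by
    calc 2 ^ (r - 1) * (2 * L / v) ^ r ≤ 2 ^ r * (2 * L / v) ^ r := by gcongr
      _ = (4 * L / v) ^ r := by rw [← mul_pow]; congr 1; ring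
      _ ≤ X ^ r := by rw [hX]; gcongr; norm_num
  have hB : 2 ^ (r - 1) * ((2 * D) ^ r * (r.factorial * ((D + v / 4) / (v / 4)) ^ r)) ≤ Y ^ r := by
    have hYr : Y ^ r = (Real.sqrt r * Real.exp 1 * (r / Real.exp 1) ^ r) * (16 * (D / v) * (D + 1)) ^ r := by
      rw [hY, mul_pow, mul_pow, mul_pow, mul_pow, hroot _ (by positivity), mul_pow, mul_pow]; ring
    rw [hYr]
    calc 2 ^ (r - 1) * ((2 * D) ^ r * (r.factorial * ((D + v / 4) / (v / 4)) ^ r))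
        ≤ 2 ^ r * ((2 * D) ^ r * (r.factorial * ((D + 1) / (v / 4)) ^ r)) := by
          gcongr; linarith
      _ = r.factorial * (16 * (D / v) * (D + 1)) ^ r := by
          have : 16 * (D / v) * (D + 1) = 2 * ((2 * D) * ((D + 1) / (v / 4))) := by
            field_simp; ring
          rw [this, mul_pow 2 (2 * D * ((D + 1) / (v / 4))), mul_pow (2 * D) ((D + 1) / (v / 4))]
          ring
      _ ≤ _ := by
          gcongr
          exact factorial_le r hr
  rw [mul_add]; linarith

end SSC

namespace SSC

/-- Euclidean inner product on matrices. -/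
def ip (n : ℕ) (x y : Fin n → Fin n → ℝ) : ℝ := ∑ i, ∑ j, x i j * y i j

theorem normE_eq (n : ℕ) (x : Fin n → Fin n → ℝ) :
    normE n x = ‖(WithLp.toLp 2 (fun p : Fin n × Fin n => x p.1 p.2) : EuclideanSpace ℝ (Fin n × Fin n))‖ := by
  rw [EuclideanSpace.norm_eq, normE, Fintype.sum_prod_type]
  simp

theorem normE_nonneg (n : ℕ) (x : Fin n → Fin n → ℝ) : 0 ≤ normE n x := Real.sqrt_nonneg _

theorem normE_sq (n : ℕ) (x : Fin n → Fin n → ℝ) : normE n x ^ 2 = ∑ i, ∑ j, x i j ^ 2 :=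
  Real.sq_sqrt (Finset.sum_nonneg fun i _ => Finset.sum_nonneg fun j _ => sq_nonneg _)

theorem normE_add_le (n : ℕ) (x y : Fin n → Fin n → ℝ) :
    normE n (x + y) ≤ normE n x + normE n y := by
  rw [normE_eq, normE_eq, normE_eq]
  exact norm_add_le (WithLp.toLp 2 (fun p : Fin n × Fin n => x p.1 p.2) : EuclideanSpace ℝ (Fin n × Fin n))
    (WithLp.toLp 2 (fun p : Fin n × Fin n => y p.1 p.2))

theorem normE_neg (n : ℕ) (x : Fin n → Fin n → ℝ) : normE n (-x) = normE n x := by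
  simp [normE]

theorem abs_ip_le (n : ℕ) (x y : Fin n → Fin n → ℝ) : |ip n x y| ≤ normE n x * normE n y := by
  rw [normE_eq, normE_eq]
  refine le_trans (le_of_eq ?_) (abs_real_inner_le_norm _ _)
  rw [ip, PiLp.inner_apply, Fintype.sum_prod_type]
  simp [mul_comm]

theorem normE_add_sq (n : ℕ) (x y : Fin n → Fin n → ℝ) :
    normE n (x + y) ^ 2 = normE n x ^ 2 + 2 * ip n x y + normE n y ^ 2 := by
  rw [normE_sq, normE_sq, normE_sq, ip, Finset.mul_sum, ← Finset.sum_add_distrib,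
    ← Finset.sum_add_distrib]
  refine Finset.sum_congr rfl fun i _ => ?_
  rw [Finset.mul_sum, ← Finset.sum_add_distrib, ← Finset.sum_add_distrib]
  refine Finset.sum_congr rfl fun j _ => ?_
  simp only [Pi.add_apply]; ring

theorem ip_smul (n : ℕ) (x y : Fin n → Fin n → ℝ) (t : ℝ) : ip n x (t • y) = t * ip n x y := by
  simp only [ip, Finset.mul_sum, Pi.smul_apply, smul_eq_mul]
  exact Finset.sum_congr rfl fun i _ => Finset.sum_congr rfl fun j _ => by ring

theorem ip_add (n : ℕ) (x y z : Fin n → Fin n → ℝ) : ip n x (y + z) = ip n x y + ip n x z := by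
  simp only [ip, Pi.add_apply, mul_add, Finset.sum_add_distrib]

theorem ip_sub (n : ℕ) (x y z : Fin n → Fin n → ℝ) : ip n x (y - z) = ip n x y - ip n x z := by
  simp only [ip, Pi.sub_apply, mul_sub, Finset.sum_sub_distrib]

theorem ip_comm (n : ℕ) (x y : Fin n → Fin n → ℝ) : ip n x y = ip n y x := by
  simp only [ip, mul_comm]

theorem ip_self (n : ℕ) (x : Fin n → Fin n → ℝ) : ip n x x = normE n x ^ 2 := by
  rw [normE_sq]; simp only [ip, sq]

theorem normE_smul_sq (n : ℕ) (x : Fin n → Fin n → ℝ) (t : ℝ) :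
    normE n (t • x) ^ 2 = t ^ 2 * normE n x ^ 2 := by
  rw [← ip_self, ip_smul, ip_comm, ip_smul, ip_self]; ring

theorem coneK_add (n : ℕ) {x y : Fin n → Fin n → ℝ} (hx : x ∈ coneK n) (hy : y ∈ coneK n) :
    x + y ∈ coneK n := by
  obtain ⟨w, wt, h1, h2, h3⟩ := hx
  obtain ⟨v, vt, g1, g2, g3⟩ := hy
  refine ⟨w + v, wt + vt, fun i => add_nonneg (h1 i) (g1 i), fun i => add_nonneg (h2 i) (g2 i),
    fun i j => ?_⟩
  simp only [Pi.add_apply, h3, g3]; ring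

theorem coneK_smul (n : ℕ) {x : Fin n → Fin n → ℝ} (hx : x ∈ coneK n) {t : ℝ} (ht : 0 ≤ t) :
    t • x ∈ coneK n := by
  obtain ⟨w, wt, h1, h2, h3⟩ := hx
  refine ⟨t • w, t • wt, fun i => mul_nonneg ht (h1 i), fun i => mul_nonneg ht (h2 i),
    fun i j => ?_⟩
  simp only [Pi.smul_apply, h3, smul_eq_mul]; ring

/-- A perturbation fact: if `2 t b ≤ t² c` for small positive `t`, then `b ≤ 0`. -/
theorem nonpos_of_quad (b c : ℝ) (hc : 0 ≤ c)
    (h : ∀ t : ℝ, 0 < t → t ≤ 1 → 2 * t * b ≤ t ^ 2 * c) : b ≤ 0 := by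
  by_contra hb
  push Not at hb
  have ht : 0 < b / (b + c) := by positivity
  have ht1 : b / (b + c) ≤ 1 := by rw [div_le_one (by positivity)]; linarith
  have h1 := h _ ht ht1
  set t := b / (b + c) with htd
  have e : t * (b + c) = b := by rw [htd]; field_simp
  have : 2 * b ≤ t * c := by nlinarith
  nlinarith

variable {n : ℕ} {proj : (Fin n → Fin n → ℝ) → (Fin n → Fin n → ℝ)}

theorem perp_dir (hproj : IsConeProj n proj) (x y : Fin n → Fin n → ℝ)
    (hy : ∀ t : ℝ, 0 < t → t ≤ 1 → proj x + t • y ∈ coneK n) : ip n (x - proj x) y ≤ 0 := by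
  refine nonpos_of_quad _ (normE n y ^ 2) (sq_nonneg _) fun t ht ht1 => ?_
  have h := (hproj x).2 _ (hy t ht ht1)
  have h2 := pow_le_pow_left₀ (normE_nonneg n _) h 2
  have e : x - (proj x + t • y) = (x - proj x) + (-t) • y := by
    rw [neg_smul]; abel
  rw [e, normE_add_sq, normE_smul_sq, ip_smul] at h2
  nlinarith

theorem perp_nonpos (hproj : IsConeProj n proj) (x y : Fin n → Fin n → ℝ) (hy : y ∈ coneK n) :
    ip n (x - proj x) y ≤ 0 :=
  perp_dir hproj x y fun t ht _ => coneK_add n (hproj x).1 (coneK_smul n hy ht.le)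

theorem perp_orth (hproj : IsConeProj n proj) (x : Fin n → Fin n → ℝ) :
    ip n (x - proj x) (proj x) = 0 := by
  refine le_antisymm (perp_nonpos hproj x _ (hproj x).1) ?_
  have := perp_dir hproj x (-proj x) fun t ht ht1 => by
    have e : proj x + t • -proj x = (1 - t) • proj x := by
      rw [sub_smul, one_smul, smul_neg, sub_eq_add_neg]
    rw [e]
    exact coneK_smul n (hproj x).1 (by linarith)
  have e : -proj x = (-1 : ℝ) • proj x := by simp
  rw [e, ip_smul] at this
  linarith

theorem perp_row (hproj : IsConeProj n proj) (x : Fin n → Fin n → ℝ) (i : Fin n) :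
    ∑ j, (x - proj x) i j ≤ 0 := by
  have := perp_nonpos hproj x (fun i' _ => if i' = i then 1 else 0)
    ⟨fun i' => if i' = i then 1 else 0, 0, fun i' => by dsimp only; split_ifs <;> norm_num, fun _ => le_rfl,
      fun i' j => by simp⟩
  simpa [ip, Finset.sum_ite_eq, ← Finset.sum_mul] using this

theorem perp_col (hproj : IsConeProj n proj) (x : Fin n → Fin n → ℝ) (j : Fin n) :
    ∑ i, (x - proj x) i j ≤ 0 := by
  have := perp_nonpos hproj x (fun _ j' => if j' = j then 1 else 0)
    ⟨0, fun j' => if j' = j then 1 else 0, fun _ => le_rfl, fun i' => by dsimp only; split_ifs <;> norm_num,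
      fun i' j => by simp⟩
  simpa [ip, Finset.sum_ite_eq] using this

/-- Linear functionals over doubly stochastic matrices are dominated by MaxWeight. -/
theorem ds_le (q s : Fin n → Fin n → ℕ)
    (hs : ∀ s', IsPerm n s' → (∑ i, ∑ j, q i j * s' i j) ≤ (∑ i, ∑ j, q i j * s i j))
    (m : Fin n → Fin n → ℝ) (hm : Matrix.of m ∈ doublyStochastic ℝ (Fin n)) :
    ip n (toR n q) m ≤ ip n (toR n q) (toR n s) := by
  obtain ⟨w, hw0, hw1, hwm⟩ := exists_eq_sum_perm_of_mem_doublyStochastic hm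
  have hent : ∀ i j, m i j = ∑ σ, w σ * (if σ i = j then 1 else 0) := by
    intro i j
    have h := congrFun (congrFun hwm i) j
    rw [Matrix.of_apply, Matrix.sum_apply] at h
    rw [← h]
    refine Finset.sum_congr rfl fun σ _ => ?_
    rw [Matrix.smul_apply, smul_eq_mul]
    congr 1
    simp [Equiv.Perm.permMatrix, Equiv.toPEquiv_apply, PEquiv.toMatrix_apply, eq_comm]
  have hperm : ∀ σ : Equiv.Perm (Fin n), ip n (toR n q) (fun i j => if σ i = j then 1 else 0) ≤
      ip n (toR n q) (toR n s) := by
    intro σ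
    have h := hs (fun i j => if σ i = j then 1 else 0) ⟨fun i j => by dsimp only; split_ifs <;> simp,
      fun i => by simp, fun j => by
        have : ∀ i, (if σ i = j then 1 else 0) = (if i = σ.symm j then 1 else 0) := fun i => by
          simp only [Equiv.eq_symm_apply]
        simp [this]⟩
    have h' : ((∑ i, ∑ j, q i j * (if σ i = j then 1 else 0) : ℕ) : ℝ) ≤ ((∑ i, ∑ j, q i j * s i j : ℕ) : ℝ) := by
      exact_mod_cast h
    push_cast at h'
    exact h'
  have e : ip n (toR n q) m = ∑ σ, w σ * ip n (toR n q) (fun i j => if σ i = j then 1 else 0) := by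
    simp only [ip, hent, Finset.mul_sum]
    rw [Finset.sum_comm (s := (Finset.univ : Finset (Equiv.Perm (Fin n))))]
    refine Finset.sum_congr rfl fun i _ => ?_
    rw [Finset.sum_comm]
    refine Finset.sum_congr rfl fun σ _ => ?_
    refine Finset.sum_congr rfl fun j _ => ?_
    ring
  rw [e]
  calc ∑ σ, w σ * ip n (toR n q) (fun i j => if σ i = j then 1 else 0)
      ≤ ∑ σ, w σ * ip n (toR n q) (toR n s) :=
        Finset.sum_le_sum fun σ _ => mul_le_mul_of_nonneg_left (hperm σ) (hw0 σ)
    _ = _ := by rw [← Finset.sum_mul, hw1, one_mul]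

/-- Extension to doubly substochastic matrices. -/
theorem dss_le (q s : Fin n → Fin n → ℕ)
    (hs : ∀ s', IsPerm n s' → (∑ i, ∑ j, q i j * s' i j) ≤ (∑ i, ∑ j, q i j * s i j))
    (m : Fin n → Fin n → ℝ) (h0 : ∀ i j, 0 ≤ m i j) (hr : ∀ i, ∑ j, m i j ≤ 1)
    (hc : ∀ j, ∑ i, m i j ≤ 1) :
    ip n (toR n q) m ≤ ip n (toR n q) (toR n s) := by
  set R : Fin n → ℝ := fun i => 1 - ∑ j, m i j with hR
  set C : Fin n → ℝ := fun j => 1 - ∑ i, m i j with hC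
  have hR0 : ∀ i, 0 ≤ R i := fun i => sub_nonneg.2 (hr i)
  have hC0 : ∀ i, 0 ≤ C i := fun i => sub_nonneg.2 (hc i)
  have hRC : ∑ i, R i = ∑ j, C j := by
    simp only [hR, hC, Finset.sum_sub_distrib]
    rw [Finset.sum_comm]
  set T := ∑ i, R i with hT
  have hT0 : 0 ≤ T := Finset.sum_nonneg fun i _ => hR0 i
  have hle : ip n (toR n q) m ≤ ip n (toR n q) (fun i j => m i j + R i * C j / T) := by
    refine Finset.sum_le_sum fun i _ => Finset.sum_le_sum fun j _ => ?_
    refine mul_le_mul_of_nonneg_left ?_ (Nat.cast_nonneg _)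
    have : 0 ≤ R i * C j / T := div_nonneg (mul_nonneg (hR0 i) (hC0 j)) hT0
    linarith
  refine hle.trans (ds_le q s hs _ ?_)
  rw [mem_doublyStochastic_iff_sum]
  refine ⟨fun i j => add_nonneg (h0 i j) (div_nonneg (mul_nonneg (hR0 i) (hC0 j)) hT0), ?_, ?_⟩
  · intro i
    simp only [Matrix.of_apply]
    rw [Finset.sum_add_distrib, ← Finset.sum_div, ← Finset.mul_sum, ← hRC]
    by_cases h : T = 0
    · have : R i = 0 := (Finset.sum_eq_zero_iff_of_nonneg (fun i _ => hR0 i)).1 h i (Finset.mem_univ _)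
      rw [this]
      simp only [hR] at this
      simp; linarith
    · rw [mul_div_assoc, div_self h]
      simp only [hR]; ring
  · intro j
    simp only [Matrix.of_apply]
    rw [Finset.sum_add_distrib, ← Finset.sum_div, ← Finset.sum_mul]
    by_cases h : T = 0
    · have : C j = 0 := (Finset.sum_eq_zero_iff_of_nonneg (fun i _ => hC0 i)).1 (hRC ▸ h) j (Finset.mem_univ _)
      rw [this]
      simp only [hC] at this
      simp; linarith
    · rw [mul_comm, mul_div_assoc, div_self h]
      simp only [hC]; ring

theorem ip_cone_F {x ν : Fin n → Fin n → ℝ} (hx : x ∈ coneK n)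
    (h2 : ∀ i, ∑ j, ν i j = 1) (h3 : ∀ j, ∑ i, ν i j = 1) :
    ∃ T : ℝ, ip n x ν = ∑ i, (Classical.choose hx) i + T ∧
      T = ∑ j, (Classical.choose (Classical.choose_spec hx)) j := by
  refine ⟨_, ?_, rfl⟩
  have hs := (Classical.choose_spec (Classical.choose_spec hx)).2.2
  simp only [ip]
  simp_rw [hs, add_mul, Finset.sum_add_distrib]
  congr 1
  · simp_rw [← Finset.mul_sum, h2, mul_one]
  · rw [Finset.sum_comm]
    simp_rw [← Finset.mul_sum, h3, mul_one]

/-- Key geometric drift inequality. -/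
theorem perp_drift (hproj : IsConeProj n proj) (ν : Fin n → Fin n → ℝ) (hν : memF n ν)
    (v : ℝ) (hv : ∀ i j, v ≤ ν i j) (hv0 : 0 < v) (q s : Fin n → Fin n → ℕ) (hperm : IsPerm n s)
    (hs : ∀ s', IsPerm n s' → (∑ i, ∑ j, q i j * s' i j) ≤ (∑ i, ∑ j, q i j * s i j)) :
    ip n (toR n q - proj (toR n q)) (ν - toR n s) ≤ - v * normE n (toR n q - proj (toR n q)) := by
  set x := toR n q with hx
  set p := x - proj x with hp
  have hsr : ∀ i, ∑ j, toR n s i j = 1 := fun i => by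
    have := hperm.2.1 i
    simp only [toR]; exact_mod_cast this
  have hsc : ∀ j, ∑ i, toR n s i j = 1 := fun i => by
    have := hperm.2.2 i
    simp only [toR]; exact_mod_cast this
  have hpar : ip n (proj x) (ν - toR n s) = 0 := by
    obtain ⟨T, h1, h2⟩ := ip_cone_F (hproj x).1 hν.2.1 hν.2.2
    obtain ⟨T', h1', h2'⟩ := ip_cone_F (hproj x).1 hsr hsc
    rw [ip_sub, h1, h1', h2, h2', sub_self]
  have hxp : ip n p (ν - toR n s) = ip n x (ν - toR n s) := by
    rw [hp, ip_comm, ip_sub, ip_comm n _ x, ip_comm n _ (proj x), hpar, sub_zero]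
  rw [hxp, ip_sub]
  have hxpp : ip n x p = normE n p ^ 2 := by
    have e : x = p + proj x := by rw [hp]; abel
    rw [← ip_self]
    conv_lhs => rw [e, ip_comm, ip_add]
    rw [hp, perp_orth hproj, add_zero]
  by_cases hN : normE n p = 0
  · rw [hN]
    have := dss_le q s hs ν hν.1 (fun i => (hν.2.1 i).le) (fun i => (hν.2.2 i).le)
    rw [← hx] at this
    linarith
  have hNpos : 0 < normE n p := lt_of_le_of_ne (normE_nonneg n p) (Ne.symm hN)
  set t := v / normE n p with ht
  have ht0 : 0 < t := div_pos hv0 hNpos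
  have hentry : ∀ i j, |p i j| ≤ normE n p := by
    intro i j
    apply Real.abs_le_sqrt
    exact (Finset.single_le_sum (f := fun j => p i j ^ 2) (fun j _ => sq_nonneg _) (Finset.mem_univ j)).trans
      (Finset.single_le_sum (f := fun i => ∑ j, p i j ^ 2)
        (fun i _ => Finset.sum_nonneg fun j _ => sq_nonneg _) (Finset.mem_univ i))
  have := dss_le q s hs (ν + t • p) (fun i j => by
      have h1 := (abs_le.1 (hentry i j)).1
      have h2 : t * normE n p = v := by rw [ht]; field_simp
      have h3 := hv i j
      simp only [Pi.add_apply, Pi.smul_apply, smul_eq_mul]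
      nlinarith) (fun i => by
      have := perp_row hproj x i
      simp only [Pi.add_apply, Pi.smul_apply, smul_eq_mul]
      rw [Finset.sum_add_distrib, ← Finset.mul_sum, hν.2.1 i]
      nlinarith) (fun j => by
      have := perp_col hproj x j
      simp only [Pi.add_apply, Pi.smul_apply, smul_eq_mul]
      rw [Finset.sum_add_distrib, ← Finset.mul_sum, hν.2.2 j]
      nlinarith)
  rw [← hx, ip_add, ip_smul, hxpp] at this
  have e : t * normE n p ^ 2 = v * normE n p := by rw [ht]; field_simp
  linarith

end SSC

namespace SSC

/-- Finite set carrying the arrival distribution. -/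
def arrS (n amax : ℕ) : Finset (Fin n → Fin n → ℕ) :=
  Fintype.piFinset fun _ => Fintype.piFinset fun _ => Finset.range (amax + 1)

theorem mem_arrS {n amax : ℕ} {a : Fin n → Fin n → ℕ} : a ∈ arrS n amax ↔ ∀ i j, a i j ≤ amax := by
  simp [arrS, Fintype.mem_piFinset, Nat.lt_succ_iff]

/-- Real arrival weights. -/
noncomputable def wA (n : ℕ) (A : Fin n → Fin n → ℕ → ℝ≥0∞) (a : Fin n → Fin n → ℕ) : ℝ :=
  ∏ i, ∏ j, (A i j (a i j)).toReal

theorem wA_nonneg (n : ℕ) (A : Fin n → Fin n → ℕ → ℝ≥0∞) (a : Fin n → Fin n → ℕ) : 0 ≤ wA n A a :=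
  Finset.prod_nonneg fun _ _ => Finset.prod_nonneg fun _ _ => ENNReal.toReal_nonneg

theorem sum_prod (n amax : ℕ) (g : Fin n → Fin n → ℕ → ℝ) :
    ∑ a ∈ arrS n amax, ∏ i, ∏ j, g i j (a i j) =
      ∏ i, ∏ j, ∑ k ∈ Finset.range (amax + 1), g i j k := by
  have h1 : ∀ i, ∏ j, ∑ k ∈ Finset.range (amax + 1), g i j k =
      ∑ b ∈ Fintype.piFinset (fun _ : Fin n => Finset.range (amax + 1)), ∏ j, g i j (b j) :=
    fun i => Finset.prod_univ_sum _ _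
  simp_rw [h1]
  rw [Finset.prod_univ_sum]
  rfl

variable {n : ℕ} {A : Fin n → Fin n → ℕ → ℝ≥0∞} {lam sig : Fin n → Fin n → ℝ} {amax : ℕ}

theorem A_ne_top (hA : ArrivalDist n A lam sig amax) (i j : Fin n) (k : ℕ) : A i j k ≠ ∞ := by
  refine ne_top_of_le_ne_top ENNReal.one_ne_top ?_
  rw [← hA.1 i j]
  exact ENNReal.le_tsum k

theorem A_zero (hA : ArrivalDist n A lam sig amax) (i j : Fin n) (k : ℕ)
    (hk : k ∉ Finset.range (amax + 1)) : A i j k = 0 := by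
  by_contra h
  exact hk (Finset.mem_range.2 (Nat.lt_succ_of_le (hA.2.1 i j k h)))

theorem A_sum (hA : ArrivalDist n A lam sig amax) (i j : Fin n) :
    ∑ k ∈ Finset.range (amax + 1), (A i j k).toReal = 1 := by
  have h : ∑' k, A i j k = ∑ k ∈ Finset.range (amax + 1), A i j k :=
    tsum_eq_sum (fun k hk => A_zero hA i j k hk)
  rw [← ENNReal.toReal_sum (fun k _ => A_ne_top hA i j k), ← h, hA.1 i j, ENNReal.toReal_one]

theorem A_mean (hA : ArrivalDist n A lam sig amax) (i j : Fin n) :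
    ∑ k ∈ Finset.range (amax + 1), (A i j k).toReal * (k : ℝ) = lam i j := by
  rw [← hA.2.2.1 i j, tsum_eq_sum (s := Finset.range (amax + 1))]
  intro k hk
  rw [A_zero hA i j k hk]; simp

theorem A_var (hA : ArrivalDist n A lam sig amax) (i j : Fin n) :
    ∑ k ∈ Finset.range (amax + 1), (A i j k).toReal * ((k : ℝ) - lam i j) ^ 2 = sig i j ^ 2 := by
  rw [← hA.2.2.2 i j, tsum_eq_sum (s := Finset.range (amax + 1))]
  intro k hk
  rw [A_zero hA i j k hk]; simp

theorem wA_sum (hA : ArrivalDist n A lam sig amax) : ∑ a ∈ arrS n amax, wA n A a = 1 := by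
  have := sum_prod n amax (fun i j k => (A i j k).toReal)
  simp only [A_sum hA, Finset.prod_const_one] at this
  exact this

theorem wA_marg (hA : ArrivalDist n A lam sig amax) (i0 j0 : Fin n) (h : ℕ → ℝ) :
    ∑ a ∈ arrS n amax, wA n A a * h (a i0 j0) =
      ∑ k ∈ Finset.range (amax + 1), (A i0 j0 k).toReal * h k := by
  have hpr : ∀ f : Fin n → Fin n → ℝ, ∏ i, ∏ j, (if i = i0 ∧ j = j0 then f i j else 1) = f i0 j0 := by
    intro f
    rw [Finset.prod_eq_single i0, Finset.prod_eq_single j0]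
    · simp
    · intro j _ hj; simp [hj]
    · simp
    · intro i _ hi; simp [hi]
    · simp
  have := sum_prod n amax (fun i j k => (A i j k).toReal * (if i = i0 ∧ j = j0 then h k else 1))
  simp only [Finset.prod_mul_distrib] at this
  have e : ∀ a : Fin n → Fin n → ℕ,
      ∏ i, ∏ j, (if i = i0 ∧ j = j0 then h (a i j) else 1) = h (a i0 j0) :=
    fun a => hpr (fun i j => h (a i j))
  simp only [e] at this
  refine Eq.trans this ?_
  have e2 : ∀ i j, ∑ k ∈ Finset.range (amax + 1), (A i j k).toReal * (if i = i0 ∧ j = j0 then h k else 1)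
      = if i = i0 ∧ j = j0 then ∑ k ∈ Finset.range (amax + 1), (A i j k).toReal * h k else 1 := by
    intro i j
    split_ifs
    · rfl
    · simp [A_sum hA]
  simp only [e2]
  exact hpr (fun i j => ∑ k ∈ Finset.range (amax + 1), (A i j k).toReal * h k)

theorem jointA_eq (hA : ArrivalDist n A lam sig amax) (a : Fin n → Fin n → ℕ) :
    jointA n A a = ENNReal.ofReal (wA n A a) := by
  rw [jointA, wA, ENNReal.ofReal_prod_of_nonneg
    (fun _ _ => Finset.prod_nonneg fun _ _ => ENNReal.toReal_nonneg)]
  refine Finset.prod_congr rfl fun i _ => ?_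
  rw [ENNReal.ofReal_prod_of_nonneg (fun _ _ => ENNReal.toReal_nonneg)]
  refine Finset.prod_congr rfl fun j _ => ?_
  rw [ENNReal.ofReal_toReal (A_ne_top hA i j _)]

theorem jointA_zero (hA : ArrivalDist n A lam sig amax) (a : Fin n → Fin n → ℕ)
    (ha : a ∉ arrS n amax) : jointA n A a = 0 := by
  rw [mem_arrS] at ha
  push Not at ha
  obtain ⟨i, j, h⟩ := ha
  refine Finset.prod_eq_zero (Finset.mem_univ i) (Finset.prod_eq_zero (Finset.mem_univ j) ?_)
  exact A_zero hA i j _ (by simp; omega)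

/-- Stationarity tested against functions. -/
theorem stat (hA : ArrivalDist n A lam sig amax)
    (sched : (Fin n → Fin n → ℕ) → (Fin n → Fin n → ℕ))
    (pd : (Fin n → Fin n → ℕ) → ℝ≥0∞) (hpd : IsInvariant n (kernelMW n A sched) pd)
    (f : (Fin n → Fin n → ℕ) → ℝ≥0∞) :
    ∑' q, pd q * ∑ a ∈ arrS n amax, ENNReal.ofReal (wA n A a) * f (nextQ n q a (sched q)) =
      ∑' q, pd q * f q := by
  have h1 : ∀ q, ∑ a ∈ arrS n amax, ENNReal.ofReal (wA n A a) * f (nextQ n q a (sched q)) =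
      ∑' q', kernelMW n A sched q q' * f q' := by
    intro q
    simp only [kernelMW, ← ENNReal.tsum_mul_right]
    rw [ENNReal.tsum_comm]
    rw [tsum_eq_sum (s := arrS n amax)]
    · refine Finset.sum_congr rfl fun a _ => ?_
      rw [tsum_eq_single (nextQ n q a (sched q))]
      · rw [if_pos rfl, mul_one, jointA_eq hA]
      · intro q' hq'
        rw [if_neg (Ne.symm hq')]; simp
    · intro a ha
      simp [jointA_zero hA a ha]
  simp only [h1, ← ENNReal.tsum_mul_left]
  rw [ENNReal.tsum_comm]
  refine tsum_congr fun q' => ?_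
  rw [← hpd.2 q', ← ENNReal.tsum_mul_right]
  exact tsum_congr fun q => (mul_assoc _ _ _).symm

variable {proj : (Fin n → Fin n → ℝ) → (Fin n → Fin n → ℝ)}

theorem proj_nonneg (hproj : IsConeProj n proj) (x : Fin n → Fin n → ℝ) (i j : Fin n) :
    0 ≤ proj x i j := by
  obtain ⟨w, wt, h1, h2, h3⟩ := (hproj x).1
  rw [h3]; exact add_nonneg (h1 i) (h2 j)

/-- The increment of the queues. -/
def dq (n : ℕ) (q a s : Fin n → Fin n → ℕ) : Fin n → Fin n → ℝ :=
  toR n (nextQ n q a s) - toR n q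

theorem dq_cases (q a s : Fin n → Fin n → ℕ) (hs : ∀ i j, s i j ≤ 1) (i j : Fin n) :
    dq n q a s i j = a i j - s i j ∨
      (dq n q a s i j = 0 ∧ q i j = 0 ∧ a i j = 0 ∧ s i j = 1) := by
  simp only [dq, toR, nextQ, Pi.sub_apply]
  by_cases h : s i j ≤ q i j + a i j
  · left
    rw [Nat.cast_sub h]; push_cast; ring
  · right
    have := hs i j
    have h1 : q i j = 0 := by omega
    have h2 : a i j = 0 := by omega
    have h3 : s i j = 1 := by omega
    simp [h1, h2, h3]

theorem dq_norm (q a s : Fin n → Fin n → ℕ) (hs : ∀ i j, s i j ≤ 1) (hamax : 1 ≤ amax)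
    (ha : a ∈ arrS n amax) : normE n (dq n q a s) ≤ n * amax := by
  rw [normE]
  apply Real.sqrt_le_iff.2
  refine ⟨by positivity, ?_⟩
  have h1 : (1 : ℝ) ≤ amax := by exact_mod_cast hamax
  calc ∑ i, ∑ j, dq n q a s i j ^ 2 ≤ ∑ i : Fin n, ∑ j : Fin n, (amax : ℝ) ^ 2 := by
        refine Finset.sum_le_sum fun i _ => Finset.sum_le_sum fun j _ => ?_
        rcases dq_cases q a s hs i j with h | h
        · rw [h]
          have h2 : (a i j : ℝ) ≤ amax := by exact_mod_cast mem_arrS.1 ha i j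
          have h3 : (s i j : ℝ) ≤ 1 := by exact_mod_cast hs i j
          have h4 : (0 : ℝ) ≤ a i j := by positivity
          have h5 : (0 : ℝ) ≤ s i j := by positivity
          apply sq_le_sq'
          · linarith
          · linarith
        · rw [h.1, zero_pow two_ne_zero]; positivity
    _ = _ := by simp; ring

theorem V_jump (hproj : IsConeProj n proj) (x d : Fin n → Fin n → ℝ) :
    |normE n (x + d - proj (x + d)) - normE n (x - proj x)| ≤ normE n d := by
  rw [abs_le]
  constructor
  · have h1 := (hproj x).2 _ (hproj (x + d)).1
    have e : x - proj (x + d) = (x + d - proj (x + d)) + -d := by abel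
    have h2 := normE_add_le n (x + d - proj (x + d)) (-d)
    rw [e] at h1
    rw [normE_neg] at h2
    linarith
  · have h1 := (hproj (x + d)).2 _ (hproj x).1
    have e : x + d - proj x = (x - proj x) + d := by abel
    have h2 := normE_add_le n (x - proj x) d
    rw [e] at h1
    linarith

theorem V_sq (hproj : IsConeProj n proj) (q a s : Fin n → Fin n → ℕ) (hs : ∀ i j, s i j ≤ 1) :
    normE n (toR n (nextQ n q a s) - proj (toR n (nextQ n q a s))) ^ 2 ≤
      normE n (toR n q - proj (toR n q)) ^ 2 +
      ∑ i, ∑ j, (2 * (toR n q - proj (toR n q)) i j * (a i j - s i j) + ((a i j : ℝ) - s i j) ^ 2) := by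
  set x := toR n q with hx
  have e0 : toR n (nextQ n q a s) = x + dq n q a s := by rw [dq]; abel
  rw [e0]
  have h1 := (hproj (x + dq n q a s)).2 _ (hproj x).1
  have e : x + dq n q a s - proj x = (x - proj x) + dq n q a s := by abel
  rw [e] at h1
  have h2 := pow_le_pow_left₀ (normE_nonneg n _) h1 2
  rw [normE_add_sq, add_assoc] at h2
  refine h2.trans (add_le_add le_rfl ?_)
  rw [normE_sq, ip, Finset.mul_sum, ← Finset.sum_add_distrib]
  refine Finset.sum_le_sum fun i _ => ?_
  rw [Finset.mul_sum, ← Finset.sum_add_distrib]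
  refine Finset.sum_le_sum fun j _ => ?_
  rcases dq_cases q a s hs i j with h | ⟨h, hq, ha, hs1⟩
  · rw [h]; linarith
  · rw [h, ha, hs1]
    have h3 : (x - proj x) i j ≤ 0 := by
      have := proj_nonneg hproj x i j
      have h4 : x i j = 0 := by rw [hx]; simp [toR, hq]
      simp only [Pi.sub_apply, h4]; linarith
    push_cast
    linarith

theorem E_V_sq (hproj : IsConeProj n proj) (hA : ArrivalDist n A lam sig amax)
    (q s : Fin n → Fin n → ℕ) (hs : ∀ i j, s i j ≤ 1) :
    ∑ a ∈ arrS n amax, wA n A a *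
      normE n (toR n (nextQ n q a s) - proj (toR n (nextQ n q a s))) ^ 2 ≤
      normE n (toR n q - proj (toR n q)) ^ 2 + 2 * ip n (toR n q - proj (toR n q)) (lam - toR n s)
       + ∑ i, ∑ j, (sig i j ^ 2 + (lam i j - s i j) ^ 2) := by
  set p := toR n q - proj (toR n q) with hp
  calc _ ≤ ∑ a ∈ arrS n amax, wA n A a * (normE n p ^ 2 +
      ∑ i, ∑ j, (2 * p i j * (a i j - s i j) + ((a i j : ℝ) - s i j) ^ 2)) :=
        Finset.sum_le_sum fun a _ => mul_le_mul_of_nonneg_left (V_sq hproj q a s hs) (wA_nonneg n A a)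
    _ = normE n p ^ 2 + ∑ i, ∑ j, ∑ a ∈ arrS n amax,
        wA n A a * (2 * p i j * (a i j - s i j) + ((a i j : ℝ) - s i j) ^ 2) := by
        rw [Finset.sum_congr rfl (fun a _ => mul_add (wA n A a) (normE n p ^ 2) _),
          Finset.sum_add_distrib, ← Finset.sum_mul, wA_sum hA, one_mul]
        congr 1
        simp only [Finset.mul_sum]
        rw [Finset.sum_comm]
        refine Finset.sum_congr rfl fun i _ => ?_
        rw [Finset.sum_comm]
    _ = normE n p ^ 2 + ∑ i, ∑ j, (2 * p i j * (lam i j - s i j) + (sig i j ^ 2 + (lam i j - s i j) ^ 2)) := by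
        congr 1
        refine Finset.sum_congr rfl fun i _ => Finset.sum_congr rfl fun j _ => ?_
        rw [wA_marg hA i j (fun k => 2 * p i j * (k - s i j) + ((k : ℝ) - s i j) ^ 2)]
        have e : ∀ k : ℕ, (A i j k).toReal * (2 * p i j * (k - s i j) + ((k : ℝ) - s i j) ^ 2) =
          (A i j k).toReal * ((k : ℝ) - lam i j) ^ 2 +
          (2 * p i j + 2 * (lam i j - s i j)) * ((A i j k).toReal * (k : ℝ)) +
          (- 2 * p i j * s i j - 2 * (lam i j - s i j) * lam i j + (lam i j - s i j) ^ 2) * (A i j k).toReal := by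
          intro k; ring
        simp only [e, Finset.sum_add_distrib, ← Finset.mul_sum]
        rw [A_sum hA, A_mean hA, A_var hA]; ring
    _ = _ := by
        rw [add_assoc]; congr 1
        rw [ip, Finset.mul_sum, ← Finset.sum_add_distrib]
        refine Finset.sum_congr rfl fun i _ => ?_
        rw [Finset.mul_sum, ← Finset.sum_add_distrib]
        refine Finset.sum_congr rfl fun j _ => ?_
        simp only [Pi.sub_apply, toR]; ring

/-- Drift of the distance to the cone. -/
theorem drift (hproj : IsConeProj n proj) (ν : Fin n → Fin n → ℝ) (hν : memF n ν)
    (v : ℝ) (hv : ∀ i j, v ≤ ν i j) (hv0 : 0 < v) (ε : ℝ) (hε0 : 0 < ε)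
    (hε : ε * normE n ν ≤ v / 2) (hA : ArrivalDist n A (fun i j => (1 - ε) * ν i j) sig amax)
    (q s : Fin n → Fin n → ℕ) (hperm : IsPerm n s)
    (hs : ∀ s', IsPerm n s' → (∑ i, ∑ j, q i j * s' i j) ≤ (∑ i, ∑ j, q i j * s i j))
    (L : ℝ) (hL : L = (∑ i, ∑ j, ((1 - ε) * ν i j) ^ 2) + (∑ i, ∑ j, (sig i j) ^ 2) + n) 
    (hL0 : 0 ≤ L)
    (hκ : 2 * L / v < normE n (toR n q - proj (toR n q))) :
    ∑ a ∈ arrS n amax, wA n A a *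
      normE n (toR n (nextQ n q a s) - proj (toR n (nextQ n q a s))) ≤
      normE n (toR n q - proj (toR n q)) - v / 4 := by
  have hE := E_V_sq hproj hA q s hperm.1
  have hlam0 : ∀ i j, 0 ≤ (1 - ε) * ν i j := fun i j => by
    rw [← A_mean hA i j]
    exact Finset.sum_nonneg fun k _ => mul_nonneg ENNReal.toReal_nonneg (Nat.cast_nonneg k)
  set p := toR n q - proj (toR n q) with hp
  set V := normE n p with hV
  have hVpos : 0 < V := lt_of_le_of_lt (by positivity) hκ
  have hip : ip n p ((fun i j => (1 - ε) * ν i j) - toR n s) ≤ - (v / 2) * V := by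
    have h1 := perp_drift hproj ν hν v hv hv0 q s hperm hs
    rw [← hp, ← hV] at h1
    have e : ((fun i j => (1 - ε) * ν i j) - toR n s) = (ν - toR n s) + (-ε) • ν := by
      ext i j
      simp only [Pi.sub_apply, Pi.add_apply, Pi.smul_apply, smul_eq_mul]; ring
    rw [e, ip_add, ip_smul]
    have h2 := (abs_le.1 (abs_ip_le n p ν)).1
    rw [← hV] at h2
    have h3 : ε * (-(V * normE n ν)) ≤ ε * ip n p ν := mul_le_mul_of_nonneg_left h2 hε0.le
    have h4 := mul_le_mul_of_nonneg_left hε hVpos.le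
    nlinarith
  have hquad : ∑ i, ∑ j, (sig i j ^ 2 + ((1 - ε) * ν i j - s i j) ^ 2) ≤ L := by
    have hn : (n : ℝ) = ∑ i, ∑ j, (s i j : ℝ) := by
      have : ∀ i, ∑ j, (s i j : ℝ) = 1 := fun i => by exact_mod_cast hperm.2.1 i
      simp [this]
    rw [hL, hn]
    simp only [← Finset.sum_add_distrib]
    refine Finset.sum_le_sum fun i _ => Finset.sum_le_sum fun j _ => ?_
    have h1 : (s i j : ℝ) ≤ 1 := by exact_mod_cast hperm.1 i j
    have h2 : (0 : ℝ) ≤ s i j := by positivity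
    have h3 := mul_nonneg (hlam0 i j) h2
    nlinarith
  have hlin : ∀ y : ℝ, y ≤ (y ^ 2 + V ^ 2) / (2 * V) := by
    intro y
    rw [le_div_iff₀ (by positivity)]
    nlinarith [sq_nonneg (y - V)]
  calc _ ≤ ∑ a ∈ arrS n amax, wA n A a *
      ((normE n (toR n (nextQ n q a s) - proj (toR n (nextQ n q a s))) ^ 2 + V ^ 2) / (2 * V)) :=
        Finset.sum_le_sum fun a _ => mul_le_mul_of_nonneg_left (hlin _) (wA_nonneg n A a)
    _ = (∑ a ∈ arrS n amax, wA n A a *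
      normE n (toR n (nextQ n q a s) - proj (toR n (nextQ n q a s))) ^ 2 + V ^ 2) / (2 * V) := by
        simp only [← mul_div_assoc, mul_add, ← Finset.sum_div, Finset.sum_add_distrib,
          ← Finset.sum_mul, wA_sum hA, one_mul]
    _ ≤ (V ^ 2 - v * V + L + V ^ 2) / (2 * V) := by
        gcongr
        linarith
    _ ≤ V - v / 4 := by
        rw [div_le_iff₀ (by positivity)]
        rw [div_lt_iff₀ hv0] at hκ
        nlinarith

end SSC

/-- Proposition 4.2, fixed-ε version: state-space collapse under MaxWeight.
All steady-state moments of `‖q̄_⊥‖` are bounded by `(M_r)^r`. -/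
theorem state_space_collapse
    (n : ℕ) (hn : 1 ≤ n)
    (ν : Fin n → Fin n → ℝ) (hν : memF n ν)
    (νmin : ℝ) (hνmin : IsLeast {x : ℝ | ∃ i j : Fin n, ν i j = x} νmin)
    (hνminpos : 0 < νmin)
    (ε : ℝ) (hε0 : 0 < ε) (hε : ε ≤ νmin / (2 * normE n ν))
    (sig : Fin n → Fin n → ℝ) (amax : ℕ) (hamax : 1 ≤ amax)
    (A : Fin n → Fin n → ℕ → ℝ≥0∞)
    (hA : ArrivalDist n A (fun i j => (1 - ε) * ν i j) sig amax)
    (sched : (Fin n → Fin n → ℕ) → (Fin n → Fin n → ℕ))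
    (hsched : IsMaxWeight n sched)
    (pd : (Fin n → Fin n → ℕ) → ℝ≥0∞)
    (hpd : IsInvariant n (kernelMW n A sched) pd)
    (proj : (Fin n → Fin n → ℝ) → (Fin n → Fin n → ℝ))
    (hproj : IsConeProj n proj)
    (r : ℕ) (hr : 1 ≤ r) :
    (∑' q : Fin n → Fin n → ℕ,
        pd q * ENNReal.ofReal (normE n (toR n q - proj (toR n q)) ^ r))
      ≤ ENNReal.ofReal
        (((2 : ℝ) ^ ((1 : ℝ) / r) *
          max (8 * ((∑ i, ∑ j, ((1 - ε) * ν i j) ^ 2) + (∑ i, ∑ j, (sig i j) ^ 2) + n) / νmin)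
            ((Real.sqrt r * Real.exp 1) ^ ((1 : ℝ) / r) * 16 * (r / Real.exp 1) *
              (n * amax / νmin) * (n * amax + 1))) ^ r) := by
  obtain ⟨⟨i0, j0, hij⟩, hlb⟩ := hνmin
  have hv : ∀ i j, νmin ≤ ν i j := fun i j => hlb ⟨i, j, rfl⟩
  have hv1 : νmin ≤ 1 := by
    rw [← hij, ← hν.2.1 i0]
    exact Finset.single_le_sum (f := fun j => ν i0 j) (fun j _ => hν.1 i0 j) (Finset.mem_univ j0)
  have hεν : ε * normE n ν ≤ νmin / 2 := by
    rcases (SSC.normE_nonneg n ν).eq_or_lt with h | h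
    · rw [← h]; linarith
    · rw [le_div_iff₀ (by positivity)] at hε
      linarith
  set L := (∑ i, ∑ j, ((1 - ε) * ν i j) ^ 2) + (∑ i, ∑ j, (sig i j) ^ 2) + (n : ℝ) with hL
  have hL0 : 0 ≤ L := by positivity
  have hn' : (0 : ℝ) < n := by exact_mod_cast hn
  have ha' : (0 : ℝ) < amax := by exact_mod_cast hamax
  have hD : (0 : ℝ) < n * amax := by positivity
  obtain ⟨k, rfl⟩ : ∃ k, r = k + 1 := ⟨r - 1, by omega⟩
  have hm := SSC.moment_bound (SSC.arrS n amax) (SSC.wA n A) (fun a _ => SSC.wA_nonneg n A a)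
    (SSC.wA_sum hA) (fun q a => nextQ n q a (sched q)) pd hpd.1 (SSC.stat hA sched pd hpd)
    (fun q => normE n (toR n q - proj (toR n q))) (fun q => SSC.normE_nonneg n _)
    (n * amax) (νmin / 4) (2 * L / νmin) hD (by positivity) (by positivity)
    (fun q a ha => by
      have h1 := SSC.V_jump hproj (toR n q) (SSC.dq n q a (sched q))
      have e0 : toR n q + SSC.dq n q a (sched q) = toR n (nextQ n q a (sched q)) := by
        rw [SSC.dq]; abel
      rw [e0] at h1
      exact h1.trans (SSC.dq_norm q a (sched q) (hsched q).1.1 hamax ha))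
    (fun q hq => SSC.drift hproj ν hν νmin hv hνminpos ε hε0 hεν hA q (sched q) (hsched q).1
      (hsched q).2 L hL hL0 hq) k
  refine hm.trans (ENNReal.ofReal_le_ofReal ?_)
  have hf := SSC.final_const (k + 1) hr L νmin (n * amax) hL0 hνminpos hv1 hD
  rw [Nat.add_sub_cancel] at hf
  exact hf
end

section
/- Two-sided steady-state bound under MaxWeight (Theorem 5.2, fixed-ε version). Fix n ≥ 1 and ν ∈ F with ν_min := min_{ij} ν_{ij} > 0, arrival means λ_{ij} = (1−ε)ν_{ij}, variances σ_{ij}², and 0 < ε ≤ ν_min/(2‖ν‖). Let π be an invariant distribution of the MaxWeight Markov chain. Then for every integer r ≥ 2: (1 − 1/(2n))·‖σ‖²/ε − B₁ ≤ E_π[∑_{ij} q̄_{ij}] ≤ (1 − 1/(2n))·‖σ‖²/ε + B₂, where B₁ = −nε/2 + n + 3·n^{2−1/r}·ε^{−1/r}·M_r and B₂ = n(1+ε)/2 + 2·n^{2−1/r}·ε^{−1/r}·M_r, with M_r = 2^{1/r} · max( 8(‖λ‖² + ‖σ‖² + n)/ν_min , (√r · e)^{1/r} · 16 · (r/e) ·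 (n·a_max/ν_min) · (n·a_max + 1) ). -/
open scoped BigOperators ENNReal

open SwitchModel

/-! ### Geometry of the cone -/

/-- The cone `K` as a subset of Euclidean space. -/
def kSet (n : ℕ) : Set (EuclideanSpace ℝ (Fin n × Fin n)) :=
  {x | (∀ p, 0 ≤ x p) ∧ ∀ i j k l, x (i, j) + x (k, l) = x (i, l) + x (k, j)}

noncomputable def embE (n : ℕ) (x : Fin n → Fin n → ℝ) : EuclideanSpace ℝ (Fin n × Fin n) :=
  WithLp.toLp 2 (fun p => x p.1 p.2)

noncomputable def distK (n : ℕ) (x : Fin n → Fin n → ℝ) : ℝ :=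
  Metric.infDist (embE n x) (kSet n)

lemma kSet_closed (n : ℕ) : IsClosed (kSet n) := by
  have : kSet n = (⋂ p, {x | 0 ≤ x p}) ∩
      ⋂ i, ⋂ j, ⋂ k, ⋂ l, {x | x (i, j) + x (k, l) = x (i, l) + x (k, j)} := by
    ext x; simp [kSet]
  rw [this]
  refine IsClosed.inter (isClosed_iInter fun p => isClosed_le continuous_const (by fun_prop)) ?_
  refine isClosed_iInter fun i => isClosed_iInter fun j => isClosed_iInter fun k =>
    isClosed_iInter fun l => isClosed_eq (by fun_prop) (by fun_prop)

lemma kSet_convex (n : ℕ) : Convex ℝ (kSet n) := by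
  intro x hx y hy a b ha hb hab
  refine ⟨fun p => ?_, fun i j k l => ?_⟩
  · have := hx.1 p; have := hy.1 p
    simp; positivity
  · have := hx.2 i j k l; have := hy.2 i j k l
    simp only [PiLp.add_apply, PiLp.smul_apply, smul_eq_mul]
    linear_combination a * (hx.2 i j k l) + b * (hy.2 i j k l)

lemma kSet_zero (n : ℕ) : (0 : EuclideanSpace ℝ (Fin n × Fin n)) ∈ kSet n := by
  simp [kSet]

lemma kSet_smul_add {n : ℕ} {x y : EuclideanSpace ℝ (Fin n × Fin n)} (hx : x ∈ kSet n)
    (hy : y ∈ kSet n) {a b : ℝ} (ha : 0 ≤ a) (hb : 0 ≤ b) : a • x + b • y ∈ kSet n := by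
  refine ⟨fun p => ?_, fun i j k l => ?_⟩
  · have := hx.1 p; have := hy.1 p
    simp; positivity
  · simp only [PiLp.add_apply, PiLp.smul_apply, smul_eq_mul]
    linear_combination a * (hx.2 i j k l) + b * (hy.2 i j k l)

lemma norm_embE_sub_sq (n : ℕ) (x y : Fin n → Fin n → ℝ) :
    ‖embE n x - embE n y‖ ^ 2 = ∑ i, ∑ j, (x i j - y i j) ^ 2 := by
  rw [EuclideanSpace.norm_sq_eq, Fintype.sum_prod_type]
  simp [embE]

lemma distK_nonneg (n : ℕ) (x : Fin n → Fin n → ℝ) : 0 ≤ distK n x := Metric.infDist_nonneg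

lemma distK_lip (n : ℕ) (x y : Fin n → Fin n → ℝ) :
    |distK n x - distK n y| ≤ Real.sqrt (∑ i, ∑ j, (x i j - y i j) ^ 2) := by
  rw [← norm_embE_sub_sq, Real.sqrt_sq (norm_nonneg _), ← dist_eq_norm, abs_sub_le_iff]
  constructor
  · have := Metric.infDist_le_infDist_add_dist (s := kSet n) (x := embE n x) (y := embE n y)
    simp only [distK]; linarith
  · have := Metric.infDist_le_infDist_add_dist (s := kSet n) (x := embE n y) (y := embE n x)
    rw [dist_comm] at this
    simp only [distK]; linarith

lemma distK_sq_le (n : ℕ) (x y : Fin n → Fin n → ℝ) (hy : embE n y ∈ kSet n) :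
    distK n x ^ 2 ≤ ∑ i, ∑ j, (x i j - y i j) ^ 2 := by
  rw [← norm_embE_sub_sq, ← dist_eq_norm]
  exact pow_le_pow_left₀ Metric.infDist_nonneg (Metric.infDist_le_dist_of_mem hy) 2

lemma exists_proj (n : ℕ) (x : Fin n → Fin n → ℝ) :
    ∃ y : Fin n → Fin n → ℝ, embE n y ∈ kSet n ∧ (∀ i j, 0 ≤ y i j) ∧
      (∃ w v : Fin n → ℝ, ∀ i j, y i j = w i + v j) ∧
      distK n x ^ 2 = ∑ i, ∑ j, (x i j - y i j) ^ 2 ∧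
      (∑ i, ∑ j, (x i j - y i j) * y i j) = 0 ∧
      (∀ i, ∑ j, (x i j - y i j) ≤ 0) ∧ (∀ j, ∑ i, (x i j - y i j) ≤ 0) := by
  classical
  obtain ⟨z, hz, hd⟩ := (kSet_closed n).exists_infDist_eq_dist ⟨0, kSet_zero n⟩ (embE n x)
  set y : Fin n → Fin n → ℝ := fun i j => z (i, j) with hy
  have hyz : embE n y = z := by
    ext p; simp [embE, hy]
  have hin : ∀ w ∈ kSet n, inner ℝ (embE n x - z) (w - z) ≤ 0 := by
    apply (norm_eq_iInf_iff_real_inner_le_zero (kSet_convex n) hz).1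
    rw [← dist_eq_norm, ← hd, Metric.infDist_eq_iInf]
    simp only [dist_eq_norm]
  have hcone : ∀ w ∈ kSet n, inner ℝ (embE n x - z) w ≤ 0 := by
    intro w hw
    have := hin (1 • w + 1 • z) (by
      have := kSet_smul_add hw hz (a := 1) (b := 1) (by norm_num) (by norm_num)
      simpa using this)
    simpa using this
  have horth : inner ℝ (embE n x - z) z = 0 := by
    apply le_antisymm (hcone z hz)
    have := hin 0 (kSet_zero n)
    simpa using this
  have hform : ∀ w : Fin n → Fin n → ℝ, inner ℝ (embE n x - z) (embE n w)
      = ∑ i, ∑ j, (x i j - y i j) * w i j := by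
    intro w
    rw [PiLp.inner_apply, Fintype.sum_prod_type]
    simp [embE, hy, mul_comm]
  refine ⟨y, hyz ▸ hz, fun i j => hz.1 (i, j), ?_, ?_, ?_, ?_, ?_⟩
  · rcases isEmpty_or_nonempty (Fin n) with h | ⟨⟨i0⟩⟩
    · exact ⟨fun _ => 0, fun _ => 0, fun i => (h.false i).elim⟩
    · refine ⟨fun i => z (i, i0), fun j => z (i0, j) - z (i0, i0), fun i j => ?_⟩
      have := hz.2 i j i0 i0
      simp only [hy]; linarith
  · rw [← norm_embE_sub_sq, hyz, ← dist_eq_norm, distK, hd]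
  · rw [← hform, hyz, horth]
  · intro i
    have := hcone (embE n (fun k _ => if k = i then 1 else 0)) ?_
    · rw [hform] at this
      simpa [Finset.sum_ite_eq, ← Finset.sum_mul, Finset.mul_sum] using this
    · refine ⟨fun p => ?_, fun _ _ _ _ => ?_⟩
      · simp only [embE]; split_ifs <;> norm_num
      · simp only [embE]
  · intro j
    have := hcone (embE n (fun _ k => if k = j then 1 else 0)) ?_
    · rw [hform] at this
      simpa [Finset.sum_ite_eq] using this
    · refine ⟨fun p => ?_, fun _ _ _ _ => ?_⟩
      · simp only [embE]; split_ifs <;> norm_num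
      · simp only [embE]; ring

/-! ### MaxWeight and the Birkhoff polytope -/

lemma maxweight_ds (n : ℕ) (sched : (Fin n → Fin n → ℕ) → (Fin n → Fin n → ℕ))
    (hsched : IsMaxWeight n sched) (q : Fin n → Fin n → ℕ) (μ : Fin n → Fin n → ℝ)
    (h0 : ∀ i j, 0 ≤ μ i j) (hr : ∀ i, ∑ j, μ i j = 1) (hc : ∀ j, ∑ i, μ i j = 1) :
    ∑ i, ∑ j, (q i j : ℝ) * μ i j ≤ ∑ i, ∑ j, (q i j : ℝ) * (sched q i j : ℝ) := by
  classical
  have hmem : (Matrix.of μ) ∈ (doublyStochastic ℝ (Fin n) : Set (Matrix (Fin n) (Fin n) ℝ)) := by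
    rw [SetLike.mem_coe, mem_doublyStochastic_iff_sum]
    exact ⟨h0, hr, hc⟩
  rw [doublyStochastic_eq_convexHull_permMatrix] at hmem
  set c := ∑ i, ∑ j, (q i j : ℝ) * (sched q i j : ℝ)
  have hsub : convexHull ℝ {x | ∃ σ, Equiv.Perm.permMatrix ℝ σ = x} ⊆
      {M : Matrix (Fin n) (Fin n) ℝ | ∑ i, ∑ j, (q i j : ℝ) * M i j ≤ c} := by
    apply convexHull_min
    · rintro _ ⟨σ, rfl⟩
      have h := (hsched q).2 (fun i j => if σ i = j then 1 else 0) ?_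
      · simp only [Set.mem_ofPred_eq, c]
        have h' : ((∑ i, ∑ j, q i j * (if σ i = j then 1 else 0) : ℕ) : ℝ) ≤
          ((∑ i, ∑ j, q i j * sched q i j : ℕ) : ℝ) := by exact_mod_cast h
        push_cast at h'
        refine le_trans (le_of_eq ?_) h'
        refine Finset.sum_congr rfl fun i _ => Finset.sum_congr rfl fun j _ => ?_
        simp [Equiv.Perm.permMatrix, PEquiv.toMatrix_apply, Equiv.toPEquiv_apply, eq_comm]
      · refine ⟨fun i j => by dsimp only; split_ifs <;> simp, fun i => by simp, fun j => ?_⟩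
        rw [Finset.sum_eq_single (σ.symm j)]
        · simp
        · intro b _ hb
          dsimp only
          rw [if_neg]
          intro h; apply hb; simp [← h]
        · simp
    · intro x hx y hy a b ha hb hab
      simp only [Set.mem_ofPred_eq] at *
      have : ∑ i, ∑ j, (q i j : ℝ) * (a • x + b • y) i j =
        a * (∑ i, ∑ j, (q i j : ℝ) * x i j) + b * (∑ i, ∑ j, (q i j : ℝ) * y i j) := by
        simp only [Finset.mul_sum, ← Finset.sum_add_distrib]
        refine Finset.sum_congr rfl fun i _ => Finset.sum_congr rfl fun j _ => ?_
        simp; ring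
      rw [this]
      calc _ ≤ a * c + b * c := by gcongr
        _ = c := by rw [← add_mul, hab, one_mul]
  exact hsub hmem

lemma maxweight_sub (n : ℕ) (sched : (Fin n → Fin n → ℕ) → (Fin n → Fin n → ℕ))
    (hsched : IsMaxWeight n sched) (q : Fin n → Fin n → ℕ) (μ : Fin n → Fin n → ℝ)
    (h0 : ∀ i j, 0 ≤ μ i j) (hr : ∀ i, ∑ j, μ i j ≤ 1) (hc : ∀ j, ∑ i, μ i j ≤ 1) :
    ∑ i, ∑ j, (q i j : ℝ) * μ i j ≤ ∑ i, ∑ j, (q i j : ℝ) * (sched q i j : ℝ) := by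
  set R : Fin n → ℝ := fun i => ∑ j, μ i j with hR
  set C : Fin n → ℝ := fun j => ∑ i, μ i j with hC
  have hRC : ∑ j, C j = ∑ i, R i := by
    simp only [hR, hC]; exact Finset.sum_comm
  have hs1 : ∑ i, (1 - R i) = n - ∑ i, R i := by simp
  have hs2 : ∑ j, (1 - C j) = n - ∑ i, R i := by simp [hRC]
  have hRn : ∀ i, 0 ≤ 1 - R i := fun i => by have := hr i; simp only [hR]; linarith
  have hCn : ∀ j, 0 ≤ 1 - C j := fun j => by have := hc j; simp only [hC]; linarith
  have hT : 0 ≤ (n : ℝ) - ∑ i, R i := hs1 ▸ Finset.sum_nonneg fun i _ => hRn i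
  rcases hT.eq_or_lt with h | h
  · have e1 : ∀ i, 1 - R i = 0 := by
      have := (Finset.sum_eq_zero_iff_of_nonneg (s := Finset.univ) (fun i _ => hRn i)).1
        (hs1.trans h.symm)
      simpa using this
    have e2 : ∀ j, 1 - C j = 0 := by
      have := (Finset.sum_eq_zero_iff_of_nonneg (s := Finset.univ) (fun i _ => hCn i)).1
        (hs2.trans h.symm)
      simpa using this
    refine maxweight_ds n sched hsched q μ h0 (fun i => ?_) (fun j => ?_)
    · have := e1 i; simp only [hR] at this; linarith
    · have := e2 j; simp only [hC] at this; linarith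
  · set t := (n : ℝ) - ∑ i, R i with ht
    have := maxweight_ds n sched hsched q (fun i j => μ i j + (1 - R i) * (1 - C j) / t) ?_ ?_ ?_
    · refine le_trans ?_ this
      refine Finset.sum_le_sum fun i _ => Finset.sum_le_sum fun j _ => ?_
      have := mul_nonneg (hRn i) (hCn j)
      have h3 : 0 ≤ (1 - R i) * (1 - C j) / t := by positivity
      gcongr; linarith
    · intro i j
      have := mul_nonneg (hRn i) (hCn j)
      have h3 : 0 ≤ (1 - R i) * (1 - C j) / t := by positivity
      have := h0 i j
      linarith
    · intro i
      rw [Finset.sum_add_distrib, ← Finset.sum_div, ← Finset.mul_sum, hs2,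
        mul_div_assoc, div_self h.ne']
      simp [hR]
    · intro j
      rw [Finset.sum_add_distrib, ← Finset.sum_div, ← Finset.sum_mul, hs1, mul_comm,
        mul_div_assoc, div_self h.ne']
      simp [hC]

/-! ### Tail and moment bounds from negative drift -/

section Drift
open MeasureTheory

lemma drift_tail {Q 𝒜 : Type*} [MeasurableSpace Q] [MeasurableSpace 𝒜]
    (π : Measure Q) [IsProbabilityMeasure π] (α : Measure 𝒜) [IsProbabilityMeasure α]
    (T : Q × 𝒜 → Q) (hT : Measurable T) (hinv : Measure.map T (π.prod α) = π)
    (V : Q → ℝ) (hV : Measurable V) (D η B : ℝ) (hη : 0 < η) (hD : 0 < D)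
    (hlip : ∀ q, ∀ᵐ a ∂α, |V (T (q, a)) - V q| ≤ D)
    (hdrift : ∀ q, B < V q → ∫ a, (V (T (q, a)) - V q) ∂α ≤ -η)
    (c : ℝ) (hc : B ≤ c + D) :
    (D + η) * π.real {q | c + D < V q} ≤ D * π.real {q | c - D < V q} := by
  -- truncated inequality
  have key : ∀ M : ℕ, η * π.real {q | c + D < V q ∧ V q ≤ M} ≤
      D * (π.real {q | c - D < V q} - π.real {q | c + D < V q}) := by
    intro M
    rcases le_or_gt (M : ℝ) (c + D) with hM | hM
    · have : {q | c + D < V q ∧ V q ≤ M} = ∅ := by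
        ext q; simp; intro h; linarith
      rw [this]
      simp only [measureReal_empty, mul_zero]
      apply mul_nonneg hD.le
      rw [sub_nonneg]
      refine measureReal_mono (fun q hq => ?_)
      simp only [Set.mem_ofPred_eq] at *
      linarith
    set f : ℝ → ℝ := fun x => min (max x c) M with hf
    have hfm : Measurable f := by fun_prop
    have hfb : ∀ x, |f x| ≤ |c| + M := by
      intro x
      have h1 : min c M ≤ f x := min_le_min_right _ (le_max_right _ _)
      have h2 : f x ≤ M := min_le_right _ _
      have h3 : (0 : ℝ) ≤ M := Nat.cast_nonneg _
      rw [abs_le]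
      refine ⟨?_, by have := abs_nonneg c; linarith⟩
      have := neg_abs_le c
      rcases min_choice c (M : ℝ) with h | h <;> rw [h] at h1 <;> have := abs_nonneg c <;> linarith
    have hint : Integrable (fun q => f (V q)) π :=
      Integrable.of_bound (by fun_prop) (|c| + M) (Filter.Eventually.of_forall fun q => by
        rw [Real.norm_eq_abs]; exact hfb _)
    have hint2 : Integrable (fun x : Q × 𝒜 => f (V (T x))) (π.prod α) :=
      Integrable.of_bound (hfm.comp (hV.comp hT)).aestronglyMeasurable (|c| + M) (Filter.Eventually.of_forall fun q => by
        rw [Real.norm_eq_abs]; exact hfb _)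
    have hst : ∫ q, f (V q) ∂π = ∫ q, ∫ a, f (V (T (q, a))) ∂α ∂π := by
      rw [integral_integral (f := fun q a => f (V (T (q, a)))) hint2]
      conv_lhs => rw [← hinv]
      rw [integral_map hT.aemeasurable (by fun_prop)]
    have hin : Integrable (fun q => ∫ a, f (V (T (q, a))) ∂α) π := hint2.integral_prod_left
    set S1 : Set Q := {q | c - D < V q} with hS1
    set S2 : Set Q := {q | c + D < V q} with hS2
    set S3 : Set Q := {q | c + D < V q ∧ V q ≤ M} with hS3
    have mS1 : MeasurableSet S1 := measurableSet_lt measurable_const hV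
    have mS2 : MeasurableSet S2 := measurableSet_lt measurable_const hV
    have mS3 : MeasurableSet S3 := mS2.inter (measurableSet_le hV measurable_const)
    -- pointwise bound
    have hpt : ∀ q, ∫ a, f (V (T (q, a))) ∂α - f (V q) ≤
        D * S1.indicator (fun _ => (1 : ℝ)) q - D * S2.indicator (fun _ => (1 : ℝ)) q
        - η * S3.indicator (fun _ => (1 : ℝ)) q := by
      intro q
      have hmq : Measurable fun a => T (q, a) := by fun_prop
      have hia : Integrable (fun a => f (V (T (q, a)))) α :=
        Integrable.of_bound (hfm.comp (hV.comp hmq)).aestronglyMeasurable (|c| + M) (Filter.Eventually.of_forall fun q => by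
          rw [Real.norm_eq_abs]; exact hfb _)
      have hupper : ∀ K : ℝ, (∀ᵐ a ∂α, f (V (T (q, a))) - f (V q) ≤ K) →
          ∫ a, f (V (T (q, a))) ∂α - f (V q) ≤ K := by
        intro K hK
        have : ∫ a, (f (V (T (q, a))) - f (V q)) ∂α ≤ ∫ a, K ∂α :=
          integral_mono_ae (hia.sub (integrable_const _)) (integrable_const _) hK
        rw [integral_sub hia (integrable_const _)] at this
        simpa using this
      by_cases h2 : c + D < V q
      · have h1 : c - D < V q := by linarith
        have e1 : q ∈ S1 := h1
        have e2 : q ∈ S2 := h2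
        rw [Set.indicator_of_mem e1, Set.indicator_of_mem e2]
        by_cases h3 : V q ≤ M
        · have e3 : q ∈ S3 := ⟨h2, h3⟩
          rw [Set.indicator_of_mem e3]
          have hfq : f (V q) = V q := by
            simp only [hf]
            rw [max_eq_left (by linarith), min_eq_left h3]
          have hle : ∀ᵐ a ∂α, f (V (T (q, a))) - f (V q) ≤ V (T (q, a)) - V q := by
            filter_upwards [hlip q] with a ha
            rw [hfq]
            have hh : c ≤ V (T (q, a)) := by
              have := (abs_le.1 ha).1; linarith
            have : f (V (T (q, a))) ≤ V (T (q, a)) := by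
              simp only [hf]; rw [max_eq_left hh]; exact min_le_left _ _
            linarith
          have hiV : Integrable (fun a => V (T (q, a)) - V q) α :=
            Integrable.of_bound ((hV.comp hmq).sub_const _).aestronglyMeasurable D (by
              filter_upwards [hlip q] with a ha; rwa [Real.norm_eq_abs])
          have := integral_mono_ae (hia.sub (integrable_const (f (V q)))) hiV hle
          have h5 := hdrift q (by linarith)
          rw [integral_sub' hia (integrable_const _)] at this
          simp at this
          linarith
        · have e3 : q ∉ S3 := fun h => h3 h.2
          rw [Set.indicator_of_notMem e3]
          have hfq : f (V q) = M := by
            simp only [hf]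
            rw [max_eq_left (by linarith), min_eq_right (not_le.1 h3).le]
          have := hupper 0 (Filter.Eventually.of_forall fun a => by
            rw [hfq, sub_nonpos]; exact min_le_right _ _)
          linarith
      · have e2 : q ∉ S2 := h2
        have e3 : q ∉ S3 := fun h => h2 h.1
        rw [Set.indicator_of_notMem e2, Set.indicator_of_notMem e3]
        have hmono : ∀ x y : ℝ, |x - y| ≤ D → f x - f y ≤ D := by
          intro x y hxy
          have h1 : x ≤ y + D := by have := (abs_le.1 hxy).2; linarith
          have : f x ≤ f y + D := by
            simp only [hf]
            rw [← min_add_add_right, ← max_add_add_right]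
            apply min_le_min
            · exact max_le_max h1 (by linarith)
            · linarith
          linarith
        by_cases h1 : c - D < V q
        · have e1 : q ∈ S1 := h1
          rw [Set.indicator_of_mem e1]
          have := hupper D (by filter_upwards [hlip q] with a ha using hmono _ _ ha)
          linarith
        · have e1 : q ∉ S1 := h1
          rw [Set.indicator_of_notMem e1]
          have := hupper 0 (by
            filter_upwards [hlip q] with a ha
            have hh : V (T (q, a)) ≤ c := by have := (abs_le.1 ha).2; linarith
            have hh2 : V q ≤ c := by linarith
            simp only [hf]
            rw [max_eq_right hh, max_eq_right hh2]; simp)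
          linarith
    have hi1 : Integrable (S1.indicator (fun _ => (1 : ℝ))) π := (integrable_const _).indicator mS1
    have hi2 : Integrable (S2.indicator (fun _ => (1 : ℝ))) π := (integrable_const _).indicator mS2
    have hi3 : Integrable (S3.indicator (fun _ => (1 : ℝ))) π := (integrable_const _).indicator mS3
    have hfin := integral_mono (hin.sub hint)
      (((hi1.const_mul D).sub (hi2.const_mul D)).sub (hi3.const_mul η)) hpt
    rw [integral_sub' hin hint, ← hst, sub_self,
      integral_sub' ((hi1.const_mul D).sub (hi2.const_mul D)) (hi3.const_mul η),
      integral_sub' (hi1.const_mul D) (hi2.const_mul D)] at hfin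
    simp only [integral_const_mul, integral_indicator_const _ mS1, integral_indicator_const _ mS2,
      integral_indicator_const _ mS3, smul_eq_mul, mul_one] at hfin
    linarith
  have hlim : Filter.Tendsto (fun M : ℕ => π.real {q | c + D < V q ∧ V q ≤ M}) Filter.atTop
      (nhds (π.real {q | c + D < V q})) := by
    have hU : {q | c + D < V q} = ⋃ M : ℕ, {q | c + D < V q ∧ V q ≤ M} := by
      ext q
      simp only [Set.mem_ofPred_eq, Set.mem_iUnion]
      constructor
      · intro h
        obtain ⟨M, hM⟩ := exists_nat_ge (V q)
        exact ⟨M, h, hM⟩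
      · rintro ⟨M, h, _⟩; exact h
    rw [hU]
    have hmono : Monotone fun M : ℕ => {q | c + D < V q ∧ V q ≤ M} := by
      intro a b hab q hq
      exact ⟨hq.1, hq.2.trans (by exact_mod_cast hab)⟩
    exact (ENNReal.tendsto_toReal (measure_ne_top _ _)).comp (tendsto_measure_iUnion_atTop hmono)
  have := le_of_tendsto (hlim.const_mul η) (Filter.Eventually.of_forall key)
  linarith

lemma drift_tail_geom {Q 𝒜 : Type*} [MeasurableSpace Q] [MeasurableSpace 𝒜]
    (π : Measure Q) [IsProbabilityMeasure π] (α : Measure 𝒜) [IsProbabilityMeasure α]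
    (T : Q × 𝒜 → Q) (hT : Measurable T) (hinv : Measure.map T (π.prod α) = π)
    (V : Q → ℝ) (hV : Measurable V) (D η B : ℝ) (hη : 0 < η) (hD : 0 < D)
    (hlip : ∀ q, ∀ᵐ a ∂α, |V (T (q, a)) - V q| ≤ D)
    (hdrift : ∀ q, B < V q → ∫ a, (V (T (q, a)) - V q) ∂α ≤ -η) (k : ℕ) :
    π.real {q | k ≤ ⌈(V q - B) / (2 * D)⌉₊} ≤ (D / (D + η)) ^ k := by
  have hset : ∀ k : ℕ, {q | k + 1 ≤ ⌈(V q - B) / (2 * D)⌉₊} = {q | B + 2 * D * k < V q} := by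
    intro k
    ext q
    simp only [Set.mem_ofPred_eq]
    rw [Nat.succ_le_iff, Nat.lt_ceil, lt_div_iff₀ (by positivity)]
    constructor <;> intro h <;> linarith
  have step : ∀ c, B ≤ c + D → π.real {q | c + D < V q} ≤ D / (D + η) * π.real {q | c - D < V q} := by
    intro c hc
    have := drift_tail π α T hT hinv V hV D η B hη hD hlip hdrift c hc
    rw [div_mul_eq_mul_div, le_div_iff₀ (by positivity)]
    linarith
  induction k with
  | zero => simp
  | succ k ih =>
    rw [hset, pow_succ']
    have h := step (B + 2 * D * k - D) (by
      have : 0 ≤ 2 * D * k := by positivity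
      linarith)
    have e1 : B + 2 * D * k - D + D = B + 2 * D * k := by ring
    rw [e1] at h
    refine h.trans (mul_le_mul_of_nonneg_left ?_ (by positivity))
    refine le_trans (measureReal_mono ?_) ih
    intro q hq
    simp only [Set.mem_ofPred_eq] at *
    rcases k with _ | m
    · simp
    · have : q ∈ {q | m + 1 ≤ ⌈(V q - B) / (2 * D)⌉₊} := by
        rw [hset]
        simp only [Set.mem_ofPred_eq]
        push_cast at hq
        linarith
      exact this

lemma pow_le_factorial_mul_choose (N r : ℕ) : N ^ r ≤ r.factorial * (N + r).choose r := by
  rw [← Nat.descFactorial_eq_factorial_mul_choose]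
  have := Nat.pow_sub_le_descFactorial (N + r) r
  refine le_trans (Nat.pow_le_pow_left (by omega) r) this

lemma choose_eq_sum (N r : ℕ) :
    ∑ k ∈ Finset.range (N + 1), (k + r).choose r = (N + (r + 1)).choose (r + 1) := by
  induction N with
  | zero => simp
  | succ N ih =>
    rw [Finset.sum_range_succ, ih, add_comm, ← add_assoc, ← add_assoc]
    rw [show N + 1 + r + 1 = (N + r + 1) + 1 by ring, Nat.choose_succ_succ]
    congr 1
    congr 1; ring

lemma drift_moment {Q 𝒜 : Type*} [MeasurableSpace Q] [MeasurableSpace 𝒜]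
    (π : Measure Q) [IsProbabilityMeasure π] (α : Measure 𝒜) [IsProbabilityMeasure α]
    (T : Q × 𝒜 → Q) (hT : Measurable T) (hinv : Measure.map T (π.prod α) = π)
    (V : Q → ℝ) (hV : Measurable V) (hV0 : ∀ q, 0 ≤ V q) (D η B : ℝ) (hη : 0 < η) (hD : 0 < D)
    (hB : 0 ≤ B)
    (hlip : ∀ q, ∀ᵐ a ∂α, |V (T (q, a)) - V q| ≤ D)
    (hdrift : ∀ q, B < V q → ∫ a, (V (T (q, a)) - V q) ∂α ≤ -η) (r : ℕ) (hr : 1 ≤ r) :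
    Integrable (fun q => V q ^ r) π ∧
    ∫ q, V q ^ r ∂π ≤ (2 * B) ^ r + (4 * D * ((D + η) / η)) ^ r * r.factorial := by
  obtain ⟨m, rfl⟩ : ∃ m, r = m + 1 := ⟨r - 1, by omega⟩
  set N : Q → ℕ := fun q => ⌈(V q - B) / (2 * D)⌉₊ with hN
  have hNm : Measurable N := by
    apply Nat.measurable_ceil.comp; fun_prop
  set ρ : ℝ := D / (D + η) with hρ
  have hρ0 : 0 ≤ ρ := by positivity
  have hρ1 : ρ < 1 := by rw [hρ, div_lt_one (by positivity)]; linarith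
  have htail := drift_tail_geom π α T hT hinv V hV D η B hη hD hlip hdrift
  have h1 : ∫⁻ q, ((N q + (m + 1)).choose (m + 1) : ℝ≥0∞) ∂π ≤
      ENNReal.ofReal (((D + η) / η) ^ (m + 1)) := by
    have hpt : ∀ q, ((N q + (m + 1)).choose (m + 1) : ℝ≥0∞) =
        ∑' k : ℕ, {q | k ≤ N q}.indicator (fun _ => ((k + m).choose m : ℝ≥0∞)) q := by
      intro q
      rw [← choose_eq_sum, tsum_eq_sum (s := Finset.range (N q + 1))]
      · push_cast
        refine Finset.sum_congr rfl fun k hk => ?_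
        rw [Set.indicator_of_mem]
        simp only [Set.mem_ofPred_eq]
        have := Finset.mem_range.1 hk; omega
      · intro k hk
        rw [Set.indicator_of_notMem]
        simp only [Set.mem_ofPred_eq]
        intro h; apply hk; rw [Finset.mem_range]; omega
    have hms : ∀ k : ℕ, MeasurableSet {q | k ≤ N q} := fun k =>
      measurableSet_le measurable_const hNm
    simp_rw [hpt]
    rw [lintegral_tsum (fun k => (measurable_const.indicator (hms k)).aemeasurable)]
    simp_rw [lintegral_indicator_const (hms _)]
    have hs := hasSum_choose_mul_geometric_of_norm_lt_one m (r := ρ)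
      (by rw [Real.norm_eq_abs, abs_of_nonneg hρ0]; exact hρ1)
    have heq : 1 / (1 - ρ) ^ (m + 1) = ((D + η) / η) ^ (m + 1) := by
      rw [← one_div_pow]; congr 1
      have : 1 - ρ = η / (D + η) := by rw [hρ]; field_simp; ring
      rw [this, one_div_div]
    rw [← heq, ← hs.tsum_eq, ENNReal.ofReal_tsum_of_nonneg (fun k => by positivity) hs.summable]
    refine ENNReal.tsum_le_tsum fun k => ?_
    rw [ENNReal.ofReal_mul (by positivity), ENNReal.ofReal_natCast]
    gcongr
    rw [← ENNReal.ofReal_toReal (measure_ne_top π {q | k ≤ N q})]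
    exact ENNReal.ofReal_le_ofReal (htail k)
  have hVN : ∀ q, V q ^ (m + 1) ≤ (2 * B) ^ (m + 1) +
      ((4 * D) ^ (m + 1) * (m + 1).factorial) * ((N q + (m + 1)).choose (m + 1) : ℝ) := by
    intro q
    have h2 : V q ≤ B + 2 * D * N q := by
      have := Nat.le_ceil ((V q - B) / (2 * D))
      rw [div_le_iff₀ (by positivity)] at this
      simp only [hN]; linarith
    have h3 : V q ^ (m + 1) ≤ (2 * B) ^ (m + 1) + (2 * (2 * D * N q)) ^ (m + 1) := by
      refine (pow_le_pow_left₀ (hV0 q) h2 _).trans ?_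
      have hx : 0 ≤ 2 * D * N q := by positivity
      rcases le_total B (2 * D * N q) with h | h
      · refine (pow_le_pow_left₀ (by positivity) (by linarith : _ ≤ 2 * (2 * D * N q)) _).trans ?_
        have : 0 ≤ (2 * B) ^ (m + 1) := by positivity
        linarith
      · refine (pow_le_pow_left₀ (by positivity) (by linarith : _ ≤ 2 * B) _).trans ?_
        have : 0 ≤ (2 * (2 * D * N q)) ^ (m + 1) := by positivity
        linarith
    have h4 : ((N q : ℝ)) ^ (m + 1) ≤ (m + 1).factorial * ((N q + (m + 1)).choose (m + 1) : ℝ) := by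
      exact_mod_cast pow_le_factorial_mul_choose (N q) (m + 1)
    have h5 : (2 * (2 * D * N q)) ^ (m + 1) = (4 * D) ^ (m + 1) * (N q : ℝ) ^ (m + 1) := by
      rw [← mul_pow]; congr 1; ring
    rw [h5] at h3
    have : 0 ≤ (4 * D) ^ (m + 1) := by positivity
    nlinarith
  have hCint : Integrable (fun q => ((N q + (m + 1)).choose (m + 1) : ℝ)) π ∧
      ∫ q, ((N q + (m + 1)).choose (m + 1) : ℝ) ∂π ≤ ((D + η) / η) ^ (m + 1) := by
    have hmeas : Measurable (fun q => ((N q + (m + 1)).choose (m + 1) : ℝ)) :=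
      (measurable_from_top (f := fun k : ℕ => ((k + (m + 1)).choose (m + 1) : ℝ))).comp hNm
    have hle : ∫⁻ q, ENNReal.ofReal ((N q + (m + 1)).choose (m + 1) : ℝ) ∂π ≤
      ENNReal.ofReal (((D + η) / η) ^ (m + 1)) := by
      simpa only [ENNReal.ofReal_natCast] using h1
    constructor
    · refine ⟨hmeas.aestronglyMeasurable, ?_⟩
      rw [hasFiniteIntegral_iff_ofReal (Filter.Eventually.of_forall fun q => by positivity)]
      exact hle.trans_lt ENNReal.ofReal_lt_top
    · rw [integral_eq_lintegral_of_nonneg_ae (Filter.Eventually.of_forall fun q => by positivity)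
        hmeas.aestronglyMeasurable]
      exact ENNReal.toReal_le_of_le_ofReal (by positivity) hle
  have hbint := (integrable_const (μ := π) ((2 * B) ^ (m + 1))).add
    (hCint.1.const_mul ((4 * D) ^ (m + 1) * (m + 1).factorial))
  have hI : Integrable (fun q => V q ^ (m + 1)) π := by
    refine hbint.mono' (by fun_prop) (Filter.Eventually.of_forall fun q => ?_)
    rw [Real.norm_eq_abs, abs_of_nonneg (by have := hV0 q; positivity)]
    exact hVN q
  refine ⟨hI, (integral_mono hI hbint hVN).trans ?_⟩
  rw [integral_add' (integrable_const _) (hCint.1.const_mul _), integral_const_mul]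
  simp only [integral_const, probReal_univ, one_smul]
  rw [mul_pow (4 * D)]
  have := mul_le_mul_of_nonneg_left hCint.2
    (by positivity : 0 ≤ (4 * D) ^ (m + 1) * ((m + 1).factorial : ℝ))
  linarith

end Drift

/-! ### Arrival measure and stationarity -/

section Prob
open MeasureTheory

lemma exists_arrival (n : ℕ) (A : Fin n → Fin n → ℕ → ℝ≥0∞) (lam sig : Fin n → Fin n → ℝ)
    (amax : ℕ) (hA : ArrivalDist n A lam sig amax) :
    ∃ α : Measure (Fin n → Fin n → ℕ), IsProbabilityMeasure α ∧
      (∀ a, α {a} = jointA n A a) ∧ (∀ᵐ a ∂α, ∀ i j, a i j ≤ amax) ∧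
      (∀ i j, ∫ a, (a i j : ℝ) ∂α = lam i j) ∧
      (∀ i j, ∫ a, ((a i j : ℝ) - lam i j) ^ 2 ∂α = sig i j ^ 2) ∧
      (∀ p p' : Fin n × Fin n, p ≠ p' →
        ∫ a, ((a p.1 p.2 : ℝ) - lam p.1 p.2) * ((a p'.1 p'.2 : ℝ) - lam p'.1 p'.2) ∂α = 0) := by
  obtain ⟨h1, h2, h3, h4⟩ := hA
  set P : Fin n × Fin n → PMF ℕ := fun p =>
    ⟨A p.1 p.2, (ENNReal.summable.hasSum_iff).2 (h1 p.1 p.2)⟩ with hP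
  have hPa : ∀ p k, P p k = A p.1 p.2 k := fun p k => rfl
  set μ : Measure (Fin n × Fin n → ℕ) := Measure.pi (fun p => (P p).toMeasure) with hμ
  have hμp : IsProbabilityMeasure μ := by rw [hμ]; infer_instance
  set C : (Fin n × Fin n → ℕ) → (Fin n → Fin n → ℕ) := fun ω i j => ω (i, j) with hC
  have hCm : Measurable C := Measurable.of_discrete
  have hae : ∀ p, ∀ᵐ k ∂(P p).toMeasure, k ≤ amax := by
    intro p
    rw [ae_iff, PMF.toMeasure_apply_eq_zero_iff _ (MeasurableSet.of_discrete)]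
    rw [Set.disjoint_left]
    intro k hk hk2
    rw [PMF.mem_support_iff, hPa] at hk
    exact hk2 (h2 _ _ _ hk)
  have hmp : ∀ p : Fin n × Fin n, MeasurePreserving (fun ω : Fin n × Fin n → ℕ => ω p) μ
      (P p).toMeasure := fun p => measurePreserving_eval (fun p => (P p).toMeasure) p
  have hint : ∀ p (f : ℕ → ℝ), Integrable f (P p).toMeasure := by
    intro p f
    refine Integrable.of_bound (Measurable.of_discrete.aestronglyMeasurable)
      (∑ k ∈ Finset.range (amax + 1), |f k|) ?_
    filter_upwards [hae p] with k hk
    rw [Real.norm_eq_abs]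
    exact Finset.single_le_sum (f := fun k => |f k|) (fun k _ => abs_nonneg _)
      (Finset.mem_range.2 (by omega))
  have hI : ∀ p (f : ℕ → ℝ), ∫ ω, f (ω p) ∂μ = ∑' k, (A p.1 p.2 k).toReal * f k := by
    intro p f
    have := (hmp p).map_eq
    rw [← integral_map (φ := fun ω : Fin n × Fin n → ℕ => ω p) (hmp p).measurable.aemeasurable
      (Measurable.of_discrete.aestronglyMeasurable), this, PMF.integral_eq_tsum _ _ (hint p f)]
    rfl
  have hmap : ∀ g : (Fin n → Fin n → ℕ) → ℝ, ∫ a, g a ∂(μ.map C) = ∫ ω, g (C ω) ∂μ := fun g =>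
    integral_map hCm.aemeasurable (Measurable.of_discrete.aestronglyMeasurable)
  have hmean : ∀ p : Fin n × Fin n, ∫ ω, ((ω p : ℝ) - lam p.1 p.2) ∂μ = 0 := by
    intro p
    have hi : Integrable (fun ω : Fin n × Fin n → ℕ => (ω p : ℝ)) μ :=
      (hmp p).integrable_comp_of_integrable (g := fun k : ℕ => (k : ℝ)) (hint p _)
    rw [integral_sub hi (integrable_const _)]
    have := hI p (fun k => (k : ℝ))
    rw [this, h3]; simp
  refine ⟨μ.map C, Measure.isProbabilityMeasure_map hCm.aemeasurable, ?_, ?_, ?_, ?_, ?_⟩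
  · intro a
    rw [Measure.map_apply hCm MeasurableSet.of_discrete]
    have : C ⁻¹' {a} = {fun p => a p.1 p.2} := by
      ext ω
      simp only [Set.mem_preimage, Set.mem_singleton_iff, hC]
      constructor
      · intro h; ext p; rw [← h]
      · rintro rfl; rfl
    rw [this, hμ, Measure.pi_singleton, jointA, Fintype.prod_prod_type]
    refine Finset.prod_congr rfl fun i _ => Finset.prod_congr rfl fun j _ => ?_
    rw [PMF.toMeasure_apply_singleton _ _ MeasurableSet.of_discrete]
    exact hPa (i, j) _
  · rw [ae_map_iff hCm.aemeasurable MeasurableSet.of_discrete]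
    have : ∀ᵐ ω ∂μ, ∀ p : Fin n × Fin n, ω p ≤ amax := by
      rw [ae_all_iff]
      intro p
      exact (hmp p).quasiMeasurePreserving.ae (hae p)
    filter_upwards [this] with ω hω i j using hω (i, j)
  · intro i j
    rw [hmap]
    exact (hI (i, j) (fun k => (k : ℝ))).trans (h3 i j)
  · intro i j
    rw [hmap]
    exact (hI (i, j) (fun k => ((k : ℝ) - lam i j) ^ 2)).trans (h4 i j)
  · intro p p' hpp
    rw [hmap]
    have hind : ProbabilityTheory.iIndepFun
        (fun (p : Fin n × Fin n) (ω : Fin n × Fin n → ℕ) => ((ω p : ℝ) - lam p.1 p.2)) μ :=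
      ProbabilityTheory.iIndepFun_pi (μ := fun p => (P p).toMeasure)
        (X := fun p (k : ℕ) => ((k : ℝ) - lam p.1 p.2))
        (fun p => Measurable.of_discrete.aemeasurable)
    have := (hind.indepFun hpp).integral_mul_eq_mul_integral
      (Measurable.of_discrete.aestronglyMeasurable) (Measurable.of_discrete.aestronglyMeasurable)
    simp only [Pi.mul_apply] at this
    simp only [hC]
    rw [this, hmean, zero_mul]

lemma exists_stationary (n : ℕ) (A : Fin n → Fin n → ℕ → ℝ≥0∞)
    (α : Measure (Fin n → Fin n → ℕ)) [IsProbabilityMeasure α] (hα : ∀ a, α {a} = jointA n A a)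
    (sched : (Fin n → Fin n → ℕ) → (Fin n → Fin n → ℕ))
    (pd : (Fin n → Fin n → ℕ) → ℝ≥0∞)
    (hpd : IsInvariant n (kernelMW n A sched) pd) :
    ∃ π : Measure (Fin n → Fin n → ℕ), IsProbabilityMeasure π ∧ (∀ q, π {q} = pd q) ∧
      Measure.map (fun x : (Fin n → Fin n → ℕ) × (Fin n → Fin n → ℕ) =>
        nextQ n x.1 x.2 (sched x.1)) (π.prod α) = π := by
  obtain ⟨h1, h2⟩ := hpd
  set P : PMF (Fin n → Fin n → ℕ) := ⟨pd, (ENNReal.summable.hasSum_iff).2 h1⟩ with hP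
  have hs : ∀ q, P.toMeasure {q} = pd q := fun q =>
    PMF.toMeasure_apply_singleton _ _ MeasurableSet.of_discrete
  refine ⟨P.toMeasure, inferInstance, hs, ?_⟩
  apply Measure.ext_of_singleton
  intro q'
  rw [Measure.map_apply Measurable.of_discrete MeasurableSet.of_discrete,
    Measure.prod_apply MeasurableSet.of_discrete, lintegral_countable', hs, ← h2 q']
  refine tsum_congr fun q => ?_
  rw [hs, mul_comm]
  congr 1
  rw [kernelMW, ← lintegral_indicator_one MeasurableSet.of_discrete, lintegral_countable']
  refine tsum_congr fun a => ?_
  rw [hα, mul_comm]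
  congr 1
  by_cases h : nextQ n q a (sched q) = q'
  · rw [if_pos h]
    exact Set.indicator_of_mem (f := (1 : (Fin n → Fin n → ℕ) → ℝ≥0∞)) h
  · rw [if_neg h]
    exact Set.indicator_of_notMem (f := (1 : (Fin n → Fin n → ℕ) → ℝ≥0∞)) h

lemma etot_eq (n : ℕ) (pd : (Fin n → Fin n → ℕ) → ℝ≥0∞) (π : Measure (Fin n → Fin n → ℕ))
    (hs : ∀ q, π {q} = pd q)
    (hint : Integrable (fun q : Fin n → Fin n → ℕ => ∑ i, ∑ j, (q i j : ℝ)) π) :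
    Etot n pd = ENNReal.ofReal (∫ q, ∑ i, ∑ j, (q i j : ℝ) ∂π) := by
  rw [ofReal_integral_eq_lintegral_ofReal hint (Filter.Eventually.of_forall fun q => by positivity),
    lintegral_countable', Etot]
  refine tsum_congr fun q => ?_
  rw [hs, mul_comm]
  congr 1
  rw [ENNReal.ofReal_sum_of_nonneg (fun i _ => by positivity)]
  refine Finset.sum_congr rfl fun i _ => ?_
  rw [ENNReal.ofReal_sum_of_nonneg (fun i _ => by positivity)]
  simp

end Prob

/-! ### Quadratic form of the projection onto the span of the cone -/

noncomputable def bil (n : ℕ) (x y : Fin n → Fin n → ℝ) : ℝ :=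
  ((∑ i, (∑ j, x i j) * (∑ j, y i j)) + (∑ j, (∑ i, x i j) * (∑ i, y i j))
    - (∑ i, ∑ j, x i j) * (∑ i, ∑ j, y i j) / n) / n

lemma bil_comm (n : ℕ) (x y : Fin n → Fin n → ℝ) : bil n x y = bil n y x := by
  simp only [bil, mul_comm]

lemma bil_add_left (n : ℕ) (x y z : Fin n → Fin n → ℝ) :
    bil n (fun i j => x i j + y i j) z = bil n x z + bil n y z := by
  simp only [bil, Finset.sum_add_distrib, add_mul]
  ring

lemma bil_quad (n : ℕ) (Q X U P : Fin n → Fin n → ℝ) (h : ∀ i j, P i j = Q i j + X i j + U i j) :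
    bil n P P = bil n Q Q + 2 * bil n Q X + bil n X X + 2 * bil n P U - bil n U U := by
  have e1 : P = fun i j => (fun i j => Q i j + X i j) i j + U i j := by
    ext i j; simp [h]
  have e2 : ∀ Z, bil n P Z = bil n Q Z + bil n X Z + bil n U Z := by
    intro Z
    rw [e1, bil_add_left, bil_add_left]
  rw [e2 P, bil_comm n Q P, bil_comm n X P, bil_comm n U P, e2 Q, e2 X, e2 U, bil_comm n X Q,
    bil_comm n U Q, bil_comm n U X]
  ring

/-- the projection -/
noncomputable def prj (n : ℕ) (u : Fin n → Fin n → ℝ) : Fin n → Fin n → ℝ :=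
  fun i j => ((∑ l, u i l) - (∑ k, ∑ l, u k l) / n) / n + (∑ k, u k j) / n

lemma bil_eq_prj (n : ℕ) (z u : Fin n → Fin n → ℝ) :
    bil n z u = ∑ i, ∑ j, z i j * prj n u i j := by
  have h1 : ∑ i, ∑ j, z i j * prj n u i j =
      ((∑ i, ∑ j, z i j * (∑ l, u i l)) + (∑ i, ∑ j, z i j * (∑ k, u k j))
        - (∑ i, ∑ j, z i j * (∑ k, ∑ l, u k l)) / n) / n := by
    simp only [← Finset.sum_add_distrib, ← Finset.sum_sub_distrib, Finset.sum_div]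
    refine Finset.sum_congr rfl fun i _ => Finset.sum_congr rfl fun j _ => ?_
    simp only [prj]
    ring
  rw [h1, bil, Finset.sum_comm (f := fun i j => z i j * (∑ k, u k j))]
  simp only [← Finset.sum_mul]

lemma bil_cone (n : ℕ) (hn : 1 ≤ n) (y u : Fin n → Fin n → ℝ) (w v : Fin n → ℝ)
    (h : ∀ i j, y i j = w i + v j) :
    bil n y u = ∑ i, ∑ j, y i j * u i j := by
  have hn' : (n : ℝ) ≠ 0 := by positivity
  have h1 : ∑ i, ∑ j, y i j * u i j = ∑ i, w i * (∑ j, u i j) + ∑ j, v j * (∑ i, u i j) := by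
    simp only [h, add_mul, Finset.sum_add_distrib, Finset.mul_sum]
    rw [Finset.sum_comm (f := fun i j => v j * u i j)]
  rw [h1, bil]
  have e1 : ∀ i, ∑ j, y i j = n * w i + ∑ j, v j := by
    intro i; simp [h, Finset.sum_add_distrib]
  have e2 : ∀ j, ∑ i, y i j = ∑ i, w i + n * v j := by
    intro i; simp [h, Finset.sum_add_distrib]
  have e3 : ∑ i, ∑ j, y i j = n * ∑ i, w i + n * ∑ j, v j := by
    simp [e1, Finset.sum_add_distrib, Finset.mul_sum]
  rw [e3]
  simp only [e1, e2, add_mul, Finset.sum_add_distrib, ← Finset.mul_sum, mul_assoc]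
  rw [Finset.sum_comm (f := fun i j => u j i)]
  field_simp
  ring

lemma bil_unused (n : ℕ) (hn : 1 ≤ n) (P U : Fin n → Fin n → ℝ)
    (hPU : ∀ i j, P i j * U i j = 0) (hU : ∀ i j, U i j ^ 2 = U i j) :
    |bil n P U| ≤ distK n P * Real.sqrt (∑ i, ∑ j, U i j) := by
  obtain ⟨y, -, -, ⟨w, v, hwv⟩, hd, -⟩ := exists_proj n P
  have hPy : bil n P U = bil n (fun i j => P i j - y i j) U + bil n y U := by
    rw [← bil_add_left]; congr 1; ext i j; ring
  have h2 : bil n P U = ∑ i, ∑ j, (P i j - y i j) * (prj n U i j - U i j) := by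
    rw [hPy, bil_eq_prj, bil_cone n hn y U w v hwv, ← Finset.sum_add_distrib]
    refine Finset.sum_congr rfl fun i _ => ?_
    rw [← Finset.sum_add_distrib]
    refine Finset.sum_congr rfl fun j _ => ?_
    have := hPU i j
    linear_combination this
  have h3 : bil n U U = ∑ i, ∑ j, U i j * prj n U i j := bil_eq_prj n U U
  have h4 : ∑ i, ∑ j, prj n U i j * prj n U i j = ∑ i, ∑ j, prj n U i j * U i j := by
    rw [← bil_eq_prj]
    exact bil_cone n hn (prj n U) U _ _ (fun i j => rfl)
  have h5 : ∑ i, ∑ j, (prj n U i j - U i j) ^ 2 ≤ ∑ i, ∑ j, U i j := by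
    have : ∑ i, ∑ j, (prj n U i j - U i j) ^ 2 = ∑ i, ∑ j, prj n U i j * prj n U i j
        - 2 * ∑ i, ∑ j, prj n U i j * U i j + ∑ i, ∑ j, U i j := by
      simp only [Finset.mul_sum, ← Finset.sum_add_distrib, ← Finset.sum_sub_distrib]
      refine Finset.sum_congr rfl fun i _ => Finset.sum_congr rfl fun j _ => ?_
      linear_combination hU i j
    rw [this, ← h4]
    have : 0 ≤ ∑ i, ∑ j, prj n U i j * prj n U i j :=
      Finset.sum_nonneg fun i _ => Finset.sum_nonneg fun j _ => mul_self_nonneg _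
    linarith
  have hCS : (bil n P U) ^ 2 ≤ distK n P ^ 2 * ∑ i, ∑ j, U i j := by
    rw [h2, hd]
    simp only [← Fintype.sum_prod_type']
    simp only [← Fintype.sum_prod_type'] at h5
    refine (Finset.sum_mul_sq_le_sq_mul_sq _ _ _).trans ?_
    refine mul_le_mul_of_nonneg_left h5 (Finset.sum_nonneg fun _ _ => sq_nonneg _)
  rw [← Real.sqrt_sq (distK_nonneg n P), ← Real.sqrt_mul (sq_nonneg _), ← Real.sqrt_sq_eq_abs]
  exact Real.sqrt_le_sqrt hCS

lemma bil_self_nonneg (n : ℕ) (hn : 1 ≤ n) (U : Fin n → Fin n → ℝ) : 0 ≤ bil n U U := by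
  have h3 : bil n U U = ∑ i, ∑ j, U i j * prj n U i j := bil_eq_prj n U U
  have h4 : ∑ i, ∑ j, prj n U i j * prj n U i j = ∑ i, ∑ j, prj n U i j * U i j := by
    rw [← bil_eq_prj]
    exact bil_cone n hn (prj n U) U _ _ (fun i j => rfl)
  rw [h3]
  simp only [mul_comm (U _ _)]
  rw [← h4]
  exact Finset.sum_nonneg fun i _ => Finset.sum_nonneg fun j _ => mul_self_nonneg _

lemma bil_self_le (n : ℕ) (U : Fin n → Fin n → ℝ) (h0 : ∀ i j, 0 ≤ U i j)
    (hr : ∀ i, ∑ j, U i j ≤ 1) (hc : ∀ j, ∑ i, U i j ≤ 1) :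
    bil n U U ≤ 2 * (∑ i, ∑ j, U i j) / n := by
  rw [bil]
  apply div_le_div_of_nonneg_right _ (Nat.cast_nonneg n)
  have h1 : ∑ i, (∑ j, U i j) * (∑ j, U i j) ≤ ∑ i, ∑ j, U i j :=
    Finset.sum_le_sum fun i _ =>
      mul_le_of_le_one_left (Finset.sum_nonneg fun j _ => h0 i j) (hr i)
  have h2 : ∑ j, (∑ i, U i j) * (∑ i, U i j) ≤ ∑ i, ∑ j, U i j := by
    rw [Finset.sum_comm (f := fun i j => U i j)]
    exact Finset.sum_le_sum fun j _ =>
      mul_le_of_le_one_left (Finset.sum_nonneg fun i _ => h0 i j) (hc j)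
  have h3 : 0 ≤ (∑ i, ∑ j, U i j) * (∑ i, ∑ j, U i j) / n :=
    div_nonneg (mul_self_nonneg _) (Nat.cast_nonneg n)
  linarith

/-! ### Expectations over arrivals -/

section Arr
open MeasureTheory

lemma arr_int (n : ℕ) (α : Measure (Fin n → Fin n → ℕ)) [IsProbabilityMeasure α] (amax : ℕ)
    (hb : ∀ᵐ a ∂α, ∀ i j, a i j ≤ amax) (f : (Fin n → Fin n → ℕ) → ℝ) : Integrable f α := by
  classical
  set S : Finset (Fin n → Fin n → ℕ) :=
    Fintype.piFinset fun _ => Fintype.piFinset fun _ => Finset.range (amax + 1) with hS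
  refine Integrable.of_bound (Measurable.of_discrete.aestronglyMeasurable) (∑ a ∈ S, |f a|) ?_
  filter_upwards [hb] with a ha
  rw [Real.norm_eq_abs]
  refine Finset.single_le_sum (f := fun k => |f k|) (fun k _ => abs_nonneg _) ?_
  simp only [hS, Fintype.mem_piFinset, Finset.mem_range]
  intro i j; have := ha i j; omega

lemma arr_sq (n : ℕ) (α : Measure (Fin n → Fin n → ℕ)) [IsProbabilityMeasure α] (amax : ℕ)
    (lam sig : Fin n → Fin n → ℝ)
    (hb : ∀ᵐ a ∂α, ∀ i j, a i j ≤ amax)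
    (hm : ∀ i j, ∫ a, (a i j : ℝ) ∂α = lam i j)
    (hv : ∀ i j, ∫ a, ((a i j : ℝ) - lam i j) ^ 2 ∂α = sig i j ^ 2)
    (hcov : ∀ p p' : Fin n × Fin n, p ≠ p' →
        ∫ a, ((a p.1 p.2 : ℝ) - lam p.1 p.2) * ((a p'.1 p'.2 : ℝ) - lam p'.1 p'.2) ∂α = 0)
    (S : Finset (Fin n × Fin n)) (δ : ℝ) :
    ∫ a, ((∑ p ∈ S, ((a p.1 p.2 : ℝ) - lam p.1 p.2)) + δ) ^ 2 ∂α
      = ∑ p ∈ S, sig p.1 p.2 ^ 2 + δ ^ 2 := by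
  classical
  have hI := arr_int n α amax hb
  have hz : ∀ p : Fin n × Fin n, ∫ a, ((a p.1 p.2 : ℝ) - lam p.1 p.2) ∂α = 0 := by
    intro p
    rw [integral_sub (hI _) (hI _), hm]; simp
  have e : ∀ a : Fin n → Fin n → ℕ, ((∑ p ∈ S, ((a p.1 p.2 : ℝ) - lam p.1 p.2)) + δ) ^ 2 =
      ∑ p ∈ S, ∑ p' ∈ S, ((a p.1 p.2 : ℝ) - lam p.1 p.2) * ((a p'.1 p'.2 : ℝ) - lam p'.1 p'.2)
      + 2 * δ * (∑ p ∈ S, ((a p.1 p.2 : ℝ) - lam p.1 p.2)) + δ ^ 2 := by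
    intro a
    rw [← Finset.sum_mul_sum]; ring
  simp_rw [e]
  rw [integral_add (hI _) (hI _), integral_add (hI _) (hI _), integral_const_mul,
    integral_finsetSum _ (fun _ _ => hI _), integral_finsetSum _ (fun _ _ => hI _)]
  simp only [hz, Finset.sum_const_zero, mul_zero, add_zero, integral_const, probReal_univ, one_smul]
  congr 1
  refine Finset.sum_congr rfl fun p hp => ?_
  rw [integral_finsetSum _ (fun _ _ => hI _), Finset.sum_eq_single p]
  · rw [← hv]; simp only [sq]
  · intro p' _ hpp; exact hcov p p' hpp.symm
  · intro h; exact absurd hp h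

lemma next_sq (n : ℕ) (α : Measure (Fin n → Fin n → ℕ)) [IsProbabilityMeasure α] (amax : ℕ)
    (lam sig : Fin n → Fin n → ℝ)
    (hb : ∀ᵐ a ∂α, ∀ i j, a i j ≤ amax)
    (hm : ∀ i j, ∫ a, (a i j : ℝ) ∂α = lam i j)
    (hv : ∀ i j, ∫ a, ((a i j : ℝ) - lam i j) ^ 2 ∂α = sig i j ^ 2)
    (hcov : ∀ p p' : Fin n × Fin n, p ≠ p' →
        ∫ a, ((a p.1 p.2 : ℝ) - lam p.1 p.2) * ((a p'.1 p'.2 : ℝ) - lam p'.1 p'.2) ∂α = 0)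
    (q s : Fin n → Fin n → ℕ) (hs : IsPerm n s) (y : Fin n → Fin n → ℝ) (hy : ∀ i j, 0 ≤ y i j) :
    ∫ a, ∑ i, ∑ j, ((nextQ n q a s i j : ℝ) - y i j) ^ 2 ∂α ≤
      ∑ i, ∑ j, ((q i j : ℝ) - y i j) ^ 2
      + 2 * ∑ i, ∑ j, ((q i j : ℝ) - y i j) * (lam i j - s i j)
      + (∑ i, ∑ j, lam i j ^ 2 + ∑ i, ∑ j, sig i j ^ 2 + n) := by
  have hI := arr_int n α amax hb
  have hlam : ∀ i j, 0 ≤ lam i j := fun i j => by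
    rw [← hm]; exact integral_nonneg fun a => by positivity
  have hpt : ∀ i j, ∫ a, ((nextQ n q a s i j : ℝ) - y i j) ^ 2 ∂α ≤
      ((q i j : ℝ) - y i j) ^ 2 + 2 * (((q i j : ℝ) - y i j) * (lam i j - s i j))
      + (lam i j ^ 2 + sig i j ^ 2 + s i j) := by
    intro i j
    have h1 : ∫ a, ((nextQ n q a s i j : ℝ) - y i j) ^ 2 ∂α ≤
      ∫ a, ((∑ p ∈ {(i, j)}, ((a p.1 p.2 : ℝ) - lam p.1 p.2)) +
        ((q i j : ℝ) - y i j + (lam i j - s i j))) ^ 2 ∂α := by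
      refine integral_mono (hI _) (hI _) fun a => ?_
      simp only [Finset.sum_singleton]
      have hy0 := hy i j
      rcases le_total (s i j) (q i j + a i j) with h | h
      · rw [nextQ, Nat.cast_sub h]
        push_cast
        apply le_of_eq; ring
      · rw [nextQ, Nat.sub_eq_zero_of_le h]
        have h' : (q i j : ℝ) + a i j ≤ s i j := by exact_mod_cast h
        push_cast
        nlinarith
    rw [arr_sq n α amax lam sig hb hm hv hcov] at h1
    refine h1.trans ?_
    simp only [Finset.sum_singleton]
    have hs2 : (s i j : ℝ) ^ 2 = s i j := by
      have := hs.1 i j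
      interval_cases (s i j) <;> simp
    have : 0 ≤ lam i j * s i j := mul_nonneg (hlam i j) (by positivity)
    nlinarith
  rw [integral_finsetSum _ (fun _ _ => hI _)]
  simp only [integral_finsetSum _ (fun _ _ => hI _)]
  have hsn : ∑ i, ∑ j, (s i j : ℝ) = n := by
    have : ∀ i, ∑ j, (s i j : ℝ) = 1 := fun i => by exact_mod_cast hs.2.1 i
    simp [this]
  refine (Finset.sum_le_sum fun i _ => Finset.sum_le_sum fun j _ => hpt i j).trans (le_of_eq ?_)
  simp only [Finset.sum_add_distrib, ← Finset.mul_sum, hsn]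

lemma drift_of_sq {Ω : Type*} [MeasurableSpace Ω] (α : Measure Ω) [IsProbabilityMeasure α]
    (f : Ω → ℝ) (hf : Integrable f α) (hf2 : Integrable (fun a => f a ^ 2) α) (v c κ : ℝ)
    (hκ : 0 < κ) (hc : 0 ≤ c) (hv : 4 * c / κ < v)
    (h : ∫ a, f a ^ 2 ∂α ≤ v ^ 2 + c - κ * v) : ∫ a, (f a - v) ∂α ≤ -(κ / 4) := by
  have hv0 : 0 < v := lt_of_le_of_lt (by positivity) hv
  have h1 : ∫ a, (f a - v) ∂α ≤ ∫ a, (f a ^ 2 - v ^ 2) * (1 / (2 * v)) ∂α := by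
    refine integral_mono (hf.sub (integrable_const _))
      ((hf2.sub (integrable_const _)).mul_const _) fun a => ?_
    simp only
    rw [mul_one_div, le_div_iff₀ (by positivity)]
    nlinarith [sq_nonneg (f a - v)]
  rw [integral_mul_const, integral_sub hf2 (integrable_const _)] at h1
  simp only [integral_const, probReal_univ, one_smul] at h1
  refine h1.trans ?_
  rw [mul_one_div, div_le_iff₀ (by positivity)]
  rw [div_lt_iff₀ hκ] at hv
  nlinarith

lemma next_lip (n : ℕ) (q a s : Fin n → Fin n → ℕ) (amax : ℕ) (h1 : 1 ≤ amax)
    (ha : ∀ i j, a i j ≤ amax) (hs : ∀ i j, s i j ≤ 1) :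
    Real.sqrt (∑ i, ∑ j, ((nextQ n q a s i j : ℝ) - q i j) ^ 2) ≤ n * amax := by
  apply Real.sqrt_le_iff.2
  refine ⟨by positivity, ?_⟩
  have : ∀ i j, ((nextQ n q a s i j : ℝ) - q i j) ^ 2 ≤ (amax : ℝ) ^ 2 := by
    intro i j
    rw [sq_le_sq, abs_of_nonneg (a := (amax : ℝ)) (by positivity), abs_le]
    have h2 : nextQ n q a s i j ≤ q i j + amax := by
      have := ha i j; simp only [nextQ]; omega
    have h3 : q i j ≤ nextQ n q a s i j + amax := by
      have := hs i j; simp only [nextQ]; omega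
    have h2' : (nextQ n q a s i j : ℝ) ≤ q i j + amax := by exact_mod_cast h2
    have h3' : (q i j : ℝ) ≤ nextQ n q a s i j + amax := by exact_mod_cast h3
    constructor <;> linarith
  refine (Finset.sum_le_sum fun i _ => Finset.sum_le_sum fun j _ => this i j).trans ?_
  simp; apply le_of_eq; ring

end Arr

/-! ### Drift of the distance to the cone and of the norm -/

lemma inner_bound (n : ℕ) (ν : Fin n → Fin n → ℝ) (hν : memF n ν) (νmin : ℝ)
    (hνmin : ∀ i j, νmin ≤ ν i j) (hpos : 0 < νmin) (ε : ℝ) (hε0 : 0 < ε)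
    (hε : ε * normE n ν ≤ νmin / 2)
    (sched : (Fin n → Fin n → ℕ) → (Fin n → Fin n → ℕ)) (hsched : IsMaxWeight n sched)
    (q : Fin n → Fin n → ℕ) (y : Fin n → Fin n → ℝ)
    (hW : 0 < distK n (toR n q))
    (hwv : ∃ w v : Fin n → ℝ, ∀ i j, y i j = w i + v j)
    (hd : distK n (toR n q) ^ 2 = ∑ i, ∑ j, (toR n q i j - y i j) ^ 2)
    (horth : (∑ i, ∑ j, (toR n q i j - y i j) * y i j) = 0)
    (hrow : ∀ i, ∑ j, (toR n q i j - y i j) ≤ 0) (hcol : ∀ j, ∑ i, (toR n q i j - y i j) ≤ 0) :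
    2 * ∑ i, ∑ j, ((q i j : ℝ) - y i j) * ((1 - ε) * ν i j - sched q i j)
      ≤ - (νmin * distK n (toR n q)) := by
  set W := distK n (toR n q) with hWdef
  simp only [toR] at hd horth hrow hcol
  set z : Fin n → Fin n → ℝ := fun i j => (q i j : ℝ) - y i j with hz
  have hz1 : ∀ i j, z i j = (q i j : ℝ) - y i j := fun i j => rfl
  simp only [← hz1] at hd horth hrow hcol ⊢
  obtain ⟨w, v, hwv⟩ := hwv
  have hs := (hsched q).1
  have hsr : ∀ i, ∑ j, (sched q i j : ℝ) = 1 := fun i => by exact_mod_cast hs.2.1 i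
  have hsc : ∀ j, ∑ i, (sched q i j : ℝ) = 1 := fun j => by exact_mod_cast hs.2.2 j
  have hzW : ∀ i j, -W ≤ z i j := by
    intro i j
    have h1 : z i j ^ 2 ≤ W ^ 2 := by
      rw [hd]
      refine le_trans ?_ (Finset.single_le_sum (f := fun i => ∑ j, z i j ^ 2)
        (fun i _ => Finset.sum_nonneg fun j _ => sq_nonneg _) (Finset.mem_univ i))
      exact Finset.single_le_sum (f := fun j => z i j ^ 2) (fun j _ => sq_nonneg _)
        (Finset.mem_univ j)
    exact (abs_le.1 (abs_le_of_sq_le_sq h1 hW.le)).1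
  have hmw := maxweight_sub n sched hsched q (fun i j => ν i j + νmin / W * z i j) ?_ ?_ ?_
  rotate_left
  · intro i j
    have h1 := hνmin i j
    have h2 : νmin / W * (-W) ≤ νmin / W * z i j :=
      mul_le_mul_of_nonneg_left (hzW i j) (by positivity)
    have h3 : νmin / W * (-W) = -νmin := by field_simp
    linarith
  · intro i
    rw [Finset.sum_add_distrib, hν.2.1, ← Finset.mul_sum]
    have : νmin / W * ∑ j, z i j ≤ 0 := mul_nonpos_of_nonneg_of_nonpos (by positivity) (hrow i)
    linarith
  · intro j
    rw [Finset.sum_add_distrib, hν.2.2, ← Finset.mul_sum]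
    have : νmin / W * ∑ i, z i j ≤ 0 := mul_nonpos_of_nonneg_of_nonpos (by positivity) (hcol j)
    linarith
  have e1 : ∑ i, ∑ j, (q i j : ℝ) * (ν i j + νmin / W * z i j) =
      ∑ i, ∑ j, (q i j : ℝ) * ν i j + νmin / W * (∑ i, ∑ j, z i j ^ 2 + ∑ i, ∑ j, z i j * y i j) := by
    simp only [Finset.mul_sum, ← Finset.sum_add_distrib]
    refine Finset.sum_congr rfl fun i _ => Finset.sum_congr rfl fun j _ => ?_
    rw [hz1]; ring
  rw [e1, horth, ← hd, add_zero] at hmw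
  have e2 : νmin / W * W ^ 2 = νmin * W := by field_simp
  rw [e2] at hmw
  have e3 : ∑ i, ∑ j, y i j * (ν i j - sched q i j) = 0 := by
    have : ∑ i, ∑ j, y i j * (ν i j - sched q i j) =
        ∑ i, w i * (∑ j, ν i j - ∑ j, (sched q i j : ℝ))
        + ∑ j, v j * (∑ i, ν i j - ∑ i, (sched q i j : ℝ)) := by
      simp only [← Finset.sum_sub_distrib, Finset.mul_sum]
      rw [Finset.sum_comm (f := fun j i => v j * (ν i j - (sched q i j : ℝ)))]
      simp only [← Finset.sum_add_distrib]
      refine Finset.sum_congr rfl fun i _ => Finset.sum_congr rfl fun j _ => ?_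
      rw [hwv]; ring
    rw [this]
    simp [hν.2.1, hν.2.2, hsr, hsc]
  have e4 : - (W * normE n ν) ≤ ∑ i, ∑ j, z i j * ν i j := by
    have hCS : (∑ i, ∑ j, z i j * ν i j) ^ 2 ≤ (W * normE n ν) ^ 2 := by
      rw [mul_pow, hd, normE, Real.sq_sqrt
        (Finset.sum_nonneg fun i _ => Finset.sum_nonneg fun j _ => sq_nonneg _)]
      simp only [← Fintype.sum_prod_type']
      exact Finset.sum_mul_sq_le_sq_mul_sq _ _ _
    exact (abs_le.1 (abs_le_of_sq_le_sq hCS (mul_nonneg hW.le (Real.sqrt_nonneg _)))).1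
  have e5 : ∑ i, ∑ j, z i j * ((1 - ε) * ν i j - sched q i j) =
      ∑ i, ∑ j, (q i j : ℝ) * ν i j - ∑ i, ∑ j, (q i j : ℝ) * sched q i j
      - ∑ i, ∑ j, y i j * (ν i j - sched q i j) - ε * ∑ i, ∑ j, z i j * ν i j := by
    simp only [Finset.mul_sum, ← Finset.sum_sub_distrib]
    refine Finset.sum_congr rfl fun i _ => Finset.sum_congr rfl fun j _ => ?_
    rw [hz1]; ring
  rw [e5, e3]
  have e6 := mul_le_mul_of_nonneg_left e4 hε0.le
  have e7 := mul_le_mul_of_nonneg_right hε hW.le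
  nlinarith

lemma inner_norm_bound (n : ℕ) (ν : Fin n → Fin n → ℝ) (hν : memF n ν) (νmin : ℝ)
    (hνmin : ∀ i j, νmin ≤ ν i j) (hpos : 0 < νmin) (ε : ℝ) (hε0 : 0 < ε)
    (sched : (Fin n → Fin n → ℕ) → (Fin n → Fin n → ℕ)) (hsched : IsMaxWeight n sched)
    (q : Fin n → Fin n → ℕ) :
    ∑ i, ∑ j, ((q i j : ℝ) - 0) * ((1 - ε) * ν i j - sched q i j)
      ≤ - (ε * νmin * normE n (toR n q)) := by
  have h1 := maxweight_ds n sched hsched q ν hν.1 hν.2.1 hν.2.2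
  have e5 : ∑ i, ∑ j, ((q i j : ℝ) - 0) * ((1 - ε) * ν i j - sched q i j) =
      ∑ i, ∑ j, (q i j : ℝ) * ν i j - ∑ i, ∑ j, (q i j : ℝ) * sched q i j
      - ε * ∑ i, ∑ j, (q i j : ℝ) * ν i j := by
    simp only [Finset.mul_sum, ← Finset.sum_sub_distrib]
    refine Finset.sum_congr rfl fun i _ => Finset.sum_congr rfl fun j _ => ?_
    ring
  have h2 : νmin * ∑ i, ∑ j, (q i j : ℝ) ≤ ∑ i, ∑ j, (q i j : ℝ) * ν i j := by
    simp only [Finset.mul_sum]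
    refine Finset.sum_le_sum fun i _ => Finset.sum_le_sum fun j _ => ?_
    rw [mul_comm]
    exact mul_le_mul_of_nonneg_left (hνmin i j) (by positivity)
  have h3 : normE n (toR n q) ≤ ∑ i, ∑ j, (q i j : ℝ) := by
    apply Real.sqrt_le_iff.2
    refine ⟨by positivity, ?_⟩
    simp only [toR, ← Fintype.sum_prod_type']
    exact Finset.sum_sq_le_sq_sum_of_nonneg fun p _ => by positivity
  rw [e5]
  have h4 := mul_le_mul_of_nonneg_left (mul_le_mul_of_nonneg_left h3 hpos.le) hε0.le
  have h5 := mul_le_mul_of_nonneg_left h2 hε0.le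
  nlinarith

lemma factorial_le_stirling (r : ℕ) (hr : 1 ≤ r) :
    (r.factorial : ℝ) ≤ Real.sqrt r * Real.exp 1 * (r / Real.exp 1) ^ r := by
  obtain ⟨m, rfl⟩ : ∃ m, r = m + 1 := ⟨r - 1, by omega⟩
  have h := Stirling.stirlingSeq'_antitone (Nat.zero_le m)
  simp only [Function.comp, Nat.succ_eq_add_one, zero_add] at h
  rw [Stirling.stirlingSeq_one, Stirling.stirlingSeq] at h
  have hp : (0 : ℝ) < ((m + 1 : ℕ) : ℝ) := by positivity
  rw [div_le_iff₀ (by positivity)] at h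
  refine h.trans (le_of_eq ?_)
  rw [Real.sqrt_mul (by norm_num)]
  have : Real.sqrt 2 ≠ 0 := by positivity
  field_simp

section Mom
open MeasureTheory

lemma moments (n : ℕ) (hn : 1 ≤ n) (ν : Fin n → Fin n → ℝ) (hν : memF n ν) (νmin : ℝ)
    (hνmin : ∀ i j, νmin ≤ ν i j) (hpos : 0 < νmin) (ε : ℝ) (hε0 : 0 < ε)
    (hε : ε * normE n ν ≤ νmin / 2)
    (sig : Fin n → Fin n → ℝ) (amax : ℕ) (hamax : 1 ≤ amax)
    (sched : (Fin n → Fin n → ℕ) → (Fin n → Fin n → ℕ)) (hsched : IsMaxWeight n sched)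
    (α π : Measure (Fin n → Fin n → ℕ)) [IsProbabilityMeasure α] [IsProbabilityMeasure π]
    (hb : ∀ᵐ a ∂α, ∀ i j, a i j ≤ amax)
    (hm : ∀ i j, ∫ a, (a i j : ℝ) ∂α = (1 - ε) * ν i j)
    (hv : ∀ i j, ∫ a, ((a i j : ℝ) - (1 - ε) * ν i j) ^ 2 ∂α = sig i j ^ 2)
    (hcov : ∀ p p' : Fin n × Fin n, p ≠ p' →
        ∫ a, ((a p.1 p.2 : ℝ) - (1 - ε) * ν p.1 p.2) *
          ((a p'.1 p'.2 : ℝ) - (1 - ε) * ν p'.1 p'.2) ∂α = 0)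
    (hinv : Measure.map (fun x : (Fin n → Fin n → ℕ) × (Fin n → Fin n → ℕ) =>
        nextQ n x.1 x.2 (sched x.1)) (π.prod α) = π)
    (r : ℕ) (hr : 1 ≤ r) (c : ℝ)
    (hc : c = ∑ i, ∑ j, ((1 - ε) * ν i j) ^ 2 + ∑ i, ∑ j, sig i j ^ 2 + n) :
    Integrable (fun q : Fin n → Fin n → ℕ => ∑ i, ∑ j, (q i j : ℝ) ^ 2) π ∧
    Integrable (fun q => distK n (toR n q) ^ r) π ∧
    ∫ q, distK n (toR n q) ^ r ∂π ≤ (2 * (4 * c / νmin)) ^ r +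
      (4 * (n * amax) * ((n * amax + νmin / 4) / (νmin / 4))) ^ r * r.factorial := by
  have hI := arr_int n α amax hb
  have hc0 : 0 ≤ c := by
    rw [hc]
    have h1 : 0 ≤ ∑ i, ∑ j, ((1 - ε) * ν i j) ^ 2 :=
      Finset.sum_nonneg fun i _ => Finset.sum_nonneg fun j _ => sq_nonneg _
    have h2 : 0 ≤ ∑ i, ∑ j, sig i j ^ 2 :=
      Finset.sum_nonneg fun i _ => Finset.sum_nonneg fun j _ => sq_nonneg _
    positivity
  have hD : (0 : ℝ) < n * amax := by positivity
  have hT : Measurable (fun x : (Fin n → Fin n → ℕ) × (Fin n → Fin n → ℕ) =>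
        nextQ n x.1 x.2 (sched x.1)) := Measurable.of_discrete
  constructor
  · have hκ : 0 < 2 * (ε * νmin) := by positivity
    have := (drift_moment π α _ hT hinv (fun q => normE n (toR n q)) Measurable.of_discrete
      (fun q => Real.sqrt_nonneg _) (n * amax) (2 * (ε * νmin) / 4) (4 * c / (2 * (ε * νmin)))
      (by positivity) hD (by positivity) ?_ ?_ 2 (by norm_num)).1
    · refine this.congr (Filter.Eventually.of_forall fun q => ?_)
      simp only [normE, toR]
      rw [Real.sq_sqrt (by positivity)]
    · intro q
      filter_upwards [hb] with a ha
      refine le_trans ?_ (next_lip n q a (sched q) amax hamax ha (hsched q).1.1)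
      have e : ∀ x : Fin n → Fin n → ℝ, normE n x = ‖embE n x‖ := by
        intro x
        rw [EuclideanSpace.norm_eq, Fintype.sum_prod_type]
        simp [embE, normE]
      rw [e, e]
      refine (abs_norm_sub_norm_le _ _).trans ?_
      rw [← Real.sqrt_sq (norm_nonneg (embE n _ - embE n _)), norm_embE_sub_sq]
      rfl
    · intro q hq
      refine drift_of_sq α _ (hI _) (hI _) _ c _ hκ hc0 hq ?_
      have h1 := next_sq n α amax _ sig hb hm hv hcov q (sched q) (hsched q).1 (fun _ _ => 0)
        (fun _ _ => le_rfl)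
      have h2 := inner_norm_bound n ν hν νmin hνmin hpos ε hε0 sched hsched q
      have h3 : ∀ q' : Fin n → Fin n → ℕ, normE n (toR n q') ^ 2 = ∑ i, ∑ j, ((q' i j : ℝ) - 0) ^ 2 := by
        intro q'
        simp only [normE, toR, sub_zero]
        rw [Real.sq_sqrt (by positivity)]
      simp only [h3]
      rw [← hc] at h1
      refine h1.trans ?_
      linarith
  · refine drift_moment π α _ hT hinv (fun q => distK n (toR n q)) Measurable.of_discrete
      (fun q => distK_nonneg _ _) (n * amax) (νmin / 4) (4 * c / νmin)
      (by positivity) hD (by positivity) ?_ ?_ r hr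
    · intro q
      filter_upwards [hb] with a ha
      refine le_trans ?_ (next_lip n q a (sched q) amax hamax ha (hsched q).1.1)
      exact distK_lip _ _ _
    · intro q hq
      refine drift_of_sq α _ (hI _) (hI _) _ c _ hpos hc0 hq ?_
      have hW : 0 < distK n (toR n q) := lt_of_le_of_lt (by positivity) hq
      obtain ⟨y, hyK, hy0, hwv, hd, horth, hrow, hcol⟩ := exists_proj n (toR n q)
      have h1 := next_sq n α amax _ sig hb hm hv hcov q (sched q) (hsched q).1 y hy0
      have h2 := inner_bound n ν hν νmin hνmin hpos ε hε0 hε sched hsched q y hW hwv hd horth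
        hrow hcol
      rw [← hc] at h1
      have h3 : ∫ a, distK n (toR n (nextQ n q a (sched q))) ^ 2 ∂α ≤
          ∫ a, ∑ i, ∑ j, ((nextQ n q a (sched q) i j : ℝ) - y i j) ^ 2 ∂α :=
        integral_mono (hI _) (hI _) fun a => distK_sq_le n _ y hyK
      refine h3.trans (h1.trans ?_)
      rw [hd]
      simp only [toR] at *
      linarith

lemma Mr_bound (n : ℕ) (hn : 1 ≤ n) (νmin : ℝ) (hpos : 0 < νmin) (h1 : νmin ≤ 1)
    (amax : ℕ) (c : ℝ) (hc : 0 ≤ c) (r : ℕ) (hr : 1 ≤ r) (Mr : ℝ)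
    (hMr : Mr = (2 : ℝ) ^ ((1 : ℝ) / r) *
          max (8 * c / νmin)
            ((Real.sqrt r * Real.exp 1) ^ ((1 : ℝ) / r) * 16 * (r / Real.exp 1) *
              (n * amax / νmin) * (n * amax + 1))) :
    0 ≤ Mr ∧ (2 * (4 * c / νmin)) ^ r +
      (4 * (n * amax) * ((n * amax + νmin / 4) / (νmin / 4))) ^ r * r.factorial ≤ Mr ^ r := by
  have hr0 : r ≠ 0 := by omega
  have hroot : ∀ x : ℝ, 0 ≤ x → (x ^ ((1 : ℝ) / r)) ^ r = x := by
    intro x hx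
    rw [one_div, Real.rpow_inv_natCast_pow hx hr0]
  set X := 8 * c / νmin with hX
  set Y := (Real.sqrt r * Real.exp 1) ^ ((1 : ℝ) / r) * 16 * (r / Real.exp 1) *
              (n * amax / νmin) * (n * amax + 1) with hY
  have hX0 : 0 ≤ X := by positivity
  have hY0 : 0 ≤ Y := by positivity
  have hXM : X ^ r ≤ (max X Y) ^ r := pow_le_pow_left₀ hX0 (le_max_left _ _) r
  have hYM : Y ^ r ≤ (max X Y) ^ r := pow_le_pow_left₀ hY0 (le_max_right _ _) r
  refine ⟨by rw [hMr]; positivity, ?_⟩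
  rw [hMr, mul_pow ((2 : ℝ) ^ ((1 : ℝ) / r)) (max X Y), hroot 2 (by norm_num)]
  have e1 : (2 * (4 * c / νmin)) ^ r = X ^ r := by congr 1; rw [hX]; ring
  have e2 : (4 * (n * amax) * ((n * amax + νmin / 4) / (νmin / 4))) ^ r * r.factorial ≤ Y ^ r := by
    have hle : 4 * ((n : ℝ) * amax) * ((n * amax + νmin / 4) / (νmin / 4)) ≤
        16 * (n * amax / νmin) * (n * amax + 1) := by
      have : 4 * ((n : ℝ) * amax) * ((n * amax + νmin / 4) / (νmin / 4)) =
        16 * (n * amax / νmin) * (n * amax + νmin / 4) := by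
        field_simp; ring
      rw [this]
      gcongr
      linarith
    have hf := factorial_le_stirling r hr
    have hYr : Y ^ r = (16 * (n * amax / νmin) * (n * amax + 1)) ^ r *
        (Real.sqrt r * Real.exp 1 * (r / Real.exp 1) ^ r) := by
      have : Y = (Real.sqrt r * Real.exp 1) ^ ((1 : ℝ) / r) *
        ((r / Real.exp 1) * (16 * (n * amax / νmin) * (n * amax + 1))) := by rw [hY]; ring
      rw [this, mul_pow, mul_pow, hroot _ (by positivity)]
      ring
    rw [hYr]
    gcongr
  rw [e1]
  linarith

end Mom

/-! ### Steady-state identity -/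

section Final
open MeasureTheory

/-- unused service -/
noncomputable def unusedU (n : ℕ) (q a s : Fin n → Fin n → ℕ) : Fin n → Fin n → ℝ :=
  fun i j => (nextQ n q a s i j : ℝ) - (q i j + (a i j - s i j))

lemma unused_cases (n : ℕ) (q a s : Fin n → Fin n → ℕ) (hs : ∀ i j, s i j ≤ 1) (i j : Fin n) :
    unusedU n q a s i j = 0 ∨
      (unusedU n q a s i j = 1 ∧ s i j = 1 ∧ nextQ n q a s i j = 0) := by
  simp only [unusedU, nextQ]
  rcases le_or_gt (s i j) (q i j + a i j) with h | h
  · left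
    rw [Nat.cast_sub h]; push_cast; ring
  · right
    have h1 := hs i j
    have hq : q i j = 0 := by omega
    have ha : a i j = 0 := by omega
    have hs1 : s i j = 1 := by omega
    simp [hq, ha, hs1]

lemma unused_nonneg (n : ℕ) (q a s : Fin n → Fin n → ℕ) (hs : ∀ i j, s i j ≤ 1) (i j : Fin n) :
    0 ≤ unusedU n q a s i j := by
  rcases unused_cases n q a s hs i j with h | ⟨h, -, -⟩ <;> rw [h] <;> norm_num

lemma unused_le (n : ℕ) (q a s : Fin n → Fin n → ℕ) (hs : ∀ i j, s i j ≤ 1) (i j : Fin n) :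
    unusedU n q a s i j ≤ s i j := by
  rcases unused_cases n q a s hs i j with h | ⟨h, h', -⟩ <;> rw [h]
  · positivity
  · rw [h']; norm_num

lemma unused_sq (n : ℕ) (q a s : Fin n → Fin n → ℕ) (hs : ∀ i j, s i j ≤ 1) (i j : Fin n) :
    unusedU n q a s i j ^ 2 = unusedU n q a s i j := by
  rcases unused_cases n q a s hs i j with h | ⟨h, -, -⟩ <;> rw [h] <;> norm_num

lemma unused_mul (n : ℕ) (q a s : Fin n → Fin n → ℕ) (hs : ∀ i j, s i j ≤ 1) (i j : Fin n) :
    toR n (nextQ n q a s) i j * unusedU n q a s i j = 0 := by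
  rcases unused_cases n q a s hs i j with h | ⟨h, -, h2⟩ <;> simp [toR, h, *]

lemma unused_row (n : ℕ) (q a s : Fin n → Fin n → ℕ) (hs : IsPerm n s) (i : Fin n) :
    ∑ j, unusedU n q a s i j ≤ 1 := by
  refine (Finset.sum_le_sum fun j _ => unused_le n q a s hs.1 i j).trans (le_of_eq ?_)
  exact_mod_cast hs.2.1 i

lemma unused_col (n : ℕ) (q a s : Fin n → Fin n → ℕ) (hs : IsPerm n s) (j : Fin n) :
    ∑ i, unusedU n q a s i j ≤ 1 := by
  refine (Finset.sum_le_sum fun i _ => unused_le n q a s hs.1 i j).trans (le_of_eq ?_)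
  exact_mod_cast hs.2.2 j

lemma unused_tot (n : ℕ) (q a s : Fin n → Fin n → ℕ) (hs : ∀ i j, s i j ≤ 1) :
    (∑ i, ∑ j, unusedU n q a s i j) = 0 ∨ 1 ≤ ∑ i, ∑ j, unusedU n q a s i j := by
  by_cases h : ∃ i j, unusedU n q a s i j = 1
  · right
    obtain ⟨i, j, h⟩ := h
    calc (1 : ℝ) = unusedU n q a s i j := h.symm
      _ ≤ ∑ j, unusedU n q a s i j :=
        Finset.single_le_sum (f := fun j => unusedU n q a s i j)
          (fun j _ => unused_nonneg n q a s hs i j) (Finset.mem_univ j)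
      _ ≤ _ := Finset.single_le_sum (f := fun i => ∑ j, unusedU n q a s i j)
          (fun i _ => Finset.sum_nonneg fun j _ => unused_nonneg n q a s hs i j)
          (Finset.mem_univ i)
  · left
    push Not at h
    refine Finset.sum_eq_zero fun i _ => Finset.sum_eq_zero fun j _ => ?_
    rcases unused_cases n q a s hs i j with h' | ⟨h', -, -⟩
    · exact h'
    · exact absurd h' (h i j)

lemma arr_quad (n : ℕ) (hn : 1 ≤ n) (α : Measure (Fin n → Fin n → ℕ)) [IsProbabilityMeasure α]
    (amax : ℕ) (ν sig : Fin n → Fin n → ℝ) (hν : memF n ν) (ε : ℝ)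
    (hb : ∀ᵐ a ∂α, ∀ i j, a i j ≤ amax)
    (hm : ∀ i j, ∫ a, (a i j : ℝ) ∂α = (1 - ε) * ν i j)
    (hv : ∀ i j, ∫ a, ((a i j : ℝ) - (1 - ε) * ν i j) ^ 2 ∂α = sig i j ^ 2)
    (hcov : ∀ p p' : Fin n × Fin n, p ≠ p' →
        ∫ a, ((a p.1 p.2 : ℝ) - (1 - ε) * ν p.1 p.2) *
          ((a p'.1 p'.2 : ℝ) - (1 - ε) * ν p'.1 p'.2) ∂α = 0) :
    ∫ a, ((∑ i, ((∑ j, (a i j : ℝ)) - 1) ^ 2) + (∑ j, ((∑ i, (a i j : ℝ)) - 1) ^ 2)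
      - ((∑ i, ∑ j, (a i j : ℝ)) - n) ^ 2 / n) / n ∂α
      = (2 / n - 1 / n ^ 2) * (∑ i, ∑ j, sig i j ^ 2) + ε ^ 2 := by
  have hI := arr_int n α amax hb
  have hn' : (n : ℝ) ≠ 0 := by positivity
  have hsq := arr_sq n α amax (fun i j => (1 - ε) * ν i j) sig hb hm hv hcov
  have h1 : ∀ i, ∫ a, ((∑ j, (a i j : ℝ)) - 1) ^ 2 ∂α = ∑ j, sig i j ^ 2 + ε ^ 2 := by
    intro i
    have := hsq ({i} ×ˢ Finset.univ) (-ε)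
    rw [Finset.sum_product] at this
    simp only [Finset.sum_product, Finset.sum_singleton, Finset.sum_sub_distrib,
      ← Finset.mul_sum, hν.2.1, neg_sq] at this
    rw [← this]
    congr 1; ext a; ring
  have h2 : ∀ j, ∫ a, ((∑ i, (a i j : ℝ)) - 1) ^ 2 ∂α = ∑ i, sig i j ^ 2 + ε ^ 2 := by
    intro j
    have := hsq (Finset.univ ×ˢ {j}) (-ε)
    rw [Finset.sum_product] at this
    simp only [Finset.sum_product, Finset.sum_singleton, Finset.sum_sub_distrib,
      ← Finset.mul_sum, hν.2.2, neg_sq] at this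
    rw [← this]
    congr 1; ext a; ring
  have h3 : ∫ a, ((∑ i, ∑ j, (a i j : ℝ)) - n) ^ 2 ∂α
      = ∑ i, ∑ j, sig i j ^ 2 + (n * ε) ^ 2 := by
    have := hsq (Finset.univ ×ˢ Finset.univ) (-(n * ε))
    rw [Finset.sum_product] at this
    simp only [Finset.sum_product, Finset.sum_sub_distrib,
      ← Finset.mul_sum, hν.2.1, neg_sq] at this
    rw [← this]
    congr 1; ext a; simp; ring
  rw [integral_div, integral_sub (hI _) (hI _), integral_add (hI _) (hI _), integral_div,
    integral_finsetSum _ (fun _ _ => hI _), integral_finsetSum _ (fun _ _ => hI _)]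
  simp only [h1, h2, h3, Finset.sum_add_distrib]
  rw [Finset.sum_comm (f := fun x i => sig i x ^ 2)]
  simp
  field_simp
  ring

lemma steady (n : ℕ) (hn : 1 ≤ n) (ν sig : Fin n → Fin n → ℝ) (hν : memF n ν) (ε : ℝ)
    (amax : ℕ) (sched : (Fin n → Fin n → ℕ) → (Fin n → Fin n → ℕ)) (hs : ∀ q, IsPerm n (sched q))
    (α π : Measure (Fin n → Fin n → ℕ)) [IsProbabilityMeasure α] [IsProbabilityMeasure π]
    (hb : ∀ᵐ a ∂α, ∀ i j, a i j ≤ amax)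
    (hm : ∀ i j, ∫ a, (a i j : ℝ) ∂α = (1 - ε) * ν i j)
    (hv : ∀ i j, ∫ a, ((a i j : ℝ) - (1 - ε) * ν i j) ^ 2 ∂α = sig i j ^ 2)
    (hcov : ∀ p p' : Fin n × Fin n, p ≠ p' →
        ∫ a, ((a p.1 p.2 : ℝ) - (1 - ε) * ν p.1 p.2) *
          ((a p'.1 p'.2 : ℝ) - (1 - ε) * ν p'.1 p'.2) ∂α = 0)
    (hinv : Measure.map (fun x : (Fin n → Fin n → ℕ) × (Fin n → Fin n → ℕ) =>
      nextQ n x.1 x.2 (sched x.1)) (π.prod α) = π)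
    (hq2 : Integrable (fun q : Fin n → Fin n → ℕ => ∑ i, ∑ j, (q i j : ℝ) ^ 2) π) :
    Integrable (fun q : Fin n → Fin n → ℕ => ∑ i, ∑ j, (q i j : ℝ)) π ∧
    Integrable (fun x : (Fin n → Fin n → ℕ) × (Fin n → Fin n → ℕ) =>
      ∑ i, ∑ j, unusedU n x.1 x.2 (sched x.1) i j) (π.prod α) ∧
    ∫ x, ∑ i, ∑ j, unusedU n x.1 x.2 (sched x.1) i j ∂(π.prod α) = n * ε ∧
    Integrable (fun x : (Fin n → Fin n → ℕ) × (Fin n → Fin n → ℕ) =>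
      bil n (toR n (nextQ n x.1 x.2 (sched x.1))) (unusedU n x.1 x.2 (sched x.1))) (π.prod α) ∧
    Integrable (fun x : (Fin n → Fin n → ℕ) × (Fin n → Fin n → ℕ) =>
      bil n (unusedU n x.1 x.2 (sched x.1)) (unusedU n x.1 x.2 (sched x.1))) (π.prod α) ∧
    2 * ∫ x, bil n (toR n (nextQ n x.1 x.2 (sched x.1))) (unusedU n x.1 x.2 (sched x.1)) ∂(π.prod α)
      - ∫ x, bil n (unusedU n x.1 x.2 (sched x.1)) (unusedU n x.1 x.2 (sched x.1)) ∂(π.prod α)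
      = 2 * ε * (∫ q, ∑ i, ∑ j, (q i j : ℝ) ∂π) / n
        - ((2 / n - 1 / n ^ 2) * (∑ i, ∑ j, sig i j ^ 2) + ε ^ 2) := by
  have hI := arr_int n α amax hb
  have hn' : (n : ℝ) ≠ 0 := by positivity
  have hn0 : (0 : ℝ) < n := by positivity
  -- basic integrability
  have hL2 : ∀ i j, MemLp (fun q : Fin n → Fin n → ℕ => (q i j : ℝ)) 2 π := by
    intro i j
    rw [memLp_two_iff_integrable_sq Measurable.of_discrete.aestronglyMeasurable]
    refine hq2.mono' Measurable.of_discrete.aestronglyMeasurable (Filter.Eventually.of_forall ?_)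
    intro q
    rw [Real.norm_eq_abs, abs_of_nonneg (sq_nonneg _)]
    calc (q i j : ℝ) ^ 2 ≤ ∑ j, (q i j : ℝ) ^ 2 :=
        Finset.single_le_sum (f := fun j => (q i j : ℝ) ^ 2)
          (fun j _ => sq_nonneg _) (Finset.mem_univ j)
      _ ≤ _ := Finset.single_le_sum (f := fun i => ∑ j, (q i j : ℝ) ^ 2)
          (fun i _ => Finset.sum_nonneg fun j _ => sq_nonneg _) (Finset.mem_univ i)
  have hrow : ∀ i, MemLp (fun q : Fin n → Fin n → ℕ => ∑ j, (q i j : ℝ)) 2 π := fun i =>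
    memLp_finsetSum _ fun j _ => hL2 i j
  have hcol : ∀ j, MemLp (fun q : Fin n → Fin n → ℕ => ∑ i, (q i j : ℝ)) 2 π := fun j =>
    memLp_finsetSum _ fun i _ => hL2 i j
  have htot : MemLp (fun q : Fin n → Fin n → ℕ => ∑ i, ∑ j, (q i j : ℝ)) 2 π :=
    memLp_finsetSum _ fun i _ => hrow i
  have hrowI := fun i => (hrow i).integrable (by norm_num)
  have hcolI := fun i => (hcol i).integrable (by norm_num)
  have htotI := htot.integrable (by norm_num)
  have hV : Integrable (fun q : Fin n → Fin n → ℕ => bil n (toR n q) (toR n q)) π := by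
    simp only [bil, toR]
    refine Integrable.div_const (Integrable.sub (Integrable.add ?_ ?_) (Integrable.div_const ?_ _)) _
    · exact integrable_finsetSum _ fun i _ => (hrow i).integrable_mul (hrow i)
    · exact integrable_finsetSum _ fun i _ => (hcol i).integrable_mul (hcol i)
    · exact htot.integrable_mul htot
  have hnI : ∀ f : (Fin n → Fin n → ℕ) → ℝ, Integrable f π →
      Integrable (fun x : (Fin n → Fin n → ℕ) × (Fin n → Fin n → ℕ) =>
        f (nextQ n x.1 x.2 (sched x.1))) (π.prod α) := by
    intro f hf
    rw [← hinv] at hf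
    exact (integrable_map_measure Measurable.of_discrete.aestronglyMeasurable
      Measurable.of_discrete.aemeasurable).1 hf
  have hnE : ∀ f : (Fin n → Fin n → ℕ) → ℝ,
      ∫ x, f (nextQ n x.1 x.2 (sched x.1)) ∂(π.prod α) = ∫ q, f q ∂π := by
    intro f
    conv_rhs => rw [← hinv]
    rw [integral_map Measurable.of_discrete.aemeasurable
      Measurable.of_discrete.aestronglyMeasurable]
  have hfst : ∀ f : (Fin n → Fin n → ℕ) → ℝ, Integrable f π →
      Integrable (fun x : (Fin n → Fin n → ℕ) × (Fin n → Fin n → ℕ) => f x.1) (π.prod α) :=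
    fun f hf => hf.comp_fst α
  have hsnd : ∀ f : (Fin n → Fin n → ℕ) → ℝ,
      Integrable (fun x : (Fin n → Fin n → ℕ) × (Fin n → Fin n → ℕ) => f x.2) (π.prod α) :=
    fun f => (hI f).comp_snd π
  have hfstE : ∀ f : (Fin n → Fin n → ℕ) → ℝ, ∫ x, f x.1 ∂(π.prod α) = ∫ q, f q ∂π := by
    intro f; rw [integral_fun_fst]; simp
  have hsndE : ∀ f : (Fin n → Fin n → ℕ) → ℝ, ∫ x, f x.2 ∂(π.prod α) = ∫ q, f q ∂α := by
    intro f; rw [integral_fun_snd]; simp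
  have hmean1 : ∀ i, ∫ a, ((∑ j, (a i j : ℝ)) - 1) ∂α = -ε := by
    intro i
    rw [integral_sub (hI _) (hI _), integral_finsetSum _ (fun _ _ => hI _)]
    simp [hm, ← Finset.mul_sum, hν.2.1]
  have hmean2 : ∀ j, ∫ a, ((∑ i, (a i j : ℝ)) - 1) ∂α = -ε := by
    intro j
    rw [integral_sub (hI _) (hI _), integral_finsetSum _ (fun _ _ => hI _)]
    simp [hm, ← Finset.mul_sum, hν.2.2]
  have hmean3 : ∫ a, ((∑ i, ∑ j, (a i j : ℝ)) - n) ∂α = -(n * ε) := by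
    rw [integral_sub (hI _) (hI _), integral_finsetSum _ (fun _ _ => hI _)]
    simp only [integral_finsetSum _ (fun _ _ => hI _)]
    simp [hm, ← Finset.mul_sum, hν.2.1]
  have hsr : ∀ q i, ∑ j, (sched q i j : ℝ) = 1 := fun q i => by exact_mod_cast (hs q).2.1 i
  have hsc : ∀ q j, ∑ i, (sched q i j : ℝ) = 1 := fun q j => by exact_mod_cast (hs q).2.2 j
  -- total unused service
  have htU : ∀ x : (Fin n → Fin n → ℕ) × (Fin n → Fin n → ℕ),
      ∑ i, ∑ j, unusedU n x.1 x.2 (sched x.1) i j =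
      (∑ i, ∑ j, (nextQ n x.1 x.2 (sched x.1) i j : ℝ)) - (∑ i, ∑ j, (x.1 i j : ℝ))
        - ((∑ i, ∑ j, (x.2 i j : ℝ)) - n) := by
    intro x
    simp only [unusedU, Finset.sum_sub_distrib, Finset.sum_add_distrib, hsr]
    simp
    ring
  have i1 := hnI _ htotI
  have i2 := hfst _ htotI
  have i3 := hsnd (fun a => (∑ i, ∑ j, (a i j : ℝ)) - n)
  have hUI : Integrable (fun x : (Fin n → Fin n → ℕ) × (Fin n → Fin n → ℕ) =>
      ∑ i, ∑ j, unusedU n x.1 x.2 (sched x.1) i j) (π.prod α) := by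
    simp only [htU]
    exact (i1.sub i2).sub i3
  have hUE : ∫ x, ∑ i, ∑ j, unusedU n x.1 x.2 (sched x.1) i j ∂(π.prod α) = n * ε := by
    simp only [htU]
    rw [integral_sub (i1.sub' i2) i3, integral_sub i1 i2,
      hnE (fun q => ∑ i, ∑ j, (q i j : ℝ)), hfstE (fun q => ∑ i, ∑ j, (q i j : ℝ)),
      hsndE (fun a => (∑ i, ∑ j, (a i j : ℝ)) - n), hmean3]
    ring
  -- bil U U
  have hZI : Integrable (fun x : (Fin n → Fin n → ℕ) × (Fin n → Fin n → ℕ) =>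
      bil n (unusedU n x.1 x.2 (sched x.1)) (unusedU n x.1 x.2 (sched x.1))) (π.prod α) := by
    refine ((hUI.const_mul 2).div_const (n : ℝ)).mono' Measurable.of_discrete.aestronglyMeasurable
      (Filter.Eventually.of_forall fun x => ?_)
    rw [Real.norm_eq_abs, abs_of_nonneg (bil_self_nonneg n hn _)]
    exact bil_self_le n _ (unused_nonneg n _ _ _ (hs x.1).1) (unused_row n _ _ _ (hs x.1))
      (unused_col n _ _ _ (hs x.1))
  -- cross term
  let h : (Fin n → Fin n → ℕ) × (Fin n → Fin n → ℕ) → ℝ := fun x =>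
    ((∑ i, (∑ j, (x.1 i j : ℝ)) * ((∑ j, (x.2 i j : ℝ)) - 1))
      + (∑ j, (∑ i, (x.1 i j : ℝ)) * ((∑ i, (x.2 i j : ℝ)) - 1))
      - (∑ i, ∑ j, (x.1 i j : ℝ)) * ((∑ i, ∑ j, (x.2 i j : ℝ)) - n) / n) / n
  let g : (Fin n → Fin n → ℕ) → ℝ := fun a =>
    ((∑ i, ((∑ j, (a i j : ℝ)) - 1) ^ 2) + (∑ j, ((∑ i, (a i j : ℝ)) - 1) ^ 2)
      - ((∑ i, ∑ j, (a i j : ℝ)) - n) ^ 2 / n) / n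
  have c1 : ∀ i, Integrable (fun x : (Fin n → Fin n → ℕ) × (Fin n → Fin n → ℕ) =>
      (∑ j, (x.1 i j : ℝ)) * ((∑ j, (x.2 i j : ℝ)) - 1)) (π.prod α) := fun i =>
    (hrowI i).mul_prod (hI (fun a => (∑ j, (a i j : ℝ)) - 1))
  have c2 : ∀ j, Integrable (fun x : (Fin n → Fin n → ℕ) × (Fin n → Fin n → ℕ) =>
      (∑ i, (x.1 i j : ℝ)) * ((∑ i, (x.2 i j : ℝ)) - 1)) (π.prod α) := fun j =>
    (hcolI j).mul_prod (hI (fun a => (∑ i, (a i j : ℝ)) - 1))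
  have c3 : Integrable (fun x : (Fin n → Fin n → ℕ) × (Fin n → Fin n → ℕ) =>
      (∑ i, ∑ j, (x.1 i j : ℝ)) * ((∑ i, ∑ j, (x.2 i j : ℝ)) - n)) (π.prod α) :=
    htotI.mul_prod (hI (fun a => (∑ i, ∑ j, (a i j : ℝ)) - n))
  have c1s := integrable_finsetSum Finset.univ (fun i _ => c1 i)
  have c2s := integrable_finsetSum Finset.univ (fun j _ => c2 j)
  have hhI : Integrable h (π.prod α) := ((c1s.add c2s).sub (c3.div_const _)).div_const _
  have hhE : ∫ x, h x ∂(π.prod α) = -ε * (∫ q, ∑ i, ∑ j, (q i j : ℝ) ∂π) / n := by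
    simp only [h]
    rw [integral_div, integral_sub (c1s.fun_add c2s) (c3.div_const _), integral_add c1s c2s,
      integral_div, integral_finsetSum _ (fun i _ => c1 i), integral_finsetSum _ (fun i _ => c2 i)]
    have d1 : ∀ i, ∫ x : (Fin n → Fin n → ℕ) × (Fin n → Fin n → ℕ),
        (∑ j, (x.1 i j : ℝ)) * ((∑ j, (x.2 i j : ℝ)) - 1) ∂(π.prod α)
        = (∫ q, ∑ j, (q i j : ℝ) ∂π) * -ε := by
      intro i
      rw [integral_prod_mul (fun q : Fin n → Fin n → ℕ => ∑ j, (q i j : ℝ))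
        (fun a : Fin n → Fin n → ℕ => (∑ j, (a i j : ℝ)) - 1), hmean1]
    have d2 : ∀ j, ∫ x : (Fin n → Fin n → ℕ) × (Fin n → Fin n → ℕ),
        (∑ i, (x.1 i j : ℝ)) * ((∑ i, (x.2 i j : ℝ)) - 1) ∂(π.prod α)
        = (∫ q, ∑ i, (q i j : ℝ) ∂π) * -ε := by
      intro j
      rw [integral_prod_mul (fun q : Fin n → Fin n → ℕ => ∑ i, (q i j : ℝ))
        (fun a : Fin n → Fin n → ℕ => (∑ i, (a i j : ℝ)) - 1), hmean2]
    have d3 : ∫ x : (Fin n → Fin n → ℕ) × (Fin n → Fin n → ℕ),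
        (∑ i, ∑ j, (x.1 i j : ℝ)) * ((∑ i, ∑ j, (x.2 i j : ℝ)) - n) ∂(π.prod α)
        = (∫ q, ∑ i, ∑ j, (q i j : ℝ) ∂π) * -(n * ε) := by
      rw [integral_prod_mul (fun q : Fin n → Fin n → ℕ => ∑ i, ∑ j, (q i j : ℝ))
        (fun a : Fin n → Fin n → ℕ => (∑ i, ∑ j, (a i j : ℝ)) - n), hmean3]
    have e1 : ∑ i, ∫ q : Fin n → Fin n → ℕ, ∑ j, (q i j : ℝ) ∂π
        = ∫ q, ∑ i, ∑ j, (q i j : ℝ) ∂π := by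
      rw [integral_finsetSum _ (fun i _ => hrowI i)]
    have e2 : ∑ j, ∫ q : Fin n → Fin n → ℕ, ∑ i, (q i j : ℝ) ∂π
        = ∫ q, ∑ i, ∑ j, (q i j : ℝ) ∂π := by
      rw [← integral_finsetSum _ (fun i _ => hcolI i)]
      congr 1; ext q; rw [Finset.sum_comm]
    simp only [d1, d2, d3, ← Finset.sum_mul, e1, e2]
    field_simp
    ring
  have hgE : ∫ x : (Fin n → Fin n → ℕ) × (Fin n → Fin n → ℕ), g x.2 ∂(π.prod α) =
      (2 / n - 1 / n ^ 2) * (∑ i, ∑ j, sig i j ^ 2) + ε ^ 2 := by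
    rw [hsndE g]
    exact arr_quad n hn α amax ν sig hν ε hb hm hv hcov
  -- pointwise identity
  have hpt : ∀ x : (Fin n → Fin n → ℕ) × (Fin n → Fin n → ℕ),
      2 * bil n (toR n (nextQ n x.1 x.2 (sched x.1))) (unusedU n x.1 x.2 (sched x.1)) =
      bil n (toR n (nextQ n x.1 x.2 (sched x.1))) (toR n (nextQ n x.1 x.2 (sched x.1)))
      - bil n (toR n x.1) (toR n x.1) - 2 * h x - g x.2
      + bil n (unusedU n x.1 x.2 (sched x.1)) (unusedU n x.1 x.2 (sched x.1)) := by
    intro x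
    have hq := bil_quad n (toR n x.1) (fun i j => (x.2 i j : ℝ) - sched x.1 i j)
      (unusedU n x.1 x.2 (sched x.1)) (toR n (nextQ n x.1 x.2 (sched x.1)))
      (fun i j => by simp only [unusedU, toR]; ring)
    have hh : bil n (toR n x.1) (fun i j => (x.2 i j : ℝ) - sched x.1 i j) = h x := by
      simp only [bil, h, toR, Finset.sum_sub_distrib, hsr, hsc]
      simp
    have hg : bil n (fun i j => (x.2 i j : ℝ) - sched x.1 i j)
        (fun i j => (x.2 i j : ℝ) - sched x.1 i j) = g x.2 := by
      simp only [bil, g, Finset.sum_sub_distrib, hsr, hsc, sq]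
      simp
    rw [hh, hg] at hq
    linarith
  have v1 := hnI _ hV
  have v2 := hfst _ hV
  have v3 := hhI.const_mul 2
  have v4 := hsnd g
  have hR : Integrable (fun x : (Fin n → Fin n → ℕ) × (Fin n → Fin n → ℕ) =>
      2 * bil n (toR n (nextQ n x.1 x.2 (sched x.1))) (unusedU n x.1 x.2 (sched x.1)))
      (π.prod α) := by
    simp only [hpt]
    exact (((v1.sub v2).sub v3).sub v4).add hZI
  refine ⟨htotI, hUI, hUE, ?_, hZI, ?_⟩
  · have := hR.const_mul (1 / 2)
    refine this.congr (Filter.Eventually.of_forall fun x => ?_)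
    simp only; ring
  · rw [← integral_const_mul]
    simp only [hpt]
    rw [integral_add (((v1.sub' v2).sub' v3).sub' v4) hZI,
      integral_sub ((v1.sub' v2).sub' v3) v4, integral_sub (v1.sub' v2) v3, integral_sub v1 v2, integral_const_mul, hhE, hgE,
      hnE (fun q => bil n (toR n q) (toR n q)), hfstE (fun q => bil n (toR n q) (toR n q))]
    ring

end Final

section Holder
open MeasureTheory

lemma holder_bound {Ω : Type*} [MeasurableSpace Ω] (μ : Measure Ω) (r : ℕ) (hr : 2 ≤ r)
    (D t W : Ω → ℝ) (hDm : AEStronglyMeasurable D μ) (htm : AEStronglyMeasurable t μ)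
    (hD0 : ∀ x, 0 ≤ D x) (ht : ∀ x, t x = 0 ∨ 1 ≤ t x) (hW : ∀ x, |W x| ≤ D x * Real.sqrt (t x))
    (hWI : Integrable W μ) (hDI : Integrable (fun x => D x ^ r) μ) (htI : Integrable t μ)
    (M : ℝ) (hM : 0 ≤ M) (hDM : ∫ x, D x ^ r ∂μ ≤ M ^ r) :
    |∫ x, W x ∂μ| ≤ M * (∫ x, t x ∂μ) ^ (1 - 1 / (r : ℝ)) := by
  have hr0 : r ≠ 0 := by omega
  have hr1 : (1 : ℝ) < r := by exact_mod_cast (by omega : 1 < r)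
  have hr2 : (2 : ℝ) ≤ r := by exact_mod_cast hr
  have hpq : (r : ℝ).HolderConjugate (Real.conjExponent r) := Real.HolderConjugate.conjExponent hr1
  set p' := Real.conjExponent (r : ℝ) with hp'
  have hp0 : 0 < p' := hpq.symm.pos
  have hinv : p'⁻¹ = 1 - 1 / (r : ℝ) := by
    have := hpq.inv_add_inv_eq_one
    rw [one_div]; linarith
  have ht0 : ∀ x, 0 ≤ t x := fun x => by rcases ht x with h | h <;> linarith
  have hhalf : (1 : ℝ) / 2 ≤ p'⁻¹ := by
    rw [hinv]
    have : 1 / (r : ℝ) ≤ 1 / 2 := one_div_le_one_div_of_le (by norm_num) hr2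
    linarith
  have hsq : ∀ x, Real.sqrt (t x) ≤ t x ^ p'⁻¹ := by
    intro x
    rw [Real.sqrt_eq_rpow]
    rcases ht x with h | h
    · rw [h, Real.zero_rpow (by norm_num), Real.zero_rpow (by positivity)]
    · exact Real.rpow_le_rpow_of_exponent_le h hhalf
  have hgm : AEStronglyMeasurable (fun x => t x ^ p'⁻¹) μ :=
    (htm.aemeasurable.pow_const _).aestronglyMeasurable
  have hgp : ∀ x, (t x ^ p'⁻¹) ^ p' = t x := fun x => by
    rw [← Real.rpow_mul (ht0 x), inv_mul_cancel₀ hp0.ne', Real.rpow_one]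
  have hDL : MemLp D (ENNReal.ofReal r) μ := by
    rw [← integrable_norm_rpow_iff hDm (by simp; omega) (by simp)]
    refine hDI.congr (Filter.Eventually.of_forall fun x => ?_)
    simp [abs_of_nonneg (hD0 x)]
  have hgL : MemLp (fun x => t x ^ p'⁻¹) (ENNReal.ofReal p') μ := by
    rw [← integrable_norm_rpow_iff hgm (by simpa using hp0) (by simp)]
    refine htI.congr (Filter.Eventually.of_forall fun x => ?_)
    simp only [ENNReal.toReal_ofReal hp0.le, Real.norm_eq_abs,
      abs_of_nonneg (Real.rpow_nonneg (ht0 x) _), hgp]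
  have hH := integral_mul_le_Lp_mul_Lq_of_nonneg hpq
    (Filter.Eventually.of_forall fun x => hD0 x)
    (Filter.Eventually.of_forall fun x => Real.rpow_nonneg (ht0 x) _) hDL hgL
  simp only [hgp, Real.rpow_natCast] at hH
  have hprod : Integrable (fun x => D x * t x ^ p'⁻¹) μ := by
    have : ENNReal.HolderTriple (ENNReal.ofReal r) (ENNReal.ofReal p') 1 := by
      have := hpq.ennrealOfReal
      exact this
    exact MemLp.integrable_mul hDL hgL
  calc |∫ x, W x ∂μ| ≤ ∫ x, |W x| ∂μ := abs_integral_le_integral_abs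
    _ ≤ ∫ x, D x * t x ^ p'⁻¹ ∂μ := integral_mono hWI.abs hprod fun x =>
        (hW x).trans (mul_le_mul_of_nonneg_left (hsq x) (hD0 x))
    _ ≤ _ := hH
    _ ≤ M * (∫ x, t x ∂μ) ^ (1 - 1 / (r : ℝ)) := by
      rw [← hinv, one_div p']
      refine mul_le_mul_of_nonneg_right ?_ (Real.rpow_nonneg (integral_nonneg ht0) _)
      calc (∫ x, D x ^ r ∂μ) ^ (1 / (r : ℝ)) ≤ (M ^ r) ^ (1 / (r : ℝ)) :=
            Real.rpow_le_rpow (integral_nonneg fun x => pow_nonneg (hD0 x) r) hDM (by positivity)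
        _ = M := by rw [one_div, Real.pow_rpow_inv_natCast hM hr0]

end Holder

lemma final_arith (n S ε E W Z R M : ℝ) (hn : 1 ≤ n) (hε : 0 < ε) (hR : 0 ≤ R)
    (hM : 0 ≤ M)
    (h : 2 * W - Z = 2 * ε * E / n - ((2 / n - 1 / n ^ 2) * S + ε ^ 2))
    (hZ0 : 0 ≤ Z) (hZ : Z ≤ 2 * ε) (hW : |W| ≤ ε / n * (R * M)) :
    (1 - 1 / (2 * n)) * S / ε - (-(n * ε) / 2 + n + 3 * R * M) ≤ E ∧
    E ≤ (1 - 1 / (2 * n)) * S / ε + (n * (1 + ε) / 2 + 2 * R * M) := by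
  have hn0 : 0 < n := by linarith
  have hE : E = (1 - 1 / (2 * n)) * S / ε + n * ε / 2 + n / ε * W - n / (2 * ε) * Z := by
    have : E = n / (2 * ε) * (2 * W - Z + ((2 / n - 1 / n ^ 2) * S + ε ^ 2)) := by
      rw [h]; field_simp; ring
    rw [this]; field_simp; ring
  have hRM : 0 ≤ R * M := mul_nonneg hR hM
  obtain ⟨h1, h2⟩ := abs_le.1 hW
  have hc : 0 < n / ε := by positivity
  have e : n / ε * (ε / n * (R * M)) = R * M := by field_simp
  have w1 : n / ε * W ≤ R * M := by
    rw [← e]; exact mul_le_mul_of_nonneg_left h2 hc.le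
  have w2 : -(R * M) ≤ n / ε * W := by
    rw [← e, ← mul_neg]; exact mul_le_mul_of_nonneg_left h1 hc.le
  have z1 : n / (2 * ε) * Z ≤ n := by
    have : n / (2 * ε) * Z ≤ n / (2 * ε) * (2 * ε) :=
      mul_le_mul_of_nonneg_left hZ (by positivity)
    rwa [div_mul_cancel₀ _ (by positivity)] at this
  have z0 : 0 ≤ n / (2 * ε) * Z := by positivity
  have hne : 0 < n * ε := by positivity
  constructor <;> nlinarith

/-- Theorem 5.2, fixed-ε version: two-sided steady-state bound on the
expected total queue length under MaxWeight. -/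
theorem maxweight_two_sided_bound
    (n : ℕ) (hn : 1 ≤ n)
    (ν : Fin n → Fin n → ℝ) (hν : memF n ν)
    (νmin : ℝ) (hνmin : IsLeast {x : ℝ | ∃ i j : Fin n, ν i j = x} νmin)
    (hνminpos : 0 < νmin)
    (ε : ℝ) (hε0 : 0 < ε) (hε : ε ≤ νmin / (2 * normE n ν))
    (sig : Fin n → Fin n → ℝ) (amax : ℕ) (hamax : 1 ≤ amax)
    (A : Fin n → Fin n → ℕ → ℝ≥0∞)
    (hA : ArrivalDist n A (fun i j => (1 - ε) * ν i j) sig amax)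
    (sched : (Fin n → Fin n → ℕ) → (Fin n → Fin n → ℕ))
    (hsched : IsMaxWeight n sched)
    (pd : (Fin n → Fin n → ℕ) → ℝ≥0∞)
    (hpd : IsInvariant n (kernelMW n A sched) pd)
    (r : ℕ) (hr : 2 ≤ r)
    (Mr B1 B2 : ℝ)
    (hMr : Mr = (2 : ℝ) ^ ((1 : ℝ) / r) *
          max (8 * ((∑ i, ∑ j, ((1 - ε) * ν i j) ^ 2) + (∑ i, ∑ j, (sig i j) ^ 2) + n) / νmin)
            ((Real.sqrt r * Real.exp 1) ^ ((1 : ℝ) / r) * 16 * (r / Real.exp 1) *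
              (n * amax / νmin) * (n * amax + 1)))
    (hB1 : B1 = -(n * ε) / 2 + n +
      3 * (n : ℝ) ^ ((2 : ℝ) - 1 / r) * ε ^ (-(1 : ℝ) / r) * Mr)
    (hB2 : B2 = n * (1 + ε) / 2 +
      2 * (n : ℝ) ^ ((2 : ℝ) - 1 / r) * ε ^ (-(1 : ℝ) / r) * Mr) :
    ENNReal.ofReal ((1 - 1 / (2 * n)) * (∑ i, ∑ j, (sig i j) ^ 2) / ε - B1) ≤ Etot n pd ∧
    Etot n pd ≤ ENNReal.ofReal ((1 - 1 / (2 * n)) * (∑ i, ∑ j, (sig i j) ^ 2) / ε + B2) := by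
  obtain ⟨α, hα, hαs, hb, hm, hv, hcov⟩ :=
    exists_arrival n A (fun i j => (1 - ε) * ν i j) sig amax hA
  obtain ⟨π, hπ, hπs, hinv⟩ := exists_stationary n A α hαs sched pd hpd
  have hle : ∀ i j, νmin ≤ ν i j := fun i j => hνmin.2 ⟨i, j, rfl⟩
  have hn0 : (0 : ℝ) < n := by positivity
  have hn1 : (1 : ℝ) ≤ n := by exact_mod_cast hn
  let i0 : Fin n := ⟨0, hn⟩
  have hν1 : νmin ≤ 1 := by
    refine (hle i0 i0).trans ?_
    rw [← hν.2.1 i0]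
    exact Finset.single_le_sum (f := fun j => ν i0 j) (fun j _ => hν.1 i0 j) (Finset.mem_univ i0)
  have hnorm : 0 < normE n ν := by
    refine Real.sqrt_pos.2 ?_
    refine Finset.sum_pos (fun i _ => Finset.sum_pos (fun j _ => ?_) ⟨i0, Finset.mem_univ _⟩)
      ⟨i0, Finset.mem_univ _⟩
    have := hνminpos.trans_le (hle i j)
    positivity
  have hε' : ε * normE n ν ≤ νmin / 2 := by
    rw [le_div_iff₀ (by positivity)] at hε
    linarith
  set c : ℝ := ∑ i, ∑ j, ((1 - ε) * ν i j) ^ 2 + ∑ i, ∑ j, sig i j ^ 2 + n with hc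
  have hc0 : 0 ≤ c := by
    have h1 : 0 ≤ ∑ i, ∑ j, ((1 - ε) * ν i j) ^ 2 :=
      Finset.sum_nonneg fun i _ => Finset.sum_nonneg fun j _ => sq_nonneg _
    have h2 : 0 ≤ ∑ i, ∑ j, sig i j ^ 2 :=
      Finset.sum_nonneg fun i _ => Finset.sum_nonneg fun j _ => sq_nonneg _
    positivity
  obtain ⟨hq2, hDI, hDM⟩ := moments n hn ν hν νmin hle hνminpos ε hε0 hε' sig amax hamax sched
    hsched α π hb hm hv hcov hinv r (by omega) c hc
  obtain ⟨hMr0, hMrb⟩ := Mr_bound n hn νmin hνminpos hν1 amax c hc0 r (by omega) Mr hMr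
  have hs : ∀ q, IsPerm n (sched q) := fun q => (hsched q).1
  obtain ⟨htI, hUI, hUE, hWI, hZI, hid⟩ := steady n hn ν sig hν ε amax sched hs α π hb hm hv hcov
    hinv hq2
  rw [etot_eq n pd π hπs htI]
  have hnext : Measurable (fun x : (Fin n → Fin n → ℕ) × (Fin n → Fin n → ℕ) =>
      nextQ n x.1 x.2 (sched x.1)) := Measurable.of_discrete
  have hDI' : MeasureTheory.Integrable (fun x : (Fin n → Fin n → ℕ) × (Fin n → Fin n → ℕ) =>
      distK n (toR n (nextQ n x.1 x.2 (sched x.1))) ^ r) (π.prod α) := by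
    have h := hDI
    rw [← hinv] at h
    exact (MeasureTheory.integrable_map_measure Measurable.of_discrete.aestronglyMeasurable
      hnext.aemeasurable).1 h
  have hDM' : MeasureTheory.integral (π.prod α)
      (fun x : (Fin n → Fin n → ℕ) × (Fin n → Fin n → ℕ) =>
      distK n (toR n (nextQ n x.1 x.2 (sched x.1))) ^ r) ≤ Mr ^ r := by
    refine le_trans (le_of_eq ?_) (hDM.trans hMrb)
    conv_rhs => rw [← hinv]
    rw [MeasureTheory.integral_map hnext.aemeasurable
      Measurable.of_discrete.aestronglyMeasurable]
  have hWb := holder_bound (π.prod α) r hr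
    (fun x => distK n (toR n (nextQ n x.1 x.2 (sched x.1))))
    (fun x => ∑ i, ∑ j, unusedU n x.1 x.2 (sched x.1) i j)
    (fun x => bil n (toR n (nextQ n x.1 x.2 (sched x.1))) (unusedU n x.1 x.2 (sched x.1)))
    Measurable.of_discrete.aestronglyMeasurable Measurable.of_discrete.aestronglyMeasurable
    (fun x => distK_nonneg n _) (fun x => unused_tot n _ _ _ (hs x.1).1)
    (fun x => bil_unused n hn _ _ (unused_mul n _ _ _ (hs x.1).1) (unused_sq n _ _ _ (hs x.1).1))
    hWI hDI' hUI Mr hMr0 hDM'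
  rw [hUE] at hWb
  have hZ0 := MeasureTheory.integral_nonneg (μ := π.prod α)
    (f := fun x : (Fin n → Fin n → ℕ) × (Fin n → Fin n → ℕ) =>
      bil n (unusedU n x.1 x.2 (sched x.1)) (unusedU n x.1 x.2 (sched x.1)))
    (fun x => bil_self_nonneg n hn _)
  have hZ1 := MeasureTheory.integral_mono hZI ((hUI.const_mul 2).div_const (n : ℝ))
    (fun x => bil_self_le n _ (unused_nonneg n _ _ _ (hs x.1).1) (unused_row n _ _ _ (hs x.1))
      (unused_col n _ _ _ (hs x.1)))
  rw [MeasureTheory.integral_div, MeasureTheory.integral_const_mul, hUE] at hZ1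
  have hZ2 : 2 * ((n : ℝ) * ε) / n = 2 * ε := by field_simp
  rw [hZ2] at hZ1
  have hrr : (0 : ℝ) < r := by positivity
  have hRid : Mr * ((n : ℝ) * ε) ^ (1 - 1 / (r : ℝ)) =
      ε / n * ((n : ℝ) ^ ((2 : ℝ) - 1 / r) * ε ^ (-(1 : ℝ) / r) * Mr) := by
    have e1 : (n : ℝ) ^ ((2 : ℝ) - 1 / r) = n * (n : ℝ) ^ (1 - 1 / (r : ℝ)) := by
      rw [show (2 : ℝ) - 1 / r = 1 + (1 - 1 / r) by ring, Real.rpow_add hn0, Real.rpow_one]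
    have e2 : ε ^ (1 - 1 / (r : ℝ)) = ε * ε ^ (-(1 : ℝ) / r) := by
      rw [show 1 - 1 / (r : ℝ) = 1 + (-(1 : ℝ) / r) by ring, Real.rpow_add hε0, Real.rpow_one]
    rw [Real.mul_rpow hn0.le hε0.le, e1, e2]
    field_simp
  rw [hRid] at hWb
  have hfin := final_arith n _ ε _ _ _ _ Mr hn1 hε0
    (by positivity : 0 ≤ (n : ℝ) ^ ((2 : ℝ) - 1 / r) * ε ^ (-(1 : ℝ) / r)) hMr0 hid hZ0 hZ1 hWb
  rw [hB1, hB2]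
  refine ⟨ENNReal.ofReal_le_ofReal ?_, ENNReal.ofReal_le_ofReal ?_⟩
  · refine le_trans (le_of_eq ?_) hfin.1
    ring
  · refine hfin.2.trans (le_of_eq ?_)
    ring
end
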